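/- arXiv:1404.1495 — 8 statements merged into one kernel-verified Lean document; each statement's English description precedes it below -/
import Mathlib

section
/- Let μ ∈ ℝ, c₊ > 0, c₋ > 0, λ₋ < 0 < λ₊, ν ∈ (0,1) ∪ (1,2), let ψ be the associated KoBoL characteristic exponent, and let κ₋, κ₊ satisfy λ₋ < κ₋ < 0 < κ₊ < λ₊. Set d = −Γ(−ν)·cos(πν/2)·(c₊ + c₋). Then Re ψ(ξ) / |Re ξ|^ν tends to d uniformly on the strip: for every ε > 0 there exists X > 0 such that for all ξ ∈ ℂ with Im ξ ∈ [κ₋, κ₊] and |Re ξ| ≥ X, one has |Re ψ(ξ) / |Re ξ|^ν − d| < ε. -/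
open Complex

/-- The KoBoL characteristic exponent (principal branch of complex powers). -/
noncomputable def kobolPsi (μ cp cm lm lp ν : ℝ) : ℂ → ℂ := fun ξ =>
  -Complex.I * μ * ξ
    + (cp : ℂ) * Complex.Gamma (-(ν : ℂ)) *
        (((-lm : ℂ)) ^ (ν : ℂ) - (-(lm : ℂ) - Complex.I * ξ) ^ (ν : ℂ))
    + (cm : ℂ) * Complex.Gamma (-(ν : ℂ)) *
        (((lp : ℂ)) ^ (ν : ℂ) - ((lp : ℂ) + Complex.I * ξ) ^ (ν : ℂ))

lemma kobol_key_pos (ν : ℝ) (z : ℂ) (h : 0 < z.im) :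
    (z ^ (ν : ℂ)).re / z.im ^ ν = ((((z.re / z.im : ℝ) : ℂ) + Complex.I) ^ (ν : ℂ)).re := by
  have hz : z = (z.im : ℂ) * (((z.re / z.im : ℝ) : ℂ) + Complex.I) := by
    apply Complex.ext
    · simp; field_simp
    · simp
  set w : ℂ := (((z.re / z.im : ℝ) : ℂ) + Complex.I) with hw
  set t := z.im
  rw [hz, Complex.cpow_ofReal_re, Complex.cpow_ofReal_re, Complex.arg_real_mul _ h, norm_mul,
    Complex.norm_real, Real.norm_of_nonneg h.le, Real.mul_rpow h.le (norm_nonneg _)]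
  have : t ^ ν ≠ 0 := (Real.rpow_pos_of_pos h ν).ne'
  field_simp

lemma kobol_conj_re (ν : ℝ) (z : ℂ) (h : z.im ≠ 0) :
    (((starRingEnd ℂ) z) ^ (ν : ℂ)).re = (z ^ (ν : ℂ)).re := by
  rw [Complex.cpow_ofReal_re, Complex.cpow_ofReal_re, Complex.arg_conj, if_neg]
  · simp
  · intro h'
    exact h (Complex.arg_eq_pi_iff.1 h').2

lemma kobol_key (ν : ℝ) (z : ℂ) (h : 0 < |z.im|) :
    (z ^ (ν : ℂ)).re / |z.im| ^ ν =
      ((((z.re / |z.im| : ℝ) : ℂ) + Complex.I) ^ (ν : ℂ)).re := by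
  rcases lt_or_gt_of_ne (abs_pos.1 h) with h0 | h0
  · have := kobol_key_pos ν ((starRingEnd ℂ) z) (by simpa using h0)
    rw [kobol_conj_re ν z h0.ne] at this
    simpa [abs_of_neg h0] using this
  · rw [abs_of_pos h0]
    exact kobol_key_pos ν z h0

open Filter Topology in
lemma kobol_tendsto (ν A : ℝ) (l : Filter ℂ) (z : ℂ → ℂ) (hb : ∀ᶠ ξ in l, |(z ξ).re| ≤ A)
    (hi : Tendsto (fun ξ => |(z ξ).im|) l atTop) :
    Tendsto (fun ξ => (z ξ ^ (ν : ℂ)).re / |(z ξ).im| ^ ν) l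
      (𝓝 (Real.cos (Real.pi * ν / 2))) := by
  have h0 : Tendsto (fun ξ => (z ξ).re / |(z ξ).im|) l (𝓝 0) := by
    have h1 : Tendsto (fun ξ => A / |(z ξ).im|) l (𝓝 0) := hi.const_div_atTop A
    refine squeeze_zero_norm' ?_ h1
    filter_upwards [hb] with ξ h
    rw [Real.norm_eq_abs, abs_div, abs_abs]
    gcongr
  have h2 : ContinuousAt (fun t : ℝ => (((t : ℂ) + Complex.I) ^ (ν : ℂ)).re) 0 := by
    apply Complex.continuous_re.continuousAt.comp
    refine ContinuousAt.cpow (by fun_prop) continuousAt_const ?_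
    right; simp
  have h3 := h2.tendsto.comp h0
  have h4 : ((((0 : ℝ) : ℂ) + Complex.I) ^ (ν : ℂ)).re = Real.cos (Real.pi * ν / 2) := by
    rw [Complex.cpow_ofReal_re]
    simp
    congr 1; ring
  rw [h4] at h3
  refine h3.congr' ?_
  filter_upwards [hi.eventually_gt_atTop 0] with ξ h
  exact (kobol_key ν (z ξ) h).symm

theorem kobol_re_asymptotics
    (μ cp cm lm lp ν κm κp : ℝ) (hcp : 0 < cp) (hcm : 0 < cm)
    (hlm : lm < 0) (hlp : 0 < lp)
    (hν : ν ∈ Set.Ioo (0 : ℝ) 1 ∪ Set.Ioo (1 : ℝ) 2)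
    (hκm : lm < κm) (hκm0 : κm < 0) (hκp0 : 0 < κp) (hκp : κp < lp)
    (d : ℝ) (hd : d = -Real.Gamma (-ν) * Real.cos (Real.pi * ν / 2) * (cp + cm)) :
    ∀ ε > (0 : ℝ), ∃ X > (0 : ℝ), ∀ ξ : ℂ,
      ξ.im ∈ Set.Icc κm κp → X ≤ |ξ.re| →
      |(kobolPsi μ cp cm lm lp ν ξ).re / |ξ.re| ^ ν - d| < ε := by
  have hν0 : 0 < ν := by
    rcases hν with h | h
    · exact h.1
    · linarith [h.1]
  set S : Set ℂ := {ξ | ξ.im ∈ Set.Icc κm κp} with hS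
  set l : Filter ℂ := Filter.comap (fun ξ : ℂ => |ξ.re|) Filter.atTop ⊓ Filter.principal S with hl
  have hre : Filter.Tendsto (fun ξ : ℂ => |ξ.re|) l Filter.atTop :=
    Filter.tendsto_comap.mono_left inf_le_left
  have hSl : ∀ᶠ ξ in l, ξ.im ∈ Set.Icc κm κp :=
    Filter.mem_inf_of_right (Filter.mem_principal_self S)
  have hpow : Filter.Tendsto (fun ξ : ℂ => |ξ.re| ^ ν) l Filter.atTop :=
    (tendsto_rpow_atTop hν0).comp hre
  have t1 := kobol_tendsto ν (-lm + κp) l (fun ξ => -(lm : ℂ) - Complex.I * ξ)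
    (by
      filter_upwards [hSl] with ξ h
      have h1 := h.1
      have h2 := h.2
      simp only [sub_re, neg_re, ofReal_re, mul_re, I_re, I_im]
      rw [abs_le]; constructor <;> linarith)
    (by simpa using hre)
  have t2 := kobol_tendsto ν (lp - κm) l (fun ξ => (lp : ℂ) + Complex.I * ξ)
    (by
      filter_upwards [hSl] with ξ h
      have h1 := h.1
      have h2 := h.2
      simp only [add_re, ofReal_re, mul_re, I_re, I_im]
      rw [abs_le]; constructor <;> linarith)
    (by simpa using hre)
  have hG : Complex.Gamma (-(ν : ℂ)) = ((Real.Gamma (-ν) : ℝ) : ℂ) := by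
    rw [← Complex.Gamma_ofReal]; simp
  set G := Real.Gamma (-ν)
  set Cp : ℝ := ((-lm : ℂ) ^ (ν : ℂ)).re with hCp
  set Cm : ℝ := ((lp : ℂ) ^ (ν : ℂ)).re with hCm
  have t0 : Filter.Tendsto (fun ξ : ℂ => μ * ξ.im / |ξ.re| ^ ν) l (nhds 0) := by
    have h1 := hpow.const_div_atTop (|μ| * (κp - κm))
    refine squeeze_zero_norm' ?_ h1
    filter_upwards [hSl] with ξ h
    have h1 := h.1
    have h2 := h.2
    have : 0 ≤ |ξ.re| ^ ν := by positivity
    rw [Real.norm_eq_abs, abs_div, abs_mul, abs_of_nonneg this]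
    gcongr
    rw [abs_le]; constructor <;> linarith
  have t3 := hpow.const_div_atTop Cp
  have t4 := hpow.const_div_atTop Cm
  have key : Filter.Tendsto (fun ξ => (kobolPsi μ cp cm lm lp ν ξ).re / |ξ.re| ^ ν) l (nhds d) := by
    have T := (t0.add ((t3.sub t1).const_mul (cp * G))).add ((t4.sub t2).const_mul (cm * G))
    convert T using 2 with ξ
    · have e : (kobolPsi μ cp cm lm lp ν ξ).re = μ * ξ.im
          + cp * G * (Cp - ((-(lm : ℂ) - Complex.I * ξ) ^ (ν : ℂ)).re)
          + cm * G * (Cm - (((lp : ℂ) + Complex.I * ξ) ^ (ν : ℂ)).re) := by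
        simp only [kobolPsi, hG, ← ofReal_mul, add_re, re_ofReal_mul, sub_re, hCp, hCm]
        simp
      have i1 : |(-(lm : ℂ) - Complex.I * ξ).im| = |ξ.re| := by simp
      have i2 : |((lp : ℂ) + Complex.I * ξ).im| = |ξ.re| := by simp
      rw [e, i1, i2]
      ring
    · rw [hd]; ring
  intro ε hε
  have hev := (Metric.tendsto_nhds.1 key) ε hε
  rw [hl, Filter.eventually_inf_principal, Filter.eventually_comap] at hev
  obtain ⟨X, hX⟩ := Filter.eventually_atTop.1 hev
  refine ⟨max X 1, by positivity, fun ξ h1 h2 => ?_⟩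
  have := hX |ξ.re| (le_trans (le_max_left _ _) h2) ξ rfl h1
  rwa [Real.dist_eq] at this
end

section
/- Let n ≥ 1, let a ∈ ℝⁿ, and let Φ : ℂⁿ → ℂ be holomorphic on an open set containing the tube T = {z ∈ ℂⁿ : min(0, a_k) ≤ Im z_k ≤ max(0, a_k) for all k}. Assume that for every w in the coordinatewise segment between 0 and a, the function v ↦ Φ(v + iw) (v ∈ ℝⁿ) is Lebesgue integrable, and that Φ(z) → 0 as ‖Re z‖ → ∞ uniformly for z ∈ T. Then for every x ∈ ℝⁿ, ∫_{ℝⁿ} e^{−i⟨x,v⟩} Φ(v) dv = e^{⟨x,a⟩} ∫_{ℝⁿ} e^{−i⟨x,v⟩} Φ(v + ia) dv, where ⟨·,·⟩ is the standard inner product on ℝⁿ and Φ(v + ia) means Φ evaluated at the vector with components v_k + i a_k. -/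
open MeasureTheory Complex

lemma shift_one_dim (f : ℂ → ℂ) (b c : ℝ)
    (hd : ∀ z : ℂ, z.im ∈ Set.uIcc b c → DifferentiableAt ℂ f z)
    (hdec : ∀ ε > (0 : ℝ), ∃ R : ℝ, ∀ z : ℂ, z.im ∈ Set.uIcc b c → R ≤ |z.re| → ‖f z‖ < ε)
    (hb : Integrable (fun t : ℝ => f (t + b * I)))
    (hc : Integrable (fun t : ℝ => f (t + c * I))) :
    ∫ t : ℝ, f (t + b * I) = ∫ t : ℝ, f (t + c * I) := by
  have key : ∀ R : ℝ, (∫ t in (-R)..R, f (t + b * I)) - (∫ t in (-R)..R, f (t + c * I)) =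
      I • (∫ y in b..c, f (((-R : ℝ) : ℂ) + y * I)) - I • (∫ y in b..c, f ((R : ℂ) + y * I)) := by
    intro R
    have h := integral_boundary_rect_eq_zero_of_differentiableOn f
      (((-R : ℝ) : ℂ) + b * I) ((R : ℂ) + c * I) (by
        intro z hz
        apply (hd z _).differentiableWithinAt
        have := hz.2
        simpa using this)
    simp only [add_re, add_im, ofReal_re, ofReal_im, mul_re, mul_im, I_re, I_im, mul_zero, mul_one,
      sub_zero, add_zero, zero_add] at h
    linear_combination h
  have vert : ∀ g : ℝ → ℝ, (∀ R, |g R| = |R|) → Filter.Tendsto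
      (fun R : ℝ => ∫ y in b..c, f ((g R : ℂ) + y * I)) Filter.atTop (nhds 0) := by
    intro g hg
    rw [Metric.tendsto_atTop]
    intro ε hε
    have hpos : 0 < |c - b| + 1 := by positivity
    obtain ⟨R, hR⟩ := hdec (ε / (|c - b| + 1)) (by positivity)
    refine ⟨R, fun S hS => ?_⟩
    rw [dist_zero_right]
    have := intervalIntegral.norm_integral_le_of_norm_le_const (a := b) (b := c)
      (f := fun y : ℝ => f ((g S : ℂ) + y * I)) (C := ε / (|c - b| + 1)) (by
        intro y hy
        refine (hR _ ?_ ?_).le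
        · simpa using Set.uIoc_subset_uIcc hy
        · simpa [hg] using hS.trans (le_abs_self S))
    refine this.trans_lt ?_
    rw [div_mul_eq_mul_div, div_lt_iff₀ hpos]
    nlinarith
  have h1 := (intervalIntegral_tendsto_integral hb Filter.tendsto_neg_atTop_atBot
    Filter.tendsto_id).sub (intervalIntegral_tendsto_integral hc Filter.tendsto_neg_atTop_atBot
    Filter.tendsto_id)
  have h2 := ((vert (fun R => -R) (by simp)).const_smul I).sub
    ((vert (fun R => R) (by simp)).const_smul I)
  simp only [smul_zero, sub_zero] at h2
  have h3 := tendsto_nhds_unique (h1.congr (fun R => key R)) h2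
  exact sub_eq_zero.mp h3

lemma shift_coord (m : ℕ) (G : (Fin (m + 1) → ℂ) → ℂ) (lo hi : Fin (m + 1) → ℝ)
    (hd : ∀ z : Fin (m + 1) → ℂ, (∀ k, lo k ≤ (z k).im ∧ (z k).im ≤ hi k) →
      DifferentiableAt ℂ G z)
    (hint : ∀ w : Fin (m + 1) → ℝ, (∀ k, lo k ≤ w k ∧ w k ≤ hi k) →
      Integrable (fun v : Fin (m + 1) → ℝ => G (fun k => (v k : ℂ) + I * (w k : ℂ))))
    (hdec : ∀ ε > (0 : ℝ), ∃ R : ℝ, ∀ z : Fin (m + 1) → ℂ,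
      (∀ k, lo k ≤ (z k).im ∧ (z k).im ≤ hi k) →
      R ≤ Real.sqrt (∑ k, (z k).re ^ 2) → ‖G z‖ < ε)
    (w : Fin (m + 1) → ℝ) (hw : ∀ k, lo k ≤ w k ∧ w k ≤ hi k)
    (j : Fin (m + 1)) (c : ℝ) (hc : lo j ≤ c ∧ c ≤ hi j) :
    ∫ v : Fin (m + 1) → ℝ, G (fun k => (v k : ℂ) + I * (w k : ℂ)) =
      ∫ v : Fin (m + 1) → ℝ, G (fun k => (v k : ℂ) + I * (Function.update w j c k : ℂ)) := by
  have hw' : ∀ k, lo k ≤ Function.update w j c k ∧ Function.update w j c k ≤ hi k := by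
    intro k
    by_cases h : k = j
    · subst h; simpa using hc
    · simpa [h] using hw k
  have mp := (volume_preserving_piFinSuccAbove (fun _ : Fin (m + 1) => ℝ) j).symm
  have i1 := (mp.integrable_comp_emb (MeasurableEquiv.measurableEmbedding _)).mpr (hint w hw)
  have i2 := (mp.integrable_comp_emb (MeasurableEquiv.measurableEmbedding _)).mpr (hint _ hw')
  rw [← mp.integral_comp (MeasurableEquiv.measurableEmbedding _),
    ← mp.integral_comp (MeasurableEquiv.measurableEmbedding _)]
  rw [Measure.volume_eq_prod] at i1 i2 ⊢
  simp only [Function.comp_def] at i1 i2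
  rw [integral_prod_symm _ i1, integral_prod_symm _ i2]
  apply integral_congr_ae
  filter_upwards [i1.prod_left_ae, i2.prod_left_ae] with y h1 h2
  -- the one-variable section
  set γ : ℂ → (Fin (m + 1) → ℂ) := fun s =>
    j.insertNth s (fun l => (y l : ℂ) + I * (w (j.succAbove l) : ℂ)) with hγ
  have e : ∀ (t d : ℝ), (fun k => (((MeasurableEquiv.piFinSuccAbove (fun _ : Fin (m + 1) => ℝ)
      j).symm (t, y) k : ℝ) : ℂ) + I * (Function.update w j d k : ℂ)) = γ (t + d * I) := by
    intro t d
    have es : (MeasurableEquiv.piFinSuccAbove (fun _ : Fin (m + 1) => ℝ) j).symm (t, y)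
        = j.insertNth t y := rfl
    rw [es]
    funext k
    refine Fin.succAboveCases j ?_ (fun l => ?_) k
    · simp [hγ, mul_comm]
    · simp [hγ]
  have e0 : ∀ t : ℝ, (fun k => (((MeasurableEquiv.piFinSuccAbove (fun _ : Fin (m + 1) => ℝ)
      j).symm (t, y) k : ℝ) : ℂ) + I * (w k : ℂ)) = γ (t + w j * I) := by
    intro t
    rw [← e t (w j), Function.update_eq_self]
  simp only [e, e0] at h1 h2 ⊢
  have hbox : ∀ z : ℂ, z.im ∈ Set.uIcc (w j) c →
      ∀ k, lo k ≤ (γ z k).im ∧ (γ z k).im ≤ hi k := by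
    intro z hz k
    have hz' : z.im ∈ Set.Icc (lo j) (hi j) :=
      Set.uIcc_subset_Icc (hw j) hc hz
    refine Fin.succAboveCases j ?_ (fun l => ?_) k
    · simpa [hγ] using hz'
    · simpa [hγ] using hw (j.succAbove l)
  refine shift_one_dim (fun s => G (γ s)) (w j) c ?_ ?_ h1 h2
  · intro z hz
    refine (hd _ (hbox z hz)).comp z ?_
    rw [differentiableAt_pi]
    intro k
    refine Fin.succAboveCases j ?_ (fun l => ?_) k
    · simp [hγ]
    · simp [hγ]
  · intro ε hε
    obtain ⟨R, hR⟩ := hdec ε hε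
    refine ⟨R, fun z hz hzR => hR _ (hbox z hz) (hzR.trans ?_)⟩
    apply Real.le_sqrt_of_sq_le
    rw [sq_abs]
    have := Finset.single_le_sum (f := fun k => (γ z k).re ^ 2)
      (fun i _ => sq_nonneg _) (Finset.mem_univ j)
    simpa [hγ] using this

lemma shift_all (m : ℕ) (G : (Fin (m + 1) → ℂ) → ℂ) (a : Fin (m + 1) → ℝ)
    (hd : ∀ z : Fin (m + 1) → ℂ, (∀ k, min 0 (a k) ≤ (z k).im ∧ (z k).im ≤ max 0 (a k)) →
      DifferentiableAt ℂ G z)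
    (hint : ∀ w : Fin (m + 1) → ℝ, (∀ k, min 0 (a k) ≤ w k ∧ w k ≤ max 0 (a k)) →
      Integrable (fun v : Fin (m + 1) → ℝ => G (fun k => (v k : ℂ) + I * (w k : ℂ))))
    (hdec : ∀ ε > (0 : ℝ), ∃ R : ℝ, ∀ z : Fin (m + 1) → ℂ,
      (∀ k, min 0 (a k) ≤ (z k).im ∧ (z k).im ≤ max 0 (a k)) →
      R ≤ Real.sqrt (∑ k, (z k).re ^ 2) → ‖G z‖ < ε) :
    ∫ v : Fin (m + 1) → ℝ, G (fun k => (v k : ℂ)) =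
      ∫ v : Fin (m + 1) → ℝ, G (fun k => (v k : ℂ) + I * (a k : ℂ)) := by
  have main : ∀ s : Finset (Fin (m + 1)), ∫ v : Fin (m + 1) → ℝ, G (fun k => (v k : ℂ)) =
      ∫ v : Fin (m + 1) → ℝ, G (fun k => (v k : ℂ) + I * (s.piecewise a (fun _ => 0) k : ℝ)) := by
    intro s
    induction s using Finset.induction_on with
    | empty => simp
    | insert j s hj ih =>
      rw [ih, Finset.piecewise_insert]
      refine shift_coord m G (fun k => min 0 (a k)) (fun k => max 0 (a k)) hd hint hdec _ ?_ j _ ?_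
      · intro k
        by_cases h : k ∈ s <;> simp [h]
      · simp
  simpa using main Finset.univ


theorem contour_shift_tube
    (n : ℕ) (hn : 1 ≤ n) (a : Fin n → ℝ) (Φ : (Fin n → ℂ) → ℂ)
    (T : Set (Fin n → ℂ))
    (hT : T = {z : Fin n → ℂ | ∀ k, min 0 (a k) ≤ (z k).im ∧ (z k).im ≤ max 0 (a k)})
    (hol : ∃ U : Set (Fin n → ℂ), IsOpen U ∧ T ⊆ U ∧ DifferentiableOn ℂ Φ U)
    (hint : ∀ w : Fin n → ℝ,
      (∀ k, min 0 (a k) ≤ w k ∧ w k ≤ max 0 (a k)) →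
      Integrable (fun v : Fin n → ℝ => Φ (fun k => (v k : ℂ) + Complex.I * (w k : ℂ))))
    (hdecay : ∀ ε > (0 : ℝ), ∃ R : ℝ, ∀ z ∈ T,
      R ≤ Real.sqrt (∑ k, (z k).re ^ 2) → ‖Φ z‖ < ε) :
    ∀ x : Fin n → ℝ,
      (∫ v : Fin n → ℝ,
          Complex.exp (-Complex.I * (∑ k, x k * v k : ℝ)) * Φ (fun k => (v k : ℂ)))
        = Real.exp (∑ k, x k * a k) *
          ∫ v : Fin n → ℝ,
            Complex.exp (-Complex.I * (∑ k, x k * v k : ℝ)) *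
              Φ (fun k => (v k : ℂ) + Complex.I * (a k : ℂ)) := by
  intro x
  obtain ⟨m, rfl⟩ : ∃ m, n = m + 1 := ⟨n - 1, by omega⟩
  subst hT
  obtain ⟨U, hU, hTU, hΦ⟩ := hol
  set E : (Fin (m + 1) → ℂ) → ℂ := fun z => Complex.exp (-I * ∑ k, (x k : ℂ) * z k) with hE
  have hEd : Differentiable ℂ E := by
    rw [hE]; fun_prop
  have hEn : ∀ z, ‖E z‖ = Real.exp (∑ k, x k * (z k).im) := by
    intro z
    simp [hE, Complex.norm_exp, Complex.im_sum]
  have h := shift_all m (fun z => E z * Φ z) a ?_ ?_ ?_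
  · have r1 : ∀ v : Fin (m + 1) → ℝ, E (fun k => (v k : ℂ)) =
        Complex.exp (-Complex.I * (∑ k, x k * v k : ℝ)) := by
      intro v; simp [hE]
    have r2 : ∀ v : Fin (m + 1) → ℝ, E (fun k => (v k : ℂ) + I * (a k : ℂ)) =
        Real.exp (∑ k, x k * a k) * Complex.exp (-Complex.I * (∑ k, x k * v k : ℝ)) := by
      intro v
      simp only [hE, ofReal_exp]
      rw [← Complex.exp_add]
      congr 1
      push_cast
      simp only [mul_add, Finset.sum_add_distrib, Finset.mul_sum]
      rw [add_comm]
      congr 1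
      refine Finset.sum_congr rfl fun k _ => ?_
      linear_combination (-(x k : ℂ) * a k) * I_mul_I
    simp only [r1, r2, mul_assoc] at h
    rw [h, integral_const_mul]
  · intro z hz
    exact (hEd z).mul (hΦ.differentiableAt (hU.mem_nhds (hTU hz)))
  · intro w hw
    refine (hint w hw).bdd_mul (c := Real.exp (∑ k, x k * w k)) ?_ ?_
    · apply Continuous.aestronglyMeasurable
      exact hEd.continuous.comp (by fun_prop)
    · refine Filter.Eventually.of_forall fun v => ?_
      rw [hEn]; simp
  · intro ε hε
    set C := Real.exp (∑ k, |x k| * |a k|) with hC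
    have hCpos : 0 < C := Real.exp_pos _
    obtain ⟨R, hR⟩ := hdecay (ε / C) (by positivity)
    refine ⟨R, fun z hz hzR => ?_⟩
    have h1 := hR z hz hzR
    have h2 : ‖E z‖ ≤ C := by
      rw [hEn, hC]
      apply Real.exp_le_exp.mpr
      refine Finset.sum_le_sum fun k _ => ?_
      refine (le_abs_self _).trans ?_
      rw [abs_mul]
      refine mul_le_mul_of_nonneg_left ?_ (abs_nonneg _)
      obtain ⟨h3, h4⟩ := hz k
      rw [abs_le]
      constructor
      · refine le_trans (le_min ?_ ?_) h3
        · simp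
        · exact neg_abs_le _
      · exact h4.trans (max_le (abs_nonneg _) (le_abs_self _))
    rw [norm_mul]
    calc ‖E z‖ * ‖Φ z‖ ≤ C * ‖Φ z‖ := by gcongr
      _ < C * (ε / C) := by gcongr
      _ = ε := by field_simp
end

section
/- Let n ≥ 1 and let a > 0 be real. Let Φ : ℂⁿ → ℂ be holomorphic on an open set containing the tube T = {z ∈ ℂⁿ : −a ≤ Im z_k ≤ a for all k}; assume that for every w ∈ [−a, a]ⁿ the function v ↦ Φ(v + iw) is Lebesgue integrable on ℝⁿ, and that Φ(z) → 0 as ‖Re z‖ → ∞ uniformly for z ∈ T. Define p(x) = (2π)^{−n} ∫_{ℝⁿ} e^{−i⟨x,v⟩} Φ(v) dv and write 𝐚 = (a,…,a) ∈ ℝⁿ. Then for every x ∈ ℝⁿ, p(x) = (1/(2(2π)^{n})) (cosh⟨x,𝐚⟩)^{−1} ∫_{ℝⁿ} e^{−i⟨x,v⟩} ( Φ(v + i𝐚) + Φ(v − i𝐚) ) dv. -/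
open MeasureTheory Complex

theorem strip_shift (a : ℝ) (f : ℂ → ℂ)
    (hd : ∀ z : ℂ, -a ≤ z.im → z.im ≤ a → DifferentiableAt ℂ f z)
    (hdec : ∀ ε > (0 : ℝ), ∃ R : ℝ, ∀ z : ℂ, -a ≤ z.im → z.im ≤ a → R ≤ |z.re| → ‖f z‖ < ε)
    (b c : ℝ) (hb : b ∈ Set.Icc (-a) a) (hc : c ∈ Set.Icc (-a) a)
    (ib : Integrable (fun t : ℝ => f (t + I * b))) (ic : Integrable (fun t : ℝ => f (t + I * c))) :
    ∫ t : ℝ, f (t + I * b) = ∫ t : ℝ, f (t + I * c) := by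
  have key : ∀ y ∈ Set.uIcc b c, -a ≤ y ∧ y ≤ a := by
    intro y hy
    exact Set.uIcc_subset_Icc hb hc hy
  have tb := intervalIntegral_tendsto_integral ib Filter.tendsto_neg_atTop_atBot Filter.tendsto_id
  have tc := intervalIntegral_tendsto_integral ic Filter.tendsto_neg_atTop_atBot Filter.tendsto_id
  have tbc := tb.sub tc
  rw [← sub_eq_zero]
  refine tendsto_nhds_unique tbc ?_
  rw [Metric.tendsto_atTop]
  intro ε hε
  have hden : 0 < 2 * |c - b| + 1 := by positivity
  obtain ⟨R, hR⟩ := hdec (ε / (2 * |c - b| + 1)) (by positivity)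
  refine ⟨max R 0, fun S hS => ?_⟩
  have hS0 : 0 ≤ S := le_trans (le_max_right _ _) hS
  have hSR : R ≤ S := le_trans (le_max_left _ _) hS
  have rect := integral_boundary_rect_eq_zero_of_differentiableOn f ⟨-S, b⟩ ⟨S, c⟩ (by
    intro z hz
    have := key z.im hz.2
    exact (hd z this.1 this.2).differentiableWithinAt)
  have bd : ∀ s : ℝ, |s| = S → ‖∫ y : ℝ in b..c, f (s + y * I)‖ ≤
      ε / (2 * |c - b| + 1) * |c - b| := by
    intro s hs
    apply intervalIntegral.norm_integral_le_of_norm_le_const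
    intro y hy
    have hy' := key y (Set.uIoc_subset_uIcc hy)
    refine (hR _ ?_ ?_ ?_).le
    · simpa using hy'.1
    · simpa using hy'.2
    · simpa [hs] using hSR
  have b1 := bd S (abs_of_nonneg hS0)
  have b2 := bd (-S) (by rw [abs_neg, abs_of_nonneg hS0])
  simp only [smul_eq_mul, mul_comm _ I] at rect b1 b2
  rw [dist_zero_right]
  simp only [id]
  have e : (∫ x : ℝ in -S..S, f (x + I * b)) - (∫ x : ℝ in -S..S, f (x + I * c)) =
      I * (∫ y : ℝ in b..c, f ((-S : ℝ) + I * y)) - I * (∫ y : ℝ in b..c, f (S + I * y)) := by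
    linear_combination rect
  rw [e]
  refine lt_of_le_of_lt (norm_sub_le _ _) ?_
  rw [norm_mul, norm_mul, norm_I, one_mul, one_mul]
  refine lt_of_le_of_lt (add_le_add b2 b1) ?_
  rw [← add_mul, ← add_div, div_mul_eq_mul_div, div_lt_iff₀ hden]
  nlinarith

theorem coord_shift (m : ℕ) (a : ℝ) (ha : 0 < a) (G : (Fin (m + 1) → ℂ) → ℂ)
    (hd : ∀ z : Fin (m + 1) → ℂ, (∀ k, -a ≤ (z k).im ∧ (z k).im ≤ a) → DifferentiableAt ℂ G z)
    (hdec : ∀ ε > (0 : ℝ), ∃ R : ℝ, ∀ z : Fin (m + 1) → ℂ,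
      (∀ k, -a ≤ (z k).im ∧ (z k).im ≤ a) → R ≤ Real.sqrt (∑ k, (z k).re ^ 2) → ‖G z‖ < ε)
    (hint : ∀ w : Fin (m + 1) → ℝ, (∀ k, w k ∈ Set.Icc (-a) a) →
      Integrable (fun v : Fin (m + 1) → ℝ => G (fun k => (v k : ℂ) + I * (w k : ℂ))))
    (w : Fin (m + 1) → ℝ) (hw : ∀ k, w k ∈ Set.Icc (-a) a) (k : Fin (m + 1)) (b : ℝ)
    (hb : b ∈ Set.Icc (-a) a) :
    ∫ v : Fin (m + 1) → ℝ, G (fun j => (v j : ℂ) + I * (w j : ℂ)) =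
    ∫ v : Fin (m + 1) → ℝ, G (fun j => (v j : ℂ) + I * ((Function.update w k b j : ℝ) : ℂ)) := by
  have hmp := (volume_preserving_piFinSuccAbove (fun _ : Fin (m + 1) => ℝ) k).symm
  have hw' : ∀ j, Function.update w k b j ∈ Set.Icc (-a) a := by
    intro j
    by_cases h : j = k
    · subst h; simpa using hb
    · simpa [h] using hw j
  have i1 := hint w hw
  have i2 := hint _ hw'
  rw [← hmp.integrable_comp_emb (MeasurableEquiv.measurableEmbedding _)] at i1 i2
  rw [← hmp.integral_comp', ← hmp.integral_comp']
  rw [Measure.volume_eq_prod] at i1 i2 ⊢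
  refine (integral_prod_symm _ i1).trans (Eq.trans ?_ (integral_prod_symm _ i2).symm)
  refine integral_congr_ae ?_
  filter_upwards [i1.prod_left_ae, i2.prod_left_ae] with y h1 h2
  let base : Fin (m + 1) → ℂ := fun j => ((k.insertNth (0 : ℝ) y : Fin (m + 1) → ℝ) j : ℂ) + I * (w j : ℂ)
  have hins : ∀ t : ℝ, (MeasurableEquiv.piFinSuccAbove (fun _ => ℝ) k).symm (t, y) =
      (k.insertNth t y : Fin (m + 1) → ℝ) := fun t => rfl
  have e1 : ∀ t : ℝ, (fun j => (((MeasurableEquiv.piFinSuccAbove (fun _ => ℝ) k).symm (t, y) j : ℝ) : ℂ)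
      + I * (w j : ℂ)) = Function.update base k (t + I * (w k : ℂ)) := by
    intro t
    funext j
    rcases Fin.eq_self_or_eq_succAbove k j with rfl | ⟨j, rfl⟩
    · simp [base, hins]
    · simp [base, hins]
  have e2 : ∀ t : ℝ, (fun j => (((MeasurableEquiv.piFinSuccAbove (fun _ => ℝ) k).symm (t, y) j : ℝ) : ℂ)
      + I * ((Function.update w k b j : ℝ) : ℂ)) = Function.update base k (t + I * (b : ℂ)) := by
    intro t
    funext j
    rcases Fin.eq_self_or_eq_succAbove k j with rfl | ⟨j, rfl⟩
    · simp [base, hins]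
    · simp [base, hins]
  simp only [Function.comp_def, e1, e2] at h1 h2 ⊢
  have hbase : ∀ z : ℂ, -a ≤ z.im → z.im ≤ a → ∀ j,
      -a ≤ (Function.update base k z j).im ∧ (Function.update base k z j).im ≤ a := by
    intro z g1 g2 j
    by_cases h : j = k
    · subst h; simpa using And.intro g1 g2
    · simpa [h, base] using hw j
  refine strip_shift a (fun z => G (Function.update base k z)) ?_ ?_ (w k) b (hw k) hb h1 h2
  · intro z hz1 hz2
    exact (hd _ (hbase z hz1 hz2)).comp z (hasFDerivAt_update base z).differentiableAt
  · intro ε hε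
    obtain ⟨R, hR⟩ := hdec ε hε
    refine ⟨R, fun z hz1 hz2 hz => hR _ (hbase z hz1 hz2) (hz.trans ?_)⟩
    apply Real.abs_le_sqrt
    have := Finset.single_le_sum (f := fun j => (Function.update base k z j).re ^ 2)
      (fun i _ => sq_nonneg _) (Finset.mem_univ k)
    simpa using this

theorem full_shift (m : ℕ) (a : ℝ) (ha : 0 < a) (G : (Fin (m + 1) → ℂ) → ℂ)
    (hd : ∀ z : Fin (m + 1) → ℂ, (∀ k, -a ≤ (z k).im ∧ (z k).im ≤ a) → DifferentiableAt ℂ G z)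
    (hdec : ∀ ε > (0 : ℝ), ∃ R : ℝ, ∀ z : Fin (m + 1) → ℂ,
      (∀ k, -a ≤ (z k).im ∧ (z k).im ≤ a) → R ≤ Real.sqrt (∑ k, (z k).re ^ 2) → ‖G z‖ < ε)
    (hint : ∀ w : Fin (m + 1) → ℝ, (∀ k, w k ∈ Set.Icc (-a) a) →
      Integrable (fun v : Fin (m + 1) → ℝ => G (fun k => (v k : ℂ) + I * (w k : ℂ))))
    (b : ℝ) (hb : b ∈ Set.Icc (-a) a) :
    ∫ v : Fin (m + 1) → ℝ, G (fun j => (v j : ℂ)) =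
    ∫ v : Fin (m + 1) → ℝ, G (fun j => (v j : ℂ) + I * (b : ℂ)) := by
  have h : ∀ s : Finset (Fin (m + 1)), ∫ v : Fin (m + 1) → ℝ, G (fun j => (v j : ℂ)) =
    ∫ v : Fin (m + 1) → ℝ, G (fun j => (v j : ℂ) + I * ((if j ∈ s then b else 0 : ℝ) : ℂ)) := by
    intro s
    induction s using Finset.induction_on with
    | empty => simp
    | insert k s hk ih =>
      rw [ih, coord_shift m a ha G hd hdec hint (fun j => if j ∈ s then b else 0) _ k b hb]
      · congr 1
        funext v
        congr 1
        funext j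
        by_cases h : j = k
        · subst h; simp
        · simp [h]
      · intro j
        split_ifs
        · exact hb
        · exact ⟨by linarith, ha.le⟩
  simpa using h Finset.univ



theorem density_cosh_representation
    (n : ℕ) (hn : 1 ≤ n) (a : ℝ) (ha : 0 < a)
    (Φ : (Fin n → ℂ) → ℂ) (T : Set (Fin n → ℂ))
    (hT : T = {z : Fin n → ℂ | ∀ k, -a ≤ (z k).im ∧ (z k).im ≤ a})
    (hol : ∃ U : Set (Fin n → ℂ), IsOpen U ∧ T ⊆ U ∧ DifferentiableOn ℂ Φ U)
    (hint : ∀ w : Fin n → ℝ, (∀ k, w k ∈ Set.Icc (-a) a) →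
      Integrable (fun v : Fin n → ℝ => Φ (fun k => (v k : ℂ) + Complex.I * (w k : ℂ))))
    (hdecay : ∀ ε > (0 : ℝ), ∃ R : ℝ, ∀ z ∈ T,
      R ≤ Real.sqrt (∑ k, (z k).re ^ 2) → ‖Φ z‖ < ε)
    (p : (Fin n → ℝ) → ℂ)
    (hp : ∀ x : Fin n → ℝ, p x =
      (((2 * Real.pi) ^ n)⁻¹ : ℝ) *
        ∫ v : Fin n → ℝ,
          Complex.exp (-Complex.I * (∑ k, x k * v k : ℝ)) * Φ (fun k => (v k : ℂ))) :
    ∀ x : Fin n → ℝ, p x =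
      ((1 / (2 * (2 * Real.pi) ^ n)) : ℝ) *
        ((Real.cosh (∑ k, x k * a) : ℝ))⁻¹ *
        ∫ v : Fin n → ℝ,
          Complex.exp (-Complex.I * (∑ k, x k * v k : ℝ)) *
            (Φ (fun k => (v k : ℂ) + Complex.I * (a : ℂ))
              + Φ (fun k => (v k : ℂ) - Complex.I * (a : ℂ))) := by
  intro x
  obtain ⟨m, rfl⟩ : ∃ m, n = m + 1 := ⟨n - 1, by omega⟩
  obtain ⟨U, hU, hTU, hΦ⟩ := hol
  subst hT
  let G : (Fin (m + 1) → ℂ) → ℂ := fun z => Complex.exp (-I * ∑ k, (x k : ℂ) * z k) * Φ z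
  have hnorm : ∀ z : Fin (m + 1) → ℂ, (∀ k, -a ≤ (z k).im ∧ (z k).im ≤ a) →
      ‖Complex.exp (-I * ∑ k, (x k : ℂ) * z k)‖ ≤ Real.exp (∑ k, |x k| * a) := by
    intro z hz
    rw [Complex.norm_exp]
    apply Real.exp_le_exp.2
    have : (-I * ∑ k, (x k : ℂ) * z k).re = ∑ k, x k * (z k).im := by
      simp [Complex.mul_re]
    rw [this]
    refine Finset.sum_le_sum fun k _ => ?_
    calc x k * (z k).im ≤ |x k * (z k).im| := le_abs_self _
      _ = |x k| * |(z k).im| := abs_mul _ _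
      _ ≤ _ := mul_le_mul_of_nonneg_left (abs_le.2 (hz k)) (abs_nonneg _)
  have hd : ∀ z : Fin (m + 1) → ℂ, (∀ k, -a ≤ (z k).im ∧ (z k).im ≤ a) →
      DifferentiableAt ℂ G z := by
    intro z hz
    have h1 : DifferentiableAt ℂ Φ z := hΦ.differentiableAt (hU.mem_nhds (hTU hz))
    refine DifferentiableAt.mul ?_ h1
    fun_prop
  have hdec : ∀ ε > (0 : ℝ), ∃ R : ℝ, ∀ z : Fin (m + 1) → ℂ,
      (∀ k, -a ≤ (z k).im ∧ (z k).im ≤ a) → R ≤ Real.sqrt (∑ k, (z k).re ^ 2) →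
      ‖G z‖ < ε := by
    intro ε hε
    obtain ⟨R, hR⟩ := hdecay (ε / Real.exp (∑ k, |x k| * a)) (by positivity)
    refine ⟨R, fun z hz hRz => ?_⟩
    have h1 := hR z hz hRz
    rw [lt_div_iff₀ (Real.exp_pos _)] at h1
    calc ‖G z‖ = ‖Complex.exp (-I * ∑ k, (x k : ℂ) * z k)‖ * ‖Φ z‖ := norm_mul _ _
      _ ≤ Real.exp (∑ k, |x k| * a) * ‖Φ z‖ :=
        mul_le_mul_of_nonneg_right (hnorm z hz) (norm_nonneg _)
      _ < ε := by rwa [mul_comm]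
  have hintG : ∀ w : Fin (m + 1) → ℝ, (∀ k, w k ∈ Set.Icc (-a) a) →
      Integrable (fun v : Fin (m + 1) → ℝ => G (fun k => (v k : ℂ) + I * (w k : ℂ))) := by
    intro w hw
    refine Integrable.bdd_mul (c := Real.exp (∑ k, |x k| * a)) (hint w hw) ?_ ?_
    · apply Continuous.aestronglyMeasurable
      fun_prop
    · refine Filter.Eventually.of_forall fun v => hnorm _ fun k => ?_
      simpa using hw k
  have ha1 : a ∈ Set.Icc (-a) a := ⟨by linarith, le_rfl⟩
  have ha2 : -a ∈ Set.Icc (-a) a := ⟨le_rfl, by linarith⟩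
  have s1 := full_shift m a ha G hd hdec hintG a ha1
  have s2 := full_shift m a ha G hd hdec hintG (-a) ha2
  have j1 := hintG (fun _ => a) (fun _ => ha1)
  have j2 := hintG (fun _ => -a) (fun _ => ha2)
  set s : ℝ := ∑ k, x k * a with hs
  have hpt : ∀ v : Fin (m + 1) → ℝ, Complex.exp (-Complex.I * (∑ k, x k * v k : ℝ)) *
            (Φ (fun k => (v k : ℂ) + Complex.I * (a : ℂ))
              + Φ (fun k => (v k : ℂ) - Complex.I * (a : ℂ))) =
      Complex.exp (-s) * G (fun k => (v k : ℂ) + I * (a : ℂ)) +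
      Complex.exp s * G (fun k => (v k : ℂ) + I * ((-a : ℝ) : ℂ)) := by
    intro v
    have q1 : ∀ b : ℝ, (-I * ∑ k, (x k : ℂ) * ((v k : ℂ) + I * (b : ℂ))) =
        -I * (∑ k, x k * v k : ℝ) + ∑ k, (x k : ℂ) * b := by
      intro b
      push_cast
      simp only [Finset.mul_sum, ← Finset.sum_add_distrib]
      refine Finset.sum_congr rfl fun k _ => ?_
      linear_combination (-(x k : ℂ) * b) * I_mul_I
    have q2 : ((s : ℝ) : ℂ) = ∑ k, (x k : ℂ) * a := by rw [hs]; push_cast; rfl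
    have q3 : -((s : ℝ) : ℂ) = ∑ k, (x k : ℂ) * ((-a : ℝ) : ℂ) := by
      rw [q2, ← Finset.sum_neg_distrib]; push_cast; simp
    simp only [G, q1]
    rw [← q2, ← q3, Complex.exp_add, Complex.exp_add]
    have q4 : Complex.exp (-(s : ℂ)) * Complex.exp s = 1 := by
      rw [← Complex.exp_add]; simp
    have q5 : (fun k => (v k : ℂ) - I * (a : ℂ)) = fun k => (v k : ℂ) + I * ((-a : ℝ) : ℂ) := by
      funext k; push_cast; ring
    rw [q5]
    linear_combination (-Complex.exp (-I * (∑ k, x k * v k : ℝ)) *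
      (Φ (fun k => (v k : ℂ) + Complex.I * (a : ℂ)) +
        Φ fun k => (v k : ℂ) + I * ((-a : ℝ) : ℂ))) * q4
  simp only [hpt]
  rw [integral_add (j1.const_mul _) (j2.const_mul _), integral_const_mul, integral_const_mul,
    ← s1, ← s2, hp x]
  have hG : ∀ v : Fin (m + 1) → ℝ, Complex.exp (-Complex.I * (∑ k, x k * v k : ℝ)) *
      Φ (fun k => (v k : ℂ)) = G (fun k => (v k : ℂ)) := by
    intro v; simp [G]
  simp only [hG]
  rw [← add_mul]
  have hc : Complex.exp (-(s : ℂ)) + Complex.exp s = 2 * ((Real.cosh s : ℝ) : ℂ) := by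
    rw [Complex.ofReal_cosh, Complex.two_cosh, add_comm]
  have hc0 : ((Real.cosh s : ℝ) : ℂ) ≠ 0 := by
    exact_mod_cast (Real.cosh_pos s).ne'
  have hpi : ((Real.pi : ℝ) : ℂ) ≠ 0 := by exact_mod_cast Real.pi_ne_zero
  rw [hc]
  push_cast at hc0 ⊢
  field_simp
end

section
/- Let n ≥ 1 and let p : ℝⁿ → ℝ be a continuous probability density (p ≥ 0 and ∫_{ℝⁿ} p = 1) with characteristic function Φ(v) = ∫_{ℝⁿ} e^{i⟨v,x⟩} p(x) dx. Suppose there exist A > 0 and δ > 0 such that p(x) ≤ A(1 + ‖x‖)^{−n−δ} and |Φ(v)| ≤ A(1 + ‖v‖)^{−n−δ} for all x, v ∈ ℝⁿ. Let P > 0 and ε > 0 be such that Σ_{m ∈ ℤⁿ, m ≠ 0} p(x + Pm) ≤ ε for all x ∈ [−P/2, P/2]ⁿ. Then for every q ∈ [1, ∞), ( ∫_{[−P/2,P/2]ⁿ} | p(x) − P^{−n} Σ_{m ∈ ℤⁿ} Φ(−2πm/P) e^{2πi⟨m,x⟩/P} |^q dx )^{1/q} ≤ ε P^{n/q}, and moreover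 sup_{x ∈ [−P/2,P/2]ⁿ} | p(x) − P^{−n} Σ_{m ∈ ℤⁿ} Φ(−2πm/P) e^{2πi⟨m,x⟩/P} | ≤ ε. -/
open MeasureTheory Complex

lemma summ_lat (n : ℕ) (s : ℝ) (hs : (n:ℝ) < s) :
    Summable fun m : Fin n → ℤ => (1 + ‖(fun k => (m k : ℝ))‖) ^ (-s) := by
  let b := Pi.basisFun ℝ (Fin n)
  let L := Submodule.span ℤ (Set.range b)
  have hr : Module.finrank ℤ L = n := by
    rw [ZLattice.rank ℝ L]; simp
  have h1 := ZLattice.summable_norm_rpow L (-s) (by rw [hr]; linarith)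
  let φ : (Fin n → ℤ) → L := fun m => ⟨fun k => (m k : ℝ), by
    rw [b.mem_span_iff_repr_mem ℤ]
    intro i
    exact ⟨m i, by simp [b]⟩⟩
  have hφ : Function.Injective φ := by
    intro m m' h
    have := congrArg Subtype.val h
    funext k
    have h3 : (m k : ℝ) = m' k := congrFun this k
    exact_mod_cast h3
  have h2 := h1.comp_injective hφ
  refine Summable.of_norm_bounded_eventually h2 ?_
  rw [Filter.eventually_cofinite]
  refine (Set.finite_singleton (0 : Fin n → ℤ)).subset ?_
  intro m hm
  by_contra hne
  apply hm
  have hpos : 0 < ‖(fun k => (m k : ℝ))‖ := by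
    rw [norm_pos_iff]
    intro h
    apply hne
    funext k
    have h3 : (m k : ℝ) = 0 := congrFun h k
    simpa using h3
  rw [Real.norm_of_nonneg (by positivity)]
  have hn0 : (0:ℝ) ≤ n := by positivity
  have h4 : ‖φ m‖ = ‖(fun k => (m k : ℝ))‖ := rfl
  simp only [Function.comp, h4]
  exact Real.rpow_le_rpow_of_nonpos hpos (by linarith) (by linarith)

lemma shift_bound (n : ℕ) (s R : ℝ) (hs : 0 ≤ s) (x y : Fin n → ℝ) (hx : ‖x‖ ≤ R) :
    (1 + ‖x + y‖) ^ (-s) ≤ (1 + R) ^ s * (1 + ‖y‖) ^ (-s) := by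
  have h0 : 0 ≤ R := (norm_nonneg x).trans hx
  have h1 : ‖y‖ ≤ ‖x + y‖ + ‖x‖ := by
    have := norm_sub_le (x + y) x
    simpa using this
  have h2 : (1 + ‖y‖) / (1 + R) ≤ 1 + ‖x + y‖ := by
    rw [div_le_iff₀ (by positivity)]
    nlinarith [norm_nonneg (x + y)]
  calc (1 + ‖x + y‖) ^ (-s) ≤ ((1 + ‖y‖) / (1 + R)) ^ (-s) :=
        Real.rpow_le_rpow_of_nonpos (by positivity) h2 (by linarith)
    _ = _ := by
        rw [Real.div_rpow (by positivity) (by positivity), Real.rpow_neg (by positivity : 0 ≤ 1 + R)]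
        field_simp

lemma mF_apply (n : ℕ) (m : Fin n → ℤ) (x : Fin n → ℝ) :
    UnitAddTorus.mFourier m (fun i => (x i : UnitAddCircle)) =
      Complex.exp (2 * Real.pi * Complex.I * (∑ k, (m k : ℝ) * x k : ℝ)) := by
  simp only [UnitAddTorus.mFourier, ContinuousMap.coe_mk, fourier_coe_apply]
  rw [← Complex.exp_sum]
  congr 1
  push_cast
  rw [Finset.mul_sum]
  refine Finset.sum_congr rfl fun i _ => ?_
  simp
  ring

lemma unfold_integral (n : ℕ) (h : (Fin n → ℝ) → ℂ) (hi : Integrable h) :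
    ∫ x in {x : Fin n → ℝ | ∀ i, x i ∈ Set.Ioc ((0 : Fin n → ℝ) i) ((0 : Fin n → ℝ) i + 1)},
      ∑' m : Fin n → ℤ, h (x + fun k => (m k : ℝ)) = ∫ x, h x := by
  set Q : Set (Fin n → ℝ) := {x | ∀ i, x i ∈ Set.Ioc ((0 : Fin n → ℝ) i) ((0 : Fin n → ℝ) i + 1)} with hQ
  let c : (Fin n → ℤ) → (Fin n → ℝ) := fun m k => (m k : ℝ)
  let T : (Fin n → ℤ) → Set (Fin n → ℝ) := fun m => {x | ∀ i, x i ∈ Set.Ioc (m i : ℝ) (m i + 1)}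
  have hT : ∀ m, MeasurableSet (T m) := fun m =>
    MeasurableSet.univ_pi' (fun i => measurableSet_Ioc)
  have hd : Pairwise (Function.onFun Disjoint T) := by
    intro m m' hm
    rw [Function.onFun, Set.disjoint_left]
    intro x hx hx'
    apply hm
    funext i
    have h1 := hx i
    have h2 := hx' i
    have h3 : (m i : ℝ) < m' i + 1 := h1.1.trans_le h2.2
    have h4 : (m' i : ℝ) < m i + 1 := h2.1.trans_le h1.2
    have h5 : m i < m' i + 1 := by exact_mod_cast h3
    have h6 : m' i < m i + 1 := by exact_mod_cast h4
    omega
  have hU : (⋃ m, T m) = Set.univ := by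
    rw [Set.eq_univ_iff_forall]
    intro x
    rw [Set.mem_iUnion]
    refine ⟨fun i => ⌈x i⌉ - 1, fun i => ?_⟩
    have h1 := Int.ceil_lt_add_one (x i)
    have h2 := Int.le_ceil (x i)
    constructor <;> push_cast <;> linarith
  have hpre : ∀ m, (fun x => x + c m) ⁻¹' (T m) = Q := by
    intro m
    ext x
    simp only [Set.mem_preimage, T, Q, c, Set.mem_ofPred_eq, Pi.add_apply, Set.mem_Ioc,
      Pi.zero_apply]
    refine forall_congr' fun i => ?_
    constructor <;> rintro ⟨h1, h2⟩ <;> constructor <;> linarith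
  have key : ∀ {E : Type} [NormedAddCommGroup E] [NormedSpace ℝ E] (g : (Fin n → ℝ) → E) (m : Fin n → ℤ),
      ∫ x in Q, g (x + c m) = ∫ x in T m, g x := by
    intro E _ _ g m
    rw [← hpre m]
    exact (measurePreserving_add_right volume (c m)).setIntegral_preimage_emb
      (measurableEmbedding_addRight (c m)) g (T m)
  have e1 := hasSum_integral_iUnion hT hd (f := h) (μ := volume) hi.integrableOn
  have e2 := hasSum_integral_iUnion hT hd (f := fun x => ‖h x‖) (μ := volume) hi.norm.integrableOn
  have e3 := hasSum_integral_of_summable_integral_norm (μ := volume.restrict Q)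
    (F := fun (m : Fin n → ℤ) x => h (x + c m))
    (fun m => (hi.comp_add_right (c m)).integrableOn) (by
      simp only [key (fun x => ‖h x‖)]
      exact e2.summable)
  simp only [key h] at e3
  rw [hU, setIntegral_univ] at e1
  exact e3.unique e1

lemma poisson (n : ℕ) (f : (Fin n → ℝ) → ℂ) (hf : Continuous f) (C s : ℝ) (hs : (n:ℝ) < s)
    (hC : 0 ≤ C)
    (hb : ∀ x, ‖f x‖ ≤ C * (1 + ‖x‖) ^ (-s))
    (g : (Fin n → ℤ) → ℂ)
    (hg : ∀ m, g m = ∫ x, Complex.exp (-(2 * Real.pi * Complex.I * (∑ k, (m k : ℝ) * x k : ℝ))) * f x)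
    (hgs : Summable g) (x : Fin n → ℝ) :
    Summable (fun m : Fin n → ℤ => f (x + fun k => (m k : ℝ))) ∧
    ∑' m : Fin n → ℤ, f (x + fun k => (m k : ℝ)) =
      ∑' m, g m * Complex.exp (2 * Real.pi * Complex.I * (∑ k, (m k : ℝ) * x k : ℝ)) := by
  have hn0 : (0:ℝ) ≤ n := by positivity
  have hs0 : 0 ≤ s := by linarith
  have hbR : ∀ R : ℝ, ∀ m : Fin n → ℤ, ∀ y : Fin n → ℝ, ‖y‖ ≤ R →
      ‖f (y + fun k => (m k : ℝ))‖ ≤ C * ((1 + R) ^ s * (1 + ‖(fun k => (m k : ℝ))‖) ^ (-s)) := by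
    intro R m y hy
    exact (hb _).trans (mul_le_mul_of_nonneg_left (shift_bound n s R hs0 _ _ hy) hC)
  have hsm : ∀ R : ℝ, Summable fun m : Fin n → ℤ =>
      C * ((1 + R) ^ s * (1 + ‖(fun k => (m k : ℝ))‖) ^ (-s)) := fun R =>
    ((summ_lat n s hs).mul_left _).mul_left _
  have hsumm : Summable (fun m : Fin n → ℤ => f (x + fun k => (m k : ℝ))) :=
    Summable.of_norm_bounded (hsm ‖x‖) fun m => hbR _ m x le_rfl
  refine ⟨hsumm, ?_⟩
  have hcont : Continuous fun y : Fin n → ℝ => ∑' m : Fin n → ℤ, f (y + fun k => (m k : ℝ)) := by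
    rw [continuous_iff_continuousAt]
    intro y
    have := continuousOn_tsum (f := fun (m : Fin n → ℤ) (y : Fin n → ℝ) => f (y + fun k => (m k : ℝ)))
      (s := Metric.closedBall 0 (‖y‖ + 1)) (fun m => by fun_prop) (hsm (‖y‖ + 1))
      (fun m z hz => hbR _ m z (by simpa using hz))
    exact this.continuousAt (Metric.closedBall_mem_nhds_of_mem (by simp))
  have hq : IsOpenQuotientMap (Pi.map fun (_ : Fin n) (t : ℝ) => (t : UnitAddCircle)) :=
    IsOpenQuotientMap.piMap fun _ => QuotientAddGroup.isOpenQuotientMap_mk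
  let π : C(Fin n → ℝ, UnitAddTorus (Fin n)) := ⟨_, hq.continuous⟩
  have hπ : Topology.IsQuotientMap π := hq.isQuotientMap
  let G : C(Fin n → ℝ, ℂ) := ⟨_, hcont⟩
  have hG : Function.FactorsThrough G π := by
    intro y z hyz
    have h1 : ∀ i, ∃ k : ℤ, z i = y i + k := by
      intro i
      have h2 : (y i : UnitAddCircle) = (z i : UnitAddCircle) := congrFun hyz i
      have h3 : ((z i - y i : ℝ) : UnitAddCircle) = 0 := by
        rw [AddCircle.coe_sub, h2, sub_self]
      rw [AddCircle.coe_eq_zero_iff] at h3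
      obtain ⟨k, hk⟩ := h3
      refine ⟨k, ?_⟩
      simp at hk
      linarith
    choose k hk using h1
    have h4 : z = y + fun i => (k i : ℝ) := funext hk
    change ∑' m : Fin n → ℤ, f (y + fun k => (m k : ℝ)) = ∑' m : Fin n → ℤ, f (z + fun k => (m k : ℝ))
    rw [← (Equiv.addLeft k).tsum_eq, h4]
    refine tsum_congr fun m => ?_
    congr 1
    funext i
    simp
    ring
  let F : C(UnitAddTorus (Fin n), ℂ) := hπ.lift G hG
  have hF : ∀ y : Fin n → ℝ, F (fun i => (y i : UnitAddCircle)) =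
      ∑' m : Fin n → ℤ, f (y + fun k => (m k : ℝ)) := by
    intro y
    have : (F.comp π) y = G y := by
      rw [Topology.IsQuotientMap.lift_comp]
    exact this
  have hfi : Integrable f := by
    refine Integrable.mono' (((integrable_one_add_norm (E := Fin n → ℝ) (μ := volume) (r := s)
      (by simpa using hs)).const_mul C)) hf.aestronglyMeasurable (Filter.Eventually.of_forall hb)
  have hco : ∀ m, UnitAddTorus.mFourierCoeff F m = g m := by
    intro m
    rw [UnitAddTorus.mFourierCoeff_eq_integral F m 0, hg]
    rw [← unfold_integral]
    · congr 1
      funext y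
      rw [hF, mF_apply, smul_eq_mul, ← tsum_mul_left]
      refine tsum_congr fun k => ?_
      congr 1
      rw [Complex.exp_eq_exp_iff_exists_int]
      refine ⟨∑ i, m i * k i, ?_⟩
      push_cast
      simp only [Pi.add_apply, Pi.neg_apply]
      push_cast
      simp only [neg_mul, Finset.sum_neg_distrib, mul_add, Finset.sum_add_distrib]
      ring
    · refine hfi.bdd_mul (c := 1) (Continuous.aestronglyMeasurable (by fun_prop)) (Filter.Eventually.of_forall fun y => ?_)
      rw [Complex.norm_exp]
      simp
  have hco' : UnitAddTorus.mFourierCoeff F = g := funext hco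
  have := UnitAddTorus.hasSum_mFourier_series_apply_of_summable (f := F) (hco' ▸ hgs)
    (fun i => (x i : UnitAddCircle))
  rw [hF] at this
  simp only [hco, mF_apply, smul_eq_mul] at this
  exact this.tsum_eq.symm

lemma scale_bound (n : ℕ) (s c : ℝ) (hs : 0 ≤ s) (hc : 0 < c) (x : Fin n → ℝ) :
    (1 + Real.sqrt (∑ k, (c * x k) ^ 2)) ^ (-s) ≤ (min 1 c) ^ (-s) * (1 + ‖x‖) ^ (-s) := by
  have hm : 0 < min 1 c := lt_min one_pos hc
  rw [← Real.mul_rpow hm.le (by positivity)]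
  refine Real.rpow_le_rpow_of_nonpos (by positivity) ?_ (by linarith)
  have h1 : c * ‖x‖ ≤ Real.sqrt (∑ k, (c * x k) ^ 2) := by
    have h2 : ‖c • x‖ ≤ Real.sqrt (∑ k, (c * x k) ^ 2) := by
      rw [pi_norm_le_iff_of_nonneg (Real.sqrt_nonneg _)]
      intro i
      apply Real.abs_le_sqrt
      exact Finset.single_le_sum (f := fun k => (c * x k) ^ 2) (fun k _ => sq_nonneg _)
        (Finset.mem_univ i)
    rwa [norm_smul, Real.norm_of_nonneg hc.le] at h2
  have h3 : min 1 c * ‖x‖ ≤ c * ‖x‖ :=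
    mul_le_mul_of_nonneg_right (min_le_right _ _) (norm_nonneg _)
  have h4 : min 1 c ≤ 1 := min_le_left _ _
  linarith

theorem density_fourier_approximation
    (n : ℕ) (hn : 1 ≤ n) (p : (Fin n → ℝ) → ℝ) (hp : Continuous p)
    (hp0 : ∀ x, 0 ≤ p x) (hp1 : ∫ x : Fin n → ℝ, p x = 1)
    (Φ : (Fin n → ℝ) → ℂ)
    (hΦ : ∀ v : Fin n → ℝ, Φ v =
      ∫ x : Fin n → ℝ, Complex.exp (Complex.I * (∑ k, v k * x k : ℝ)) * (p x : ℂ))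
    (A δ : ℝ) (hA : 0 < A) (hδ : 0 < δ)
    (hpb : ∀ x : Fin n → ℝ,
      p x ≤ A * (1 + Real.sqrt (∑ k, x k ^ 2)) ^ (-(n : ℝ) - δ))
    (hΦb : ∀ v : Fin n → ℝ,
      ‖Φ v‖ ≤ A * (1 + Real.sqrt (∑ k, v k ^ 2)) ^ (-(n : ℝ) - δ))
    (P ε : ℝ) (hP : 0 < P) (hε : 0 < ε)
    (hsum : ∀ x : Fin n → ℝ, (∀ k, |x k| ≤ P / 2) →
      (∑' m : {m : Fin n → ℤ // m ≠ 0}, p (fun k => x k + P * ((m : Fin n → ℤ) k : ℝ))) ≤ ε)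
    (S : (Fin n → ℝ) → ℂ)
    (hS : ∀ x, S x = ((P ^ n)⁻¹ : ℝ) *
      ∑' m : Fin n → ℤ,
        Φ (fun k => -2 * Real.pi * (m k : ℝ) / P) *
          Complex.exp (2 * Real.pi * Complex.I * ((∑ k, (m k : ℝ) * x k) / P : ℝ))) :
    (∀ q : ℝ, 1 ≤ q →
      (∫ x in {x : Fin n → ℝ | ∀ k, |x k| ≤ P / 2}, ‖(p x : ℂ) - S x‖ ^ q) ^ (1 / q)
        ≤ ε * P ^ ((n : ℝ) / q)) ∧
    (∀ x : Fin n → ℝ, (∀ k, |x k| ≤ P / 2) → ‖(p x : ℂ) - S x‖ ≤ ε) := by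
  
  have hsn : (n : ℝ) < n + δ := by linarith
  have hn0 : (0:ℝ) ≤ n := by positivity
  have hs0 : 0 ≤ (n : ℝ) + δ := by linarith
  have hneg : -(n : ℝ) - δ = -((n : ℝ) + δ) := by ring
  have hPn : (0:ℝ) < P ^ n := by positivity
  set s : ℝ := n + δ with hsdef
  have hmain : ∀ x : Fin n → ℝ, (∀ k, |x k| ≤ P / 2) → ‖(p x : ℂ) - S x‖ ≤ ε := by
    intro x hx
    let f : (Fin n → ℝ) → ℂ := fun y => (p (P • y) : ℂ)
    let g : (Fin n → ℤ) → ℂ := fun m =>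
      ((P ^ n)⁻¹ : ℝ) * Φ (fun k => -2 * Real.pi * (m k : ℝ) / P)
    have hf : Continuous f := by fun_prop
    have hb : ∀ y, ‖f y‖ ≤ (A * (min 1 P) ^ (-s)) * (1 + ‖y‖) ^ (-s) := by
      intro y
      simp only [f]
      rw [Complex.norm_real, Real.norm_of_nonneg (hp0 _), mul_assoc]
      refine (hpb _).trans ?_
      rw [hneg]
      exact mul_le_mul_of_nonneg_left (scale_bound n s P hs0 hP y) hA.le
    have hg : ∀ m, g m = ∫ y, Complex.exp (-(2 * Real.pi * Complex.I *
        (∑ k, (m k : ℝ) * y k : ℝ))) * f y := by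
      intro m
      have h1 := Measure.integral_comp_smul (volume : Measure (Fin n → ℝ))
        (fun y => Complex.exp (Complex.I * (∑ k, (-2 * Real.pi * (m k : ℝ) / P) * y k : ℝ)) *
          (p y : ℂ)) P
      simp only [g]
      rw [hΦ, ← Complex.real_smul]
      rw [Module.finrank_fin_fun, abs_of_pos (by positivity)] at h1
      rw [← h1]
      congr 1
      funext y
      simp only [f]
      congr 2
      push_cast
      rw [Finset.mul_sum, Finset.mul_sum, ← Finset.sum_neg_distrib]
      refine Finset.sum_congr rfl fun i _ => ?_
      have hP' : (P : ℂ) ≠ 0 := by exact_mod_cast hP.ne'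
      simp only [Pi.smul_apply, smul_eq_mul]
      push_cast
      field_simp
    have hc : 0 < 2 * Real.pi / P := by positivity
    have hgs : Summable g := by
      refine Summable.mul_left _ ?_
      refine Summable.of_norm_bounded
        (((summ_lat n s hsn).mul_left ((min 1 (2 * Real.pi / P)) ^ (-s))).mul_left A) fun m => ?_
      refine (hΦb _).trans ?_
      rw [hneg]
      refine mul_le_mul_of_nonneg_left ?_ hA.le
      refine le_trans (le_of_eq ?_) (scale_bound n s (2 * Real.pi / P) hs0 hc _)
      congr 3
      refine Finset.sum_congr rfl fun i _ => ?_
      ring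
    obtain ⟨hsm, heq⟩ := poisson n f hf (A * (min 1 P) ^ (-s)) s hsn (by positivity) hb g hg hgs
      (P⁻¹ • x)
    have hfx : ∀ m : Fin n → ℤ, f (P⁻¹ • x + fun k => (m k : ℝ)) =
        ((p (fun k => x k + P * (m k : ℝ)) : ℝ) : ℂ) := by
      intro m
      simp only [f]
      congr 2
      funext k
      simp only [Pi.smul_apply, Pi.add_apply, smul_eq_mul]
      field_simp
    simp only [hfx] at hsm heq
    have hS' : S x = ∑' m : Fin n → ℤ, ((p (fun k => x k + P * (m k : ℝ)) : ℝ) : ℂ) := by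
      rw [heq, hS, ← tsum_mul_left]
      refine tsum_congr fun m => ?_
      simp only [g, mul_assoc]
      congr 5
      rw [Finset.sum_div]
      congr 2
      refine Finset.sum_congr rfl fun i _ => ?_
      simp only [Pi.smul_apply, smul_eq_mul]
      ring
    have hsmR : Summable fun m : Fin n → ℤ => p (fun k => x k + P * (m k : ℝ)) :=
      Complex.summable_ofReal.mp hsm
    have hsplit := hsmR.tsum_subtype_add_tsum_subtype_compl {m : Fin n → ℤ | m ≠ 0}
    have hz : ∑' m : ({m : Fin n → ℤ | m ≠ 0}ᶜ : Set (Fin n → ℤ)),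
        p (fun k => x k + P * ((m : Fin n → ℤ) k : ℝ)) = p x := by
      have h0 : ({m : Fin n → ℤ | m ≠ 0}ᶜ : Set (Fin n → ℤ)) = {0} := by
        ext m; simp
      rw [h0, tsum_singleton (0 : Fin n → ℤ) (fun m : Fin n → ℤ => p (fun k => x k + P * (m k : ℝ)))]
      simp
    rw [hz] at hsplit
    rw [hS', ← Complex.ofReal_tsum, ← hsplit, ← Complex.ofReal_sub, Complex.norm_real, 
      sub_add_cancel_right, norm_neg, Real.norm_of_nonneg (tsum_nonneg fun _ => hp0 _)]
    exact hsum x hx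
  refine ⟨fun q hq => ?_, hmain⟩
  have hset : {x : Fin n → ℝ | ∀ k, |x k| ≤ P / 2} = Set.Icc (fun _ => -(P / 2)) (fun _ => P / 2) := by
    ext x
    simp only [Set.mem_ofPred_eq, Set.mem_Icc, Pi.le_def, abs_le]
    exact forall_and
  have hq0 : 0 < q := by linarith
  have hvol : volume.real {x : Fin n → ℝ | ∀ k, |x k| ≤ P / 2} = P ^ n := by
    rw [hset, Measure.real, Real.volume_Icc_pi_toReal (fun _ => by linarith)]
    simp
  have h1 := norm_setIntegral_le_of_norm_le_const (μ := volume)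
    (s := {x : Fin n → ℝ | ∀ k, |x k| ≤ P / 2}) (f := fun x => ‖(p x : ℂ) - S x‖ ^ q)
    (C := ε ^ q) (by rw [hset]; exact isCompact_Icc.measure_lt_top) (fun x hx => by
      rw [Real.norm_of_nonneg (by positivity)]
      exact Real.rpow_le_rpow (norm_nonneg _) (hmain x hx) hq0.le)
  rw [hvol] at h1
  have h2 := (le_abs_self _).trans h1
  have h3 : 0 ≤ ∫ x in {x : Fin n → ℝ | ∀ k, |x k| ≤ P / 2}, ‖(p x : ℂ) - S x‖ ^ q :=
    integral_nonneg fun x => by positivity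
  refine (Real.rpow_le_rpow h3 h2 (by positivity)).trans (le_of_eq ?_)
  rw [Real.mul_rpow (by positivity) (by positivity), ← Real.rpow_mul hε.le,
    mul_one_div_cancel hq0.ne', Real.rpow_one, ← Real.rpow_natCast, ← Real.rpow_mul hP.le,
    mul_one_div]
end

section
/- Let n ≥ 1, ν₁, …, νₙ > 0 and β₁, …, βₙ > 0. For t > 0 let Ω(t) = {x ∈ ℝⁿ : Σ_{s=1}^n β_s |x_s|^{ν_s} ≤ t}, let L(t) be the number of points of ℤⁿ in Ω(t), and let V(t) be the Lebesgue measure of Ω(t). Then L(t)/V(t) → 1 as t → ∞. -/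
open MeasureTheory

lemma lca_card {n : ℕ} (S : Set (Fin n → ℤ)) :
    (volume {y : Fin n → ℝ | (fun s => ⌊y s⌋) ∈ S}).toReal = (Nat.card S : ℝ) := by
  have h1 : {y : Fin n → ℝ | (fun s => ⌊y s⌋) ∈ S}
      = ⋃ m ∈ S, Set.univ.pi (fun s => Set.Ico (m s : ℝ) (m s + 1)) := by
    ext y
    simp only [Set.mem_ofPred_eq, Set.mem_iUnion, Set.mem_pi, Set.mem_univ, true_imp_iff,
      Set.mem_Ico, exists_prop]
    constructor
    · intro h
      exact ⟨_, h, fun s => ⟨Int.floor_le _, Int.lt_floor_add_one _⟩⟩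
    · rintro ⟨m, hm, h⟩
      have : (fun s => ⌊y s⌋) = m := by
        funext s
        exact Int.floor_eq_iff.2 (h s)
      rwa [this]
  rw [h1, measure_biUnion S.to_countable]
  · have : ∀ m : Fin n → ℤ, volume (Set.univ.pi (fun s => Set.Ico (m s : ℝ) (m s + 1))) = 1 := by
      intro m
      rw [volume_pi_pi]
      simp
    simp only [this]
    rw [ENNReal.tsum_const]
    rw [mul_one, Nat.card_coe_set_eq]
    change ((S.encard : ENat) : ENNReal).toReal = _
    rcases S.finite_or_infinite with hS | hS
    · rw [← hS.cast_ncard_eq]; simp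
    · rw [hS.encard_eq, hS.ncard]; simp
  · intro a _ b _ hab
    rw [Function.onFun, Set.disjoint_left]
    intro y ha hb
    apply hab
    funext s
    have h1 := Int.floor_eq_iff.2 (ha s (Set.mem_univ _))
    have h2 := Int.floor_eq_iff.2 (hb s (Set.mem_univ _))
    exact h1.symm.trans h2
  · intro m _
    exact MeasurableSet.univ_pi fun s => measurableSet_Ico

lemma lca_scale {n : ℕ} (d : Fin n → ℝ) (hd : ∀ s, 0 < d s) (A : Set (Fin n → ℝ))
    (hA : MeasurableSet A) :
    (volume A).toReal = (∏ s, d s) * (volume {x : Fin n → ℝ | (fun s => d s * x s) ∈ A}).toReal := by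
  have hdet : (Matrix.diagonal d).det = ∏ s, d s := Matrix.det_diagonal
  have hp : 0 < ∏ s, d s := Finset.prod_pos fun s _ => hd s
  have h := Real.smul_map_diagonal_volume_pi (D := d) (by rw [hdet]; exact hp.ne')
  have h2 := congrArg (fun μ => (μ A).toReal) h
  change _ = (volume A).toReal at h2
  rw [← h2, Measure.smul_apply, Measure.map_apply _ hA, hdet, abs_of_pos hp, smul_eq_mul,
    ENNReal.toReal_mul, ENNReal.toReal_ofReal hp.le]
  · congr 3
    ext x
    simp only [Set.mem_preimage, Set.mem_ofPred_eq]
    have : (Matrix.toLin' (Matrix.diagonal d)) x = fun s => d s * x s := by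
      funext s
      simp [Matrix.toLin'_apply, Matrix.mulVec_diagonal]
    rw [this]
  · exact (LinearMap.continuous_of_finiteDimensional _).measurable

theorem lattice_count_asymptotics
    (n : ℕ) (hn : 1 ≤ n) (ν β : Fin n → ℝ) (hν : ∀ s, 0 < ν s) (hβ : ∀ s, 0 < β s) :
    Filter.Tendsto
      (fun t : ℝ =>
        (Nat.card {m : Fin n → ℤ // ∑ s, β s * |(m s : ℝ)| ^ ν s ≤ t} : ℝ) /
          (volume {x : Fin n → ℝ | ∑ s, β s * |x s| ^ ν s ≤ t}).toReal)
      Filter.atTop (nhds 1) := by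
  set g : (Fin n → ℝ) → ℝ := fun x => ∑ s, β s * |x s| ^ ν s with hg
  have gc : Continuous g := by
    refine continuous_finsetSum _ fun s _ => continuous_const.mul ?_
    exact (continuous_abs.comp (continuous_apply s)).rpow_const fun _ => Or.inr (hν s).le
  -- a null level
  obtain ⟨c, hc, hcn⟩ : ∃ c : ℝ, 0 < c ∧ volume {x | g x = c} = 0 := by
    have h1 := Measure.countable_meas_level_set_pos (μ := (volume : Measure (Fin n → ℝ)))
      gc.measurable
    by_contra! h
    have : Set.Ioi (0:ℝ) ⊆ {t | 0 < volume {x | g x = t}} := fun c hc =>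
      pos_iff_ne_zero.2 (h c hc)
    have h2 := (h1.mono this).le_aleph0
    rw [Cardinal.mk_Ioi_real] at h2
    exact absurd h2 (not_le.2 Cardinal.aleph0_lt_continuum)
  set R : Fin n → ℝ := fun s => (c / β s) ^ (1 / ν s) with hR
  have bound : ∀ x : Fin n → ℝ, g x ≤ c → ∀ s, |x s| ≤ R s := by
    intro x hx s
    have h1 : β s * |x s| ^ ν s ≤ c := le_trans
      (Finset.single_le_sum (f := fun s => β s * |x s| ^ ν s)
        (fun i _ => mul_nonneg (hβ i).le (Real.rpow_nonneg (abs_nonneg _) _))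
        (Finset.mem_univ s)) hx
    have h2 : |x s| ^ ν s ≤ c / β s := by
      rw [le_div_iff₀ (hβ s)]; linarith
    have h3 := Real.rpow_le_rpow (Real.rpow_nonneg (abs_nonneg _) _) h2 (one_div_pos.2 (hν s)).le
    rwa [← Real.rpow_mul (abs_nonneg _), mul_one_div_cancel (hν s).ne', Real.rpow_one] at h3
  set B : Set (Fin n → ℝ) := Set.univ.pi fun s => Set.Icc (-(R s + 1)) (R s + 1) with hB
  have Bm : MeasurableSet B := MeasurableSet.univ_pi fun s => measurableSet_Icc
  have Bf : volume B ≠ ⊤ := (isCompact_univ_pi fun s => isCompact_Icc).measure_lt_top.ne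
  set d : ℝ → Fin n → ℝ := fun τ s => τ ^ (1 / ν s) with hd
  have dpos : ∀ τ, 0 < τ → ∀ s, 0 < d τ s := fun τ h s => Real.rpow_pos_of_pos h _
  have gscale : ∀ τ, 0 < τ → ∀ x, g (fun s => d τ s * x s) = τ * g x := by
    intro τ h x
    simp only [hg, Finset.mul_sum]
    refine Finset.sum_congr rfl fun s _ => ?_
    rw [abs_mul, abs_of_pos (dpos τ h s), Real.mul_rpow (dpos τ h s).le (abs_nonneg _)]
    simp only [hd]
    rw [← Real.rpow_mul h.le, one_div_mul_cancel (hν s).ne', Real.rpow_one]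
    ring
  set F : ℝ → (Fin n → ℝ) → (Fin n → ℝ) := fun τ x s => (⌊d τ s * x s⌋ : ℝ) / d τ s with hF
  have Fm : ∀ τ, Measurable (F τ) := by
    intro τ
    refine measurable_pi_lambda _ fun s => Measurable.div_const ?_ _
    exact (measurable_from_top (f := fun z : ℤ => (z : ℝ))).comp
      (Int.measurable_floor.comp (measurable_const.mul (measurable_pi_apply s)))
  have Fclose : ∀ τ, 0 < τ → ∀ x s, |F τ x s - x s| ≤ 1 / d τ s := by
    intro τ h x s
    have hp := dpos τ h s
    have : F τ x s - x s = ((⌊d τ s * x s⌋ : ℝ) - d τ s * x s) / d τ s := by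
      simp only [hF]; field_simp
    rw [this, abs_div, abs_of_pos hp]
    gcongr
    rw [abs_le]
    constructor <;> linarith [Int.floor_le (d τ s * x s), Int.lt_floor_add_one (d τ s * x s)]
  have Flim : ∀ x, Filter.Tendsto (fun τ => F τ x) Filter.atTop (nhds x) := by
    intro x
    rw [tendsto_pi_nhds]
    intro s
    rw [tendsto_iff_norm_sub_tendsto_zero]
    have h0 : Filter.Tendsto (fun τ => 1 / d τ s) Filter.atTop (nhds 0) := by
      simp only [one_div]
      exact (tendsto_rpow_atTop (one_div_pos.2 (hν s))).inv_tendsto_atTop.congr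
        (fun τ => by simp [hd])
    refine squeeze_zero' (Filter.Eventually.of_forall fun _ => norm_nonneg _) ?_ h0
    filter_upwards [Filter.eventually_gt_atTop 0] with τ h
    exact Fclose τ h x s
  have key : Filter.Tendsto (fun τ => volume {x | g (F τ x) ≤ c}) Filter.atTop
      (nhds (volume {x | g x ≤ c})) := by
    refine tendsto_measure_of_ae_tendsto_indicator Filter.atTop
      (measurableSet_le gc.measurable measurable_const)
      (fun τ => measurableSet_le (gc.measurable.comp (Fm τ)) measurable_const) Bm Bf ?_ ?_
    · filter_upwards [Filter.eventually_ge_atTop 1] with τ h x hx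
      intro s _
      have h1 := bound _ hx s
      have h2 := Fclose τ (by linarith) x s
      have h3 : 1 ≤ d τ s := Real.one_le_rpow h (one_div_pos.2 (hν s)).le
      have h4 : 1 / d τ s ≤ 1 := by rw [div_le_one (by linarith)]; exact h3
      rw [abs_le] at h1 h2
      constructor <;> linarith
    · have : ∀ᵐ x, g x ≠ c := by
        rw [ae_iff]; simpa using hcn
      filter_upwards [this] with x hx
      have hl := (gc.tendsto x).comp (Flim x)
      rcases lt_or_gt_of_ne hx with h | h
      · filter_upwards [hl.eventually_lt_const h] with τ hτ
        exact ⟨fun _ => h.le, fun _ => hτ.le⟩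
      · filter_upwards [hl.eventually_const_lt h] with τ hτ
        exact ⟨fun h' => absurd hτ (not_lt.2 h'), fun h' => absurd h (not_lt.2 h')⟩
  have Vf : volume {x | g x ≤ c} ≠ ⊤ := by
    refine ne_top_of_le_ne_top Bf (measure_mono ?_)
    intro x hx s _
    have h1 := bound _ hx s
    rw [abs_le] at h1
    constructor <;> linarith
  have Vp : 0 < (volume {x | g x ≤ c}).toReal := by
    refine ENNReal.toReal_pos ?_ Vf
    have ho : IsOpen {x | g x < c} := isOpen_lt gc continuous_const
    have hne : {x | g x < c}.Nonempty := by
      refine ⟨0, ?_⟩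
      have : g 0 = 0 := by
        simp only [hg]
        refine Finset.sum_eq_zero fun s _ => ?_
        simp [Real.zero_rpow (hν s).ne']
      simpa [this] using hc
    have h1 := ho.measure_pos volume hne
    exact (h1.trans_le (measure_mono fun x (hx : g x < c) => (hx.le : g x ≤ c))).ne'
  have key2 := ((ENNReal.tendsto_toReal Vf).comp key).div_const (volume {x | g x ≤ c}).toReal
  rw [div_self Vp.ne'] at key2
  have htau : Filter.Tendsto (fun t : ℝ => t / c) Filter.atTop Filter.atTop :=
    Filter.tendsto_id.atTop_div_const hc
  refine (key2.comp htau).congr' ?_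
  filter_upwards [Filter.eventually_gt_atTop 0] with t ht
  have hτ : 0 < t / c := div_pos ht hc
  have htc : t = t / c * c := by field_simp
  generalize t / c = τ at hτ htc
  subst htc
  have e1 := lca_card {m : Fin n → ℤ | g (fun s => (m s : ℝ)) ≤ τ * c}
  have e2 := lca_scale (d τ) (dpos τ hτ) {y | g (fun s => (⌊y s⌋ : ℝ)) ≤ τ * c} (by
    refine measurableSet_le (gc.measurable.comp ?_) measurable_const
    refine measurable_pi_lambda _ fun s => ?_
    exact (measurable_from_top (f := fun z : ℤ => (z : ℝ))).comp
      (Int.measurable_floor.comp (measurable_pi_apply s)))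
  have e3 := lca_scale (d τ) (dpos τ hτ) {y | g y ≤ τ * c}
    (measurableSet_le gc.measurable measurable_const)
  have s1 : {x : Fin n → ℝ | (fun s => d τ s * x s) ∈ {y | g y ≤ τ * c}} = {x | g x ≤ c} := by
    ext x
    simp only [Set.mem_ofPred_eq]
    rw [gscale τ hτ, mul_le_mul_iff_right₀ hτ]
  have s2 : {x : Fin n → ℝ | (fun s => d τ s * x s) ∈
      {y : Fin n → ℝ | g (fun s => (⌊y s⌋ : ℝ)) ≤ τ * c}} = {x | g (F τ x) ≤ c} := by
    ext x
    simp only [Set.mem_ofPred_eq]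
    have : (fun s => (⌊d τ s * x s⌋ : ℝ)) = fun s => d τ s * F τ x s := by
      funext s
      have := dpos τ hτ s
      simp only [hF]
      field_simp
    rw [this, gscale τ hτ, mul_le_mul_iff_right₀ hτ]
  rw [s1] at e3
  rw [s2] at e2
  have hp : 0 < ∏ s, d τ s := Finset.prod_pos fun s _ => dpos τ hτ s
  have e4 : (Nat.card {m : Fin n → ℤ // ∑ s, β s * |(m s : ℝ)| ^ ν s ≤ τ * c} : ℝ)
      = (∏ s, d τ s) * (volume {x | g (F τ x) ≤ c}).toReal := by
    rw [← e2]; exact e1.symm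
  rw [e4]
  change _ = _ / (volume {y | g y ≤ τ * c}).toReal
  rw [e3, mul_div_mul_left _ _ hp.ne']
  simp only [Function.comp]
  rw [mul_div_cancel_right₀ _ hc.ne']
end

section
/- Let n ≥ 1, P ≥ 1 an integer, ν₁, …, νₙ ∈ (0,1), β₁, …, βₙ > 0, and let c : ℤⁿ → ℂ satisfy |c_m| ≤ exp( −Σ_{s=1}^n β_s |m_s|^{ν_s} ) for all m ∈ ℤⁿ. Let 2 ≤ p ≤ ∞ and let p' be its conjugate exponent (1/p + 1/p' = 1). Then there exist constants C > 0 and R₀ > 1 such that for all R ≥ R₀, ‖ P^{−n} Σ_{m ∈ ℤⁿ : Σ_s β_s |m_s|^{ν_s} > ln R} c_m e^{2πi⟨m,x⟩/P} ‖_{L^p([−P/2,P/2]ⁿ)} ≤ C · R^{−1} · (ln R)^{(Σ_{s=1}^n 1/ν_s − 1)/p'}. -/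
open MeasureTheory Complex
open scoped ENNReal

lemma count1 (β ν : ℝ) (hβ : 0 < β) (hν : ν ∈ Set.Ioo (0:ℝ) 1) :
    ∃ C > (0:ℝ), ∀ K : ℕ, ∃ s : Finset ℤ, (∀ m : ℤ, ⌊β * |(m:ℝ)| ^ ν⌋₊ = K → m ∈ s) ∧
      (s.card : ℝ) ≤ C * ((K:ℝ) + 1) ^ (1 / ν - 1) := by
  obtain ⟨h0, h1⟩ := hν
  set α := 1 / ν with hα
  have hα1 : 1 < α := by rw [hα, lt_div_iff₀ h0]; linarith
  have hβα : 0 < β⁻¹ ^ α := by positivity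
  refine ⟨2 * (β⁻¹ ^ α * α + 1), by positivity, fun K => ?_⟩
  set A : ℝ := ((K:ℝ) * β⁻¹) ^ α with hA
  set B : ℝ := (((K:ℝ)+1) * β⁻¹) ^ α with hB
  have hAB : A ≤ B := by
    apply Real.rpow_le_rpow <;> first | positivity | skip
    gcongr; linarith
  have hK1 : (0:ℝ) < (K:ℝ) + 1 := by positivity
  have hdiff : B - A ≤ β⁻¹ ^ α * α * ((K:ℝ) + 1) ^ (α - 1) := by
    rw [hA, hB, Real.mul_rpow (by positivity) (by positivity),
      Real.mul_rpow (by positivity) (by positivity)]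
    have hb := one_add_mul_self_le_rpow_one_add (s := -1 / ((K:ℝ)+1)) (p := α)
      (by rw [le_div_iff₀ hK1]; nlinarith [(Nat.cast_nonneg K : (0:ℝ) ≤ K)]) hα1.le
    have e : (K:ℝ) ^ α = ((K:ℝ)+1) ^ α * (1 + -1 / ((K:ℝ)+1)) ^ α := by
      rw [← Real.mul_rpow (by positivity)]
      · congr 1; field_simp; ring
      · have : 1 + -1 / ((K:ℝ)+1) = K / (K+1) := by field_simp; ring
        rw [this]; positivity
    have e2 : ((K:ℝ)+1) ^ (α - 1) = ((K:ℝ)+1) ^ α / (K+1) := by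
      rw [Real.rpow_sub hK1, Real.rpow_one]
    have hp : 0 < ((K:ℝ)+1) ^ α := by positivity
    rw [e, e2]
    have : ((K:ℝ)+1) ^ α * (1 + α * (-1 / ((K:ℝ)+1))) ≤ ((K:ℝ)+1) ^ α * (1 + -1 / ((K:ℝ)+1)) ^ α := by gcongr
    have h3 : ((K:ℝ)+1) ^ α - ((K:ℝ)+1) ^ α * (1 + -1 / ((K:ℝ)+1)) ^ α ≤ α * (((K:ℝ)+1) ^ α / (K+1)) := by
      have : ((K:ℝ)+1) ^ α * (1 + α * (-1 / ((K:ℝ)+1))) = ((K:ℝ)+1) ^ α - α * (((K:ℝ)+1) ^ α / (K+1)) := by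
        field_simp; ring
      linarith
    nlinarith [mul_le_mul_of_nonneg_left h3 hβα.le]
  have hge : 1 ≤ ((K:ℝ) + 1) ^ (α - 1) := Real.one_le_rpow (by linarith [(Nat.cast_nonneg K : (0:ℝ) ≤ K)]) (by linarith)
  set I := Finset.Icc ⌈A⌉ ⌊B⌋ with hI
  have hIc : (I.card : ℝ) ≤ B - A + 1 := by
    rw [hI, Int.card_Icc]
    have : (((⌊B⌋ + 1 - ⌈A⌉).toNat : ℤ) : ℝ) ≤ B - A + 1 := by
      rcases le_total 0 (⌊B⌋ + 1 - ⌈A⌉) with h | h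
      · rw [Int.toNat_of_nonneg h]; push_cast
        linarith [Int.floor_le B, Int.le_ceil A]
      · rw [Int.toNat_of_nonpos h]; push_cast; linarith
    exact_mod_cast this
  refine ⟨I ∪ I.image (fun z => -z), ?_, ?_⟩
  · intro m hm
    have hx : 0 ≤ β * |(m:ℝ)| ^ ν := by positivity
    have hl : (K:ℝ) ≤ β * |(m:ℝ)| ^ ν := by rw [← hm]; exact Nat.floor_le hx
    have hu : β * |(m:ℝ)| ^ ν < K + 1 := by rw [← hm]; exact Nat.lt_floor_add_one _
    have hpow : (β * |(m:ℝ)| ^ ν * β⁻¹) ^ α = |(m:ℝ)| := by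
      rw [mul_comm β, mul_assoc, mul_inv_cancel₀ hβ.ne', mul_one, hα, one_div, Real.rpow_rpow_inv (abs_nonneg _) h0.ne']
    have h1 : A ≤ |(m:ℝ)| := by
      rw [← hpow]; apply Real.rpow_le_rpow <;> first | positivity | skip
      gcongr
    have h2 : |(m:ℝ)| ≤ B := by
      rw [← hpow]; apply Real.rpow_le_rpow <;> first | positivity | skip
      gcongr
    have h3 : |m| ∈ I := by
      rw [hI, Finset.mem_Icc, Int.ceil_le, Int.le_floor]; push_cast; exact ⟨h1, h2⟩
    rw [Finset.mem_union, Finset.mem_image]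
    rcases abs_choice m with h | h
    · left; rwa [h] at h3
    · right; exact ⟨-m, by rwa [h] at h3, by simp⟩
  · have : (I ∪ I.image (fun z => -z)).card ≤ I.card + I.card :=
      (Finset.card_union_le _ _).trans (Nat.add_le_add_left Finset.card_image_le _)
    have : ((I ∪ I.image (fun z => -z)).card : ℝ) ≤ I.card + I.card := by exact_mod_cast this
    nlinarith

lemma countn : ∀ (n : ℕ) (ν β : Fin n → ℝ) (_ : ∀ s, ν s ∈ Set.Ioo (0 : ℝ) 1) (_ : ∀ s, 0 < β s),
    ∃ C > (0:ℝ), ∀ K : ℕ, ∃ s : Finset (Fin n → ℤ),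
      (∀ m : Fin n → ℤ, ∑ i, ⌊β i * |(m i:ℝ)| ^ ν i⌋₊ = K → m ∈ s) ∧
      (s.card : ℝ) ≤ C * ((K:ℝ) + 1) ^ (∑ i, 1 / ν i - 1) := by
  intro n
  induction n with
  | zero =>
    intro ν β _ _
    refine ⟨1, one_pos, fun K => ?_⟩
    rcases Nat.eq_zero_or_pos K with h | h
    · subst h
      exact ⟨Finset.univ, fun _ _ => Finset.mem_univ _, by simp⟩
    · refine ⟨∅, ?_, by simp; positivity⟩
      intro m hm; simp at hm; omega
  | succ n ih =>
    intro ν β hν hβ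
    obtain ⟨C1, hC1, h1⟩ := count1 (β 0) (ν 0) (hβ 0) (hν 0)
    obtain ⟨C2, hC2, h2⟩ := ih (fun i => ν i.succ) (fun i => β i.succ) (fun i => hν _) (fun i => hβ _)
    choose s1 hs1 hc1 using h1
    choose s2 hs2 hc2 using h2
    -- exponents
    have hν0 : 0 ≤ 1 / ν 0 - 1 := by
      rw [sub_nonneg, le_div_iff₀ (hν 0).1]; linarith [(hν 0).2]
    set q1 := 1 / ν 0 - 1 with hq1
    set q2 := ∑ i : Fin n, 1 / ν i.succ - 1 with hq2
    have hq : ∑ i, 1 / ν i - 1 = q1 + q2 + 1 := by rw [Fin.sum_univ_succ]; ring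
    rw [hq]
    by_cases hn : n = 0
    · subst hn
      have hq2' : q2 = -1 := by simp [hq2]
      refine ⟨C1, hC1, fun K => ⟨(s1 K).image (fun z => fun _ => z), ?_, ?_⟩⟩
      · intro m hm
        rw [Finset.mem_image]
        refine ⟨m 0, hs1 K _ (by simpa using hm), ?_⟩
        funext i; have : i = 0 := by omega
        rw [this]
      · have : q1 + q2 + 1 = q1 := by rw [hq2']; ring
        rw [this]
        refine le_trans ?_ (hc1 K)
        exact_mod_cast Finset.card_image_le
    have hq2n : 0 ≤ q2 := by
      have : (1:ℝ) ≤ ∑ i : Fin n, 1 / ν i.succ := by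
        calc (1:ℝ) ≤ n := by exact_mod_cast Nat.one_le_iff_ne_zero.mpr hn
          _ = ∑ i : Fin n, (1:ℝ) := by simp
          _ ≤ _ := by
            apply Finset.sum_le_sum; intro i _
            rw [le_div_iff₀ (hν _).1]; linarith [(hν i.succ).2]
      linarith
    refine ⟨C1 * C2, by positivity, fun K =>
      ⟨(Finset.HasAntidiagonal.antidiagonal K).biUnion (fun ij => ((s1 ij.1) ×ˢ (s2 ij.2)).image
        (fun z => (Fin.cons z.1 z.2 : Fin (n+1) → ℤ))), ?_, ?_⟩⟩
    · intro m hm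
      rw [Fin.sum_univ_succ] at hm
      rw [Finset.mem_biUnion]
      refine ⟨(⌊β 0 * |((m 0 : ℤ) : ℝ)| ^ ν 0⌋₊, ∑ i : Fin n, ⌊β i.succ * |(m i.succ : ℝ)| ^ ν i.succ⌋₊), Finset.HasAntidiagonal.mem_antidiagonal.2 hm, ?_⟩
      rw [Finset.mem_image]
      refine ⟨(m 0, fun i => m i.succ), ?_, ?_⟩
      · rw [Finset.mem_product]
        exact ⟨hs1 _ _ rfl, hs2 _ _ rfl⟩
      · exact Fin.cons_self_tail m
    · have hK : (0:ℝ) < (K:ℝ) + 1 := by positivity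
      calc _ ≤ ((∑ ij ∈ Finset.HasAntidiagonal.antidiagonal K, (s1 ij.1).card * (s2 ij.2).card : ℕ) : ℝ) := by
            norm_cast
            refine Finset.card_biUnion_le.trans (Finset.sum_le_sum fun ij _ => ?_)
            rw [← Finset.card_product]; exact Finset.card_image_le
        _ ≤ ∑ ij ∈ Finset.HasAntidiagonal.antidiagonal K, (C1 * C2 * ((K:ℝ)+1) ^ (q1 + q2)) := by
            push_cast
            refine Finset.sum_le_sum fun ij hij => ?_
            have hij := Finset.HasAntidiagonal.mem_antidiagonal.1 hij
            have ha : ((s1 ij.1).card : ℝ) ≤ C1 * ((K:ℝ)+1) ^ q1 := by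
              refine (hc1 _).trans ?_
              gcongr; omega
            have hb : ((s2 ij.2).card : ℝ) ≤ C2 * ((K:ℝ)+1) ^ q2 := by
              refine (hc2 _).trans ?_
              gcongr; omega
            calc _ ≤ (C1 * ((K:ℝ)+1) ^ q1) * (C2 * ((K:ℝ)+1) ^ q2) := by gcongr
              _ = _ := by rw [Real.rpow_add hK]; ring
        _ = _ := by
            rw [Finset.sum_const, Finset.Nat.card_antidiagonal, Real.rpow_add_one hK.ne']
            rw [nsmul_eq_mul]; push_cast; ring

lemma tailsum (n : ℕ) (hn : 1 ≤ n) (ν β : Fin n → ℝ) (hν : ∀ s, ν s ∈ Set.Ioo (0 : ℝ) 1)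
    (hβ : ∀ s, 0 < β s) :
    ∃ A > (0:ℝ), ∀ L : ℝ, 1 ≤ L →
      ∑' m : {m : Fin n → ℤ // L < ∑ s, β s * |(m s : ℝ)| ^ ν s},
        ENNReal.ofReal (Real.exp (-∑ s, β s * |((m : Fin n → ℤ) s : ℝ)| ^ ν s)) ≤
      ENNReal.ofReal (A * (Real.exp (-L) * L ^ (∑ s, 1 / ν s - 1))) := by
  obtain ⟨C, hC, hcount⟩ := countn n ν β hν hβ
  have hq : 0 ≤ ∑ s, 1 / ν s - 1 := by
    have : (1:ℝ) ≤ ∑ i : Fin n, 1 / ν i := by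
      calc (1:ℝ) ≤ n := by exact_mod_cast hn
        _ = ∑ i : Fin n, (1:ℝ) := by simp
        _ ≤ _ := by
          apply Finset.sum_le_sum; intro i _
          rw [le_div_iff₀ (hν _).1]; linarith [(hν i).2]
    linarith
  set q := ∑ s, 1 / ν s - 1 with hqdef
  set g : (Fin n → ℤ) → ℝ := fun m => ∑ s, β s * |(m s : ℝ)| ^ ν s with hg
  set H : (Fin n → ℤ) → ℕ := fun m => ∑ i, ⌊β i * |(m i:ℝ)| ^ ν i⌋₊ with hH
  have hHg : ∀ m, (H m : ℝ) ≤ g m := by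
    intro m; simp only [hH, hg]; push_cast
    refine Finset.sum_le_sum fun i _ => Nat.floor_le ?_
    have := hβ i; positivity
  have hgH : ∀ m, g m ≤ H m + n := by
    intro m; simp only [hH, hg]; push_cast
    calc _ ≤ ∑ i : Fin n, ((⌊β i * |(m i:ℝ)| ^ ν i⌋₊ : ℝ) + 1) :=
          Finset.sum_le_sum fun i _ => (Nat.lt_floor_add_one _).le
      _ = _ := by rw [Finset.sum_add_distrib]; simp
  -- the constant
  have hsum : Summable fun j : ℕ => ((j:ℝ) + 1) ^ q * Real.exp (-(j:ℝ)) := by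
    obtain ⟨k, hk⟩ := exists_nat_ge q
    have h1 := (summable_nat_add_iff 1).2 (Real.summable_pow_mul_exp_neg_nat_mul k zero_lt_one)
    have h2 := h1.mul_left (Real.exp 1)
    refine Summable.of_nonneg_of_le (fun j => by positivity) (fun j => ?_) h2
    have : ((j:ℝ)+1) ^ q ≤ ((j:ℝ)+1) ^ k := by
      rw [← Real.rpow_natCast]
      exact Real.rpow_le_rpow_of_exponent_le (by linarith [(Nat.cast_nonneg j : (0:ℝ) ≤ j)]) hk
    have e : Real.exp 1 * Real.exp (-1 * ((j + 1 : ℕ) : ℝ)) = Real.exp (-(j:ℝ)) := by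
      rw [← Real.exp_add]; congr 1; push_cast; ring
    calc _ ≤ ((j:ℝ)+1) ^ k * Real.exp (-(j:ℝ)) := by gcongr
      _ = _ := by rw [← e]; push_cast; ring
  set D := ∑' j : ℕ, ((j:ℝ) + 1) ^ q * Real.exp (-(j:ℝ)) with hD
  have hDpos : 0 < D := hsum.tsum_pos (fun j => by positivity) 0 (by positivity)
  refine ⟨C * (2 ^ q * Real.exp (n + 1)) * D, by positivity, fun L hL => ?_⟩
  set K0 := ⌊L⌋₊ - n with hK0
  -- step 1 : drop to full sum over H
  have s1 : ∑' m : {m : Fin n → ℤ // L < g m}, ENNReal.ofReal (Real.exp (-g m)) ≤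
      ∑' m : Fin n → ℤ, (if K0 ≤ H m then ENNReal.ofReal (Real.exp (-(H m : ℝ))) else 0) := by
    refine le_trans (ENNReal.tsum_le_tsum (g := fun m : {m : Fin n → ℤ // L < g m} =>
      (if K0 ≤ H m then ENNReal.ofReal (Real.exp (-(H m : ℝ))) else 0)) ?_)
      (ENNReal.tsum_comp_le_tsum_of_injective Subtype.val_injective _)
    rintro ⟨m, hm⟩
    have h1 : (⌊L⌋₊ : ℝ) ≤ L := Nat.floor_le (by linarith)
    have h2 : (⌊L⌋₊ : ℝ) ≤ H m + n := by linarith [hgH m]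
    have h3 : ⌊L⌋₊ ≤ H m + n := by exact_mod_cast h2
    have h4 : K0 ≤ H m := by omega
    simp only [h4, if_true]
    exact ENNReal.ofReal_le_ofReal (Real.exp_le_exp.2 (neg_le_neg (hHg m)))
  refine s1.trans ?_
  rw [← ENNReal.tsum_fiberwise _ H]
  have s2 : ∀ K : ℕ, ∑' m : (H ⁻¹' {K}), (if K0 ≤ H m then ENNReal.ofReal (Real.exp (-(H m : ℝ))) else 0)
      ≤ if K0 ≤ K then ENNReal.ofReal (C * ((K:ℝ)+1) ^ q * Real.exp (-(K:ℝ))) else 0 := by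
    intro K
    obtain ⟨s, hs, hcard⟩ := hcount K
    have : ∀ m : (H ⁻¹' {K}), (if K0 ≤ H m then ENNReal.ofReal (Real.exp (-(H m : ℝ))) else 0) =
        (if K0 ≤ K then ENNReal.ofReal (Real.exp (-(K : ℝ))) else 0) := by
      rintro ⟨m, hm⟩
      have : H m = K := hm
      simp only [this]
    simp_rw [this]
    split_ifs
    · have hsub : (H ⁻¹' {K}) ⊆ (s : Set (Fin n → ℤ)) := fun m hm => hs m hm
      calc _ ≤ ∑' m : (s : Set (Fin n → ℤ)), ENNReal.ofReal (Real.exp (-(K : ℝ))) :=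
            ENNReal.tsum_mono_subtype (fun _ => ENNReal.ofReal (Real.exp (-(K : ℝ)))) hsub
        _ = (s.card : ENNReal) * ENNReal.ofReal (Real.exp (-(K : ℝ))) := by
            rw [Finset.tsum_subtype' s (fun _ => ENNReal.ofReal (Real.exp (-(K : ℝ))))]
            simp
        _ = ENNReal.ofReal (s.card * Real.exp (-(K : ℝ))) := by
            rw [ENNReal.ofReal_mul (by positivity), ENNReal.ofReal_natCast]
        _ ≤ _ := by
            apply ENNReal.ofReal_le_ofReal; gcongr
    · simp
  refine (ENNReal.tsum_le_tsum s2).trans ?_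
  have hinj : Function.Injective (fun j : ℕ => K0 + j) := fun a b h => by simpa using h
  rw [← hinj.tsum_eq]
  swap
  · intro K hK
    rw [Function.mem_support] at hK
    by_cases h : K0 ≤ K
    · exact ⟨K - K0, by simp [h]⟩
    · simp [h] at hK
  have hLK : L - (n + 1) ≤ K0 := by
    have h1 := Nat.lt_floor_add_one L
    have h2 : ⌊L⌋₊ ≤ K0 + n := by omega
    have h3 : (⌊L⌋₊ : ℝ) ≤ K0 + n := by exact_mod_cast h2
    linarith
  have hKL : (K0 : ℝ) ≤ L := by
    have h1 : (⌊L⌋₊ : ℝ) ≤ L := Nat.floor_le (by linarith)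
    have h2 : K0 ≤ ⌊L⌋₊ := by omega
    have h3 : (K0 : ℝ) ≤ ⌊L⌋₊ := by exact_mod_cast h2
    linarith
  have e : C * (2 ^ q * Real.exp (n + 1)) * D * (Real.exp (-L) * L ^ q) =
      ∑' j : ℕ, (C * (2 ^ q * Real.exp (n + 1)) * (Real.exp (-L) * L ^ q)) * (((j:ℝ) + 1) ^ q * Real.exp (-(j:ℝ))) := by
    rw [tsum_mul_left]; ring
  rw [e, ENNReal.ofReal_tsum_of_nonneg (fun j => by positivity) (hsum.mul_left _)]
  refine ENNReal.tsum_le_tsum fun j => ?_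
  simp only [Nat.le_add_right, if_true]
  apply ENNReal.ofReal_le_ofReal
  have h1 : (((K0 + j : ℕ) : ℝ) + 1) ^ q ≤ (2 * L) ^ q * ((j:ℝ)+1) ^ q := by
    rw [← Real.mul_rpow (by positivity) (by positivity)]
    apply Real.rpow_le_rpow (by positivity) _ hq
    push_cast
    nlinarith [(Nat.cast_nonneg j : (0:ℝ) ≤ j)]
  have h2 : Real.exp (-((K0 + j : ℕ) : ℝ)) ≤ Real.exp (n+1) * Real.exp (-L) * Real.exp (-(j:ℝ)) := by
    rw [← Real.exp_add, ← Real.exp_add]; apply Real.exp_le_exp.2; push_cast; linarith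
  calc _ ≤ C * ((2 * L) ^ q * ((j:ℝ)+1) ^ q) * (Real.exp (n+1) * Real.exp (-L) * Real.exp (-(j:ℝ))) := by gcongr
    _ = _ := by rw [Real.mul_rpow (by positivity) (by positivity)]; ring

/-- the exponential with frequency m -/
noncomputable def chr (n P : ℕ) (m : Fin n → ℤ) (x : Fin n → ℝ) : ℂ :=
  Complex.exp (2 * Real.pi * Complex.I * ((∑ k, (m k : ℝ) * x k) / P : ℝ))

lemma chr_norm (n P : ℕ) (m : Fin n → ℤ) (x : Fin n → ℝ) : ‖chr n P m x‖ = 1 := by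
  unfold chr
  have : (2 * Real.pi * Complex.I * ((∑ k, (m k : ℝ) * x k) / P : ℝ) : ℂ) =
    ((2 * Real.pi * ((∑ k, (m k : ℝ) * x k) / P) : ℝ) : ℂ) * Complex.I := by push_cast; ring
  rw [this, Complex.norm_exp_ofReal_mul_I]

lemma chr_mul_conj (n P : ℕ) (m m' : Fin n → ℤ) (x : Fin n → ℝ) :
    chr n P m x * (starRingEnd ℂ) (chr n P m' x) = chr n P (m - m') x := by
  unfold chr
  rw [← Complex.exp_conj, ← Complex.exp_add]
  congr 1
  simp only [map_mul, Complex.conj_ofReal, Complex.conj_I, map_ofNat, Pi.sub_apply]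
  push_cast
  simp only [sub_mul, Finset.sum_sub_distrib]
  ring

lemma chr_cont (n P : ℕ) (m : Fin n → ℤ) : Continuous (chr n P m) := by
  unfold chr; fun_prop

lemma chr1 (P : ℕ) (hP : 1 ≤ P) (k : ℤ) :
    ∫ x in Set.Icc (-((P:ℝ)/2)) ((P:ℝ)/2), Complex.exp ((2 * Real.pi * Complex.I * k / P) * (x:ℂ)) =
      if k = 0 then (P:ℂ) else 0 := by
  have hP0 : (0:ℝ) < P := by exact_mod_cast hP
  have hPc : (P:ℂ) ≠ 0 := by exact_mod_cast hP0.ne'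
  rw [integral_Icc_eq_integral_Ioc, ← intervalIntegral.integral_of_le (by linarith)]
  split_ifs with h
  · subst h; simp
  · have hk : (k:ℂ) ≠ 0 := by exact_mod_cast h
    have hc : (2 * Real.pi * Complex.I * k / P : ℂ) ≠ 0 := by
      have : (Real.pi : ℂ) ≠ 0 := by exact_mod_cast Real.pi_ne_zero
      have := Complex.I_ne_zero
      simp_all
    rw [integral_exp_mul_complex hc, div_eq_zero_iff]
    left
    rw [sub_eq_zero, Complex.exp_eq_exp_iff_exists_int]
    refine ⟨k, ?_⟩
    push_cast
    field_simp
    ring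

lemma chr_int (n P : ℕ) (hP : 1 ≤ P) (m : Fin n → ℤ) :
    ∫ x in {x : Fin n → ℝ | ∀ k, |x k| ≤ (P : ℝ) / 2}, chr n P m x =
      if m = 0 then (P:ℂ) ^ n else 0 := by
  have hset : {x : Fin n → ℝ | ∀ k, |x k| ≤ (P : ℝ) / 2} =
      Set.univ.pi (fun _ => Set.Icc (-((P:ℝ)/2)) ((P:ℝ)/2)) := by
    ext x; simp only [Set.mem_setOf_eq, Set.mem_pi, Set.mem_univ, true_implies, Set.mem_Icc, abs_le]
  have hprod : ∀ x, chr n P m x = ∏ k, Complex.exp ((2 * Real.pi * Complex.I * (m k) / P) * (x k:ℂ)) := by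
    intro x
    rw [← Complex.exp_sum]; unfold chr; congr 1
    push_cast
    rw [Finset.sum_div, Finset.mul_sum]
    refine Finset.sum_congr rfl fun k _ => ?_
    ring
  simp_rw [hprod]
  rw [hset, volume_pi, Measure.restrict_pi_pi,
    integral_fintype_prod_eq_prod (fun k (y:ℝ) => Complex.exp ((2 * Real.pi * Complex.I * (m k) / P) * (y:ℂ)))]
  simp_rw [chr1 P hP]
  split_ifs with h
  · subst h; simp
  · obtain ⟨k, hk⟩ := Function.ne_iff.1 h
    exact Finset.prod_eq_zero (Finset.mem_univ k) (if_neg (by simpa using hk))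

lemma cube_finite (n P : ℕ) : IsFiniteMeasure
    ((volume : Measure (Fin n → ℝ)).restrict {x : Fin n → ℝ | ∀ k, |x k| ≤ (P : ℝ) / 2}) := by
  have hset : {x : Fin n → ℝ | ∀ k, |x k| ≤ (P : ℝ) / 2} =
      Set.univ.pi (fun _ => Set.Icc (-((P:ℝ)/2)) ((P:ℝ)/2)) := by
    ext x; simp only [Set.mem_setOf_eq, Set.mem_pi, Set.mem_univ, true_implies, Set.mem_Icc, abs_le]
  rw [hset]
  have : IsCompact (Set.univ.pi (fun _ : Fin n => Set.Icc (-((P:ℝ)/2)) ((P:ℝ)/2))) :=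
    isCompact_univ_pi fun _ => isCompact_Icc
  exact ⟨by rw [Measure.restrict_apply_univ]; exact this.measure_lt_top⟩

lemma l2 (n P : ℕ) (hP : 1 ≤ P) {ι : Type} [Countable ι] (φ : ι → (Fin n → ℤ))
    (hφ : Function.Injective φ) (a : ι → ℂ) (ha : Summable fun i => ‖a i‖) :
    ∫⁻ x in {x : Fin n → ℝ | ∀ k, |x k| ≤ (P : ℝ) / 2}, ‖∑' i, a i * chr n P (φ i) x‖ₑ ^ (2:ℝ) =
      ENNReal.ofReal (P ^ n * ∑' i, ‖a i‖ ^ 2) := by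
  set μ := (volume : Measure (Fin n → ℝ)).restrict {x : Fin n → ℝ | ∀ k, |x k| ≤ (P : ℝ) / 2} with hμ
  haveI : IsFiniteMeasure μ := cube_finite n P
  have hn : ∀ i x, ‖a i * chr n P (φ i) x‖ = ‖a i‖ := fun i x => by rw [norm_mul, chr_norm, mul_one]
  have hcont : Continuous fun x => ∑' i, a i * chr n P (φ i) x :=
    continuous_tsum (fun i => continuous_const.mul (chr_cont n P (φ i))) ha (fun i x => (hn i x).le)
  have hbd : ∀ x, ‖∑' i, a i * chr n P (φ i) x‖ ≤ ∑' i, ‖a i‖ := fun x =>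
    tsum_of_norm_bounded ha.hasSum (fun i => (hn i x).le)
  set G : ι × ι → (Fin n → ℝ) → ℂ := fun ij x =>
    (a ij.1 * (starRingEnd ℂ) (a ij.2)) * chr n P (φ ij.1 - φ ij.2) x with hG
  have hsq : ∀ x, ((‖∑' i, a i * chr n P (φ i) x‖ ^ 2 : ℝ) : ℂ) = ∑' ij, G ij x := by
    intro x
    push_cast
    rw [← Complex.mul_conj', Complex.conj_tsum,
      tsum_mul_tsum_of_summable_norm (by simpa only [hn] using ha)
        (by simpa only [RCLike.norm_conj, hn] using ha)]
    refine tsum_congr fun ij => ?_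
    simp only [hG, map_mul, ← chr_mul_conj]
    ring
  have hGn : ∀ ij x, ‖G ij x‖ = ‖a ij.1‖ * ‖a ij.2‖ := fun ij x => by
    simp only [hG, norm_mul, chr_norm, RCLike.norm_conj, mul_one]
  have hprodsum : Summable fun ij : ι × ι => ‖a ij.1‖ * ‖a ij.2‖ :=
    ha.mul_of_nonneg ha (fun _ => norm_nonneg _) (fun _ => norm_nonneg _)
  have hGint : ∀ ij, Integrable (G ij) μ := fun ij =>
    Integrable.of_bound (continuous_const.mul (chr_cont n P _)).aestronglyMeasurable
      (‖a ij.1‖ * ‖a ij.2‖) (Filter.Eventually.of_forall fun x => (hGn ij x).le)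
  have hs := hasSum_integral_of_summable_integral_norm hGint (by
    simp_rw [hGn]; simp only [integral_const]
    exact hprodsum.const_smul _)
  have hval : ∀ ij : ι × ι, ∫ x, G ij x ∂μ = (a ij.1 * (starRingEnd ℂ) (a ij.2)) *
      (if φ ij.1 - φ ij.2 = 0 then (P:ℂ) ^ n else 0) := by
    intro ij
    simp only [hG]
    rw [integral_const_mul, hμ, chr_int n P hP]
  have hI : ((∫ x, ‖∑' i, a i * chr n P (φ i) x‖ ^ 2 ∂μ : ℝ) : ℂ) = ((P ^ n * ∑' i, ‖a i‖ ^ 2 : ℝ) : ℂ) := by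
    rw [← integral_complex_ofReal]
    simp_rw [hsq]
    rw [← hs.tsum_eq, hs.summable.tsum_prod]
    push_cast
    rw [← tsum_mul_left]
    refine tsum_congr fun i => ?_
    rw [tsum_eq_single i]
    · rw [hval]; simp only [sub_self, if_true, Complex.mul_conj']; ring
    · intro j hj
      rw [hval, if_neg, mul_zero]
      rw [sub_eq_zero]; exact fun h => hj (hφ h).symm
  rw [← Complex.ofReal_inj.1 hI, ofReal_integral_eq_lintegral_ofReal]
  · refine lintegral_congr fun x => ?_
    rw [← ofReal_norm_eq_enorm, ENNReal.ofReal_rpow_of_nonneg (norm_nonneg _) (by norm_num)]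
    norm_num
  · refine Integrable.of_bound (hcont.norm.pow 2).aestronglyMeasurable
      ((∑' i, ‖a i‖) ^ 2) (Filter.Eventually.of_forall fun x => ?_)
    rw [Real.norm_of_nonneg (by positivity)]
    gcongr; exact hbd x
  · exact Filter.Eventually.of_forall fun x => by positivity

theorem tail_sum_Lp_estimate
    (n : ℕ) (hn : 1 ≤ n) (P : ℕ) (hP : 1 ≤ P)
    (ν β : Fin n → ℝ) (hν : ∀ s, ν s ∈ Set.Ioo (0 : ℝ) 1) (hβ : ∀ s, 0 < β s)
    (c : (Fin n → ℤ) → ℂ)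
    (hc : ∀ m : Fin n → ℤ, ‖c m‖ ≤ Real.exp (-∑ s, β s * |(m s : ℝ)| ^ ν s))
    (p p' : ℝ≥0∞) (hp : 2 ≤ p) (hpp' : 1 / p + 1 / p' = 1) :
    ∃ C > (0 : ℝ), ∃ R₀ > (1 : ℝ), ∀ R ≥ R₀,
      eLpNorm
        (fun x : Fin n → ℝ =>
          (((P : ℝ) ^ n)⁻¹ : ℝ) *
            ∑' m : {m : Fin n → ℤ // Real.log R < ∑ s, β s * |(m s : ℝ)| ^ ν s},
              c m * Complex.exp (2 * Real.pi * Complex.I *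
                ((∑ k, ((m : Fin n → ℤ) k : ℝ) * x k) / P : ℝ)))
        p (volume.restrict {x : Fin n → ℝ | ∀ k, |x k| ≤ (P : ℝ) / 2})
      ≤ ENNReal.ofReal
          (C * R⁻¹ * Real.log R ^ ((∑ s, 1 / ν s - 1) / p'.toReal)) := by

  obtain ⟨A, hA, htail⟩ := tailsum n hn ν β hν hβ
  have hP0 : (1:ℝ) ≤ P := by exact_mod_cast hP
  have hPn : (1:ℝ) ≤ (P:ℝ) ^ n := one_le_pow₀ hP0
  refine ⟨A ^ (1 / p'.toReal), by positivity, Real.exp 1, by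
    rw [gt_iff_lt, Real.one_lt_exp_iff]; norm_num, fun R hR => ?_⟩
  have hR0 : 0 < R := lt_of_lt_of_le (Real.exp_pos 1) hR
  have hL1 : 1 ≤ Real.log R := by rw [Real.le_log_iff_exp_le hR0]; exact hR
  have hexp : Real.exp (-Real.log R) = R⁻¹ := by rw [Real.exp_neg, Real.exp_log hR0]
  set L := Real.log R with hLdef
  set q := ∑ s, 1 / ν s - 1 with hq
  have hLq : 0 < L ^ q := by positivity
  set S : ℝ := A * (R⁻¹ * L ^ q) with hS
  have hS0 : 0 < S := by positivity
  set ι := {m : Fin n → ℤ // L < ∑ s, β s * |(m s : ℝ)| ^ ν s} with hι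
  have ht := htail L hL1
  rw [hexp] at ht
  -- summability
  have hsumE : Summable fun m : ι => Real.exp (-∑ s, β s * |((m : Fin n → ℤ) s : ℝ)| ^ ν s) := by
    have h1 : ∑' m : ι, ENNReal.ofReal (Real.exp (-∑ s, β s * |((m : Fin n → ℤ) s : ℝ)| ^ ν s)) ≠ ⊤ :=
      ne_top_of_le_ne_top ENNReal.ofReal_ne_top ht
    have h2 := ENNReal.summable_toReal h1
    refine h2.congr fun m => ?_
    rw [ENNReal.toReal_ofReal (Real.exp_pos _).le]
  have hSle : ∑' m : ι, Real.exp (-∑ s, β s * |((m : Fin n → ℤ) s : ℝ)| ^ ν s) ≤ S := by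
    rw [← ENNReal.ofReal_tsum_of_nonneg (fun m => (Real.exp_pos _).le) hsumE] at ht
    exact (ENNReal.ofReal_le_ofReal_iff hS0.le).1 ht
  have hsumc : Summable fun m : ι => ‖c m‖ :=
    Summable.of_nonneg_of_le (fun _ => norm_nonneg _) (fun m => hc m) hsumE
  have hcS : ∑' m : ι, ‖c m‖ ≤ S := (Summable.tsum_le_tsum (fun m : ι => hc m) hsumc hsumE).trans hSle
  have hcR : ∀ m : ι, ‖c m‖ ≤ R⁻¹ := fun m => by
    refine (hc m).trans ?_
    rw [← hexp]
    exact Real.exp_le_exp.2 (neg_le_neg m.2.le)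
  have hc2 : ∑' m : ι, ‖c m‖ ^ 2 ≤ R⁻¹ * S := by
    have hle : ∀ m : ι, ‖c m‖ ^ 2 ≤ R⁻¹ * ‖c m‖ := fun m => by
      rw [sq]; exact mul_le_mul_of_nonneg_right (hcR m) (norm_nonneg _)
    have hs2 : Summable fun m : ι => ‖c m‖ ^ 2 :=
      Summable.of_nonneg_of_le (fun _ => by positivity) hle (hsumc.mul_left _)
    refine (Summable.tsum_le_tsum hle hs2 (hsumc.mul_left _)).trans ?_
    rw [tsum_mul_left]; gcongr
  set F : (Fin n → ℝ) → ℂ := fun x => ∑' m : ι, c m * chr n P m x with hF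
  have hFb : ∀ x, ‖F x‖ ≤ S := fun x =>
    (tsum_of_norm_bounded hsumc.hasSum (fun m => by rw [norm_mul, chr_norm, mul_one])).trans hcS
  have hl2 := l2 n P hP (fun m : ι => (m : Fin n → ℤ)) Subtype.val_injective (fun m => c m) hsumc
  change eLpNorm (fun x => ((((P : ℝ) ^ n)⁻¹ : ℝ) : ℂ) * F x) p _ ≤ _
  set μ := (volume : Measure (Fin n → ℝ)).restrict {x : Fin n → ℝ | ∀ k, |x k| ≤ (P : ℝ) / 2} with hμ
  set f : (Fin n → ℝ) → ℂ := fun x => ((((P : ℝ) ^ n)⁻¹ : ℝ) : ℂ) * F x with hf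
  have hPi : ((P:ℝ) ^ n)⁻¹ ≤ 1 := inv_le_one_of_one_le₀ hPn
  have hfn : ∀ x, ‖f x‖ = ((P:ℝ) ^ n)⁻¹ * ‖F x‖ := fun x => by
    simp only [hf]; rw [norm_mul, Complex.norm_real, Real.norm_of_nonneg (by positivity)]
  have hfb : ∀ x, ‖f x‖ ≤ S := fun x => by
    rw [hfn]
    calc _ ≤ 1 * ‖F x‖ := by gcongr
      _ ≤ S := by rw [one_mul]; exact hFb x
  have hf2 : ∫⁻ x, ‖f x‖ₑ ^ (2:ℝ) ∂μ ≤ ENNReal.ofReal (R⁻¹ * S) := by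
    have : ∀ x, ‖f x‖ₑ ^ (2:ℝ) = ENNReal.ofReal ((((P:ℝ) ^ n)⁻¹) ^ 2) * ‖F x‖ₑ ^ (2:ℝ) := fun x => by
      rw [← ofReal_norm_eq_enorm, ← ofReal_norm_eq_enorm, hfn, ENNReal.ofReal_mul (by positivity),
        ENNReal.mul_rpow_of_nonneg _ _ (by norm_num), ENNReal.ofReal_pow (by positivity)]
      norm_num
    simp_rw [this]
    rw [lintegral_const_mul' _ _ ENNReal.ofReal_ne_top]
    change _ * ∫⁻ x, ‖∑' m : ι, c m * chr n P m x‖ₑ ^ (2:ℝ) ∂μ ≤ _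
    rw [hl2, ← ENNReal.ofReal_mul (by positivity)]
    apply ENNReal.ofReal_le_ofReal
    have hT : 0 ≤ ∑' m : ι, ‖c m‖ ^ 2 := tsum_nonneg fun _ => by positivity
    calc (((P:ℝ) ^ n)⁻¹) ^ 2 * ((P:ℝ) ^ n * ∑' m : ι, ‖c m‖ ^ 2)
        = ((P:ℝ) ^ n)⁻¹ * ∑' m : ι, ‖c m‖ ^ 2 := by field_simp
      _ ≤ 1 * ∑' m : ι, ‖c m‖ ^ 2 := by gcongr
      _ ≤ _ := by rw [one_mul]; exact hc2
  by_cases hptop : p = ⊤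
  · subst hptop
    have hp1 : p' = 1 := by simpa using hpp'
    subst hp1
    rw [eLpNorm_exponent_top]
    refine (eLpNormEssSup_le_of_ae_enorm_bound (C := ENNReal.ofReal S)
      (Filter.Eventually.of_forall fun x => ?_)).trans (le_of_eq ?_)
    · rw [← ofReal_norm_eq_enorm]; exact ENNReal.ofReal_le_ofReal (hfb x)
    · congr 1; simp [hS]; ring
  · have hp0 : p ≠ 0 := by
      intro h; rw [h] at hp; simp at hp
    set r := p.toReal with hr
    have hr2 : 2 ≤ r := by
      have := ENNReal.toReal_mono hptop hp
      simpa using this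
    have hpinv : 1 / p'.toReal = 1 - 1 / r := by
      have h := congrArg ENNReal.toReal hpp'
      have hp'0 : 1 / p' ≠ ⊤ := fun h => by rw [h] at hpp'; simp at hpp'
      rw [ENNReal.toReal_add (by simp [hp0]) hp'0] at h
      simp only [ENNReal.toReal_div, ENNReal.toReal_one] at h
      linarith
    have hrp : 0 < r := by linarith
    rw [eLpNorm_eq_lintegral_rpow_enorm_toReal hp0 hptop]
    have hint : ∫⁻ x, ‖f x‖ₑ ^ r ∂μ ≤ ENNReal.ofReal (S ^ (r - 2) * (R⁻¹ * S)) := by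
      calc _ ≤ ∫⁻ x, ENNReal.ofReal (S ^ (r - 2)) * ‖f x‖ₑ ^ (2:ℝ) ∂μ := by
            refine lintegral_mono fun x => ?_
            have : ‖f x‖ₑ ^ r = ‖f x‖ₑ ^ (r - 2) * ‖f x‖ₑ ^ (2:ℝ) := by
              rw [← ENNReal.rpow_add_of_nonneg _ _ (by linarith) (by norm_num)]
              congr 1; ring
            rw [this]
            gcongr
            rw [← ENNReal.ofReal_rpow_of_nonneg hS0.le (by linarith)]
            refine ENNReal.rpow_le_rpow ?_ (by linarith)
            rw [← ofReal_norm_eq_enorm]; exact ENNReal.ofReal_le_ofReal (hfb x)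
        _ = ENNReal.ofReal (S ^ (r - 2)) * ∫⁻ x, ‖f x‖ₑ ^ (2:ℝ) ∂μ :=
            lintegral_const_mul' _ _ ENNReal.ofReal_ne_top
        _ ≤ ENNReal.ofReal (S ^ (r - 2)) * ENNReal.ofReal (R⁻¹ * S) := by gcongr
        _ = _ := (ENNReal.ofReal_mul (by positivity)).symm
    refine (ENNReal.rpow_le_rpow hint (by positivity)).trans (le_of_eq ?_)
    rw [ENNReal.ofReal_rpow_of_nonneg (by positivity) (by positivity)]
    congr 1
    have hRi : 0 < R⁻¹ := by positivity
    have e1 : S ^ (r - 2) * (R⁻¹ * S) = S ^ (r - 1) * R⁻¹ := by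
      have : r - 1 = (r - 2) + 1 := by ring
      rw [this, Real.rpow_add_one hS0.ne']; ring
    have hd : q / p'.toReal = q * (1 - 1 / r) := by rw [← hpinv]; ring
    rw [e1, Real.mul_rpow (by positivity) hRi.le, ← Real.rpow_mul hS0.le, hd, hpinv]
    have : (r - 1) * (1 / r) = 1 - 1 / r := by field_simp
    rw [this, hS, Real.mul_rpow hA.le (by positivity), Real.mul_rpow hRi.le hLq.le,
      ← Real.rpow_mul (by linarith : 0 ≤ L)]
    have hRR : R⁻¹ ^ (1 - 1 / r) * R⁻¹ ^ (1 / r) = R⁻¹ := by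
      rw [← Real.rpow_add hRi]; simp
    calc _ = A ^ (1 - 1 / r) * (R⁻¹ ^ (1 - 1 / r) * R⁻¹ ^ (1 / r)) * L ^ (q * (1 - 1 / r)) := by ring
      _ = _ := by rw [hRR]
end

section
/- Let n ≥ 1, P ≥ 1 an integer, and let p : ℝⁿ → ℝ be a continuous probability density (p ≥ 0, ∫ p = 1) with characteristic function Φ(v) = ∫_{ℝⁿ} e^{i⟨v,x⟩} p(x) dx. Suppose: (i) there exist A > 0 and δ > 0 with p(x) ≤ A(1 + ‖x‖)^{−n−δ} and |Φ(v)| ≤ A(1 + ‖v‖)^{−n−δ} for all x, v; (ii) ε > 0 satisfies Σ_{m ∈ ℤⁿ, m ≠ 0} p(x + Pm) ≤ ε for all x ∈ [−P/2, P/2]ⁿ; (iii) there are ν₁, …, νₙ ∈ (0,1) and β₁, …, βₙ > 0 with |Φ(−2πm/P)| ≤ exp( −Σ_{s=1}^n β_s |m_s|^{ν_s} ) for all m ∈ ℤⁿ. Let 2 ≤ q ≤ ∞ with conjugate exponent q' (1/q + 1/q' = 1). Then there exist C > 0 and R₀ > 1 such that for all R ≥ R₀: ‖ p(x) − P^{−n}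 Σ_{m ∈ ℤⁿ : Σ_s β_s |m_s|^{ν_s} ≤ ln R} Φ(−2πm/P) e^{2πi⟨m,x⟩/P} ‖_{L^q([−P/2,P/2]ⁿ)} ≤ ε P^{n/q} + C R^{−1} (ln R)^{(Σ_{s=1}^n 1/ν_s − 1)/q'} (with P^{n/q} interpreted as 1 when q = ∞). -/
open MeasureTheory Complex
open scoped ENNReal

/-- integer vector as a real vector -/
noncomputable def dtfaCast {n : ℕ} (m : Fin n → ℤ) : Fin n → ℝ := fun k => (m k : ℝ)

def dtfaQ (n : ℕ) : Set (Fin n → ℝ) := {x | ∀ i, x i ∈ Set.Ioc (-1 : ℝ) (-1 + 1)}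

lemma dtfaQ_meas (n : ℕ) : MeasurableSet (dtfaQ n) :=
  MeasurableSet.univ_pi' (fun _ => measurableSet_Ioc)

lemma dtfaQ_vol (n : ℕ) : volume (dtfaQ n) = 1 := by
  have : dtfaQ n = Set.univ.pi (fun _ => Set.Ioc (-1 : ℝ) (-1 + 1)) := by
    ext x; simp [dtfaQ]
  rw [this, volume_pi_pi]
  simp

def dtfaBox {n : ℕ} (m : Fin n → ℤ) : Set (Fin n → ℝ) := {x | x - dtfaCast m ∈ dtfaQ n}

lemma dtfaBox_meas {n : ℕ} (m : Fin n → ℤ) : MeasurableSet (dtfaBox m) := by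
  have : Measurable (fun x : Fin n → ℝ => x - dtfaCast m) := by fun_prop
  exact this (dtfaQ_meas n)

lemma dtfaBox_iff {n : ℕ} (m : Fin n → ℤ) (x : Fin n → ℝ) :
    x ∈ dtfaBox m ↔ (fun k => ⌈x k⌉) = m := by
  simp only [dtfaBox, dtfaQ, dtfaCast, Set.mem_ofPred_eq, Pi.sub_apply, Set.mem_Ioc, funext_iff]
  refine forall_congr' fun k => ?_
  rw [Int.ceil_eq_iff]
  constructor <;> rintro ⟨h1, h2⟩ <;> constructor <;> linarith

lemma dtfaBox_disj {n : ℕ} : Pairwise (Function.onFun Disjoint (dtfaBox (n := n))) := by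
  intro m m' h
  rw [Function.onFun, Set.disjoint_left]
  intro x hx hx'
  rw [dtfaBox_iff] at hx hx'
  exact h (hx.symm.trans hx')

lemma dtfaBox_union {n : ℕ} : (⋃ m, dtfaBox (n := n) m) = Set.univ := by
  ext x; simp [dtfaBox_iff]

lemma dtfa_map {n : ℕ} (m : Fin n → ℤ) :
    MeasurePreserving (fun x : Fin n → ℝ => x + dtfaCast m) (volume.restrict (dtfaQ n))
      (volume.restrict (dtfaBox m)) := by
  have h := (measurePreserving_add_right (volume : Measure (Fin n → ℝ)) (dtfaCast m))
  have := h.restrict_preimage (dtfaBox_meas m)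
  convert! this using 2
  ext x; simp [dtfaBox]

lemma dtfa_emb {n : ℕ} (m : Fin n → ℤ) :
    MeasurableEmbedding (fun x : Fin n → ℝ => x + dtfaCast m) :=
  (Homeomorph.addRight (dtfaCast m)).measurableEmbedding

lemma dtfa_lintegral {n : ℕ} (f : (Fin n → ℝ) → ℝ≥0∞) :
    ∫⁻ x, f x = ∑' m : Fin n → ℤ, ∫⁻ x in dtfaQ n, f (x + dtfaCast m) := by
  rw [← setLIntegral_univ, ← dtfaBox_union, lintegral_iUnion dtfaBox_meas dtfaBox_disj]
  refine tsum_congr fun m => ?_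
  rw [(dtfa_map m).lintegral_comp_emb (dtfa_emb m)]

lemma dtfa_hasSum {n : ℕ} (f : (Fin n → ℝ) → ℂ) (hf : Integrable f) :
    HasSum (fun m : Fin n → ℤ => ∫ x in dtfaQ n, f (x + dtfaCast m)) (∫ x, f x) := by
  rw [← setIntegral_univ, ← dtfaBox_union]
  convert! hasSum_integral_iUnion dtfaBox_meas dtfaBox_disj hf.integrableOn using 2 with m
  exact (dtfa_map m).integral_comp (dtfa_emb m) f

lemma dtfaCast_norm {n : ℕ} (m : Fin n → ℤ) : ‖dtfaCast m‖ = ‖m‖ := by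
  have : ∀ b, ‖((m b : ℤ) : ℝ)‖₊ = ‖m b‖₊ := fun b => NNReal.eq (Int.norm_cast_real (m b))
  simp [dtfaCast, Pi.norm_def, this]

lemma dtfaQ_norm {n : ℕ} {x : Fin n → ℝ} (hx : x ∈ dtfaQ n) : ‖x‖ ≤ 1 := by
  rw [pi_norm_le_iff_of_nonneg zero_le_one]
  intro i
  have := hx i
  rw [Real.norm_eq_abs, abs_le]
  constructor <;> linarith [this.1, this.2]

lemma dtfa_rpow_shift {n : ℕ} {r N : ℝ} (hr : 0 ≤ r) {x y : Fin n → ℝ} (hx : ‖x‖ ≤ N) :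
    (1 + ‖x + y‖) ^ (-r) ≤ (1 + N) ^ r * (1 + ‖y‖) ^ (-r) := by
  have hN : 0 ≤ N := (norm_nonneg _).trans hx
  have h1 : 1 + ‖y‖ ≤ (1 + N) * (1 + ‖x + y‖) := by
    have : ‖y‖ ≤ ‖x + y‖ + ‖x‖ := by
      simpa using norm_sub_le (x + y) x
    nlinarith [norm_nonneg (x + y)]
  have h2 : ((1 + N) * (1 + ‖x + y‖)) ^ (-r) ≤ (1 + ‖y‖) ^ (-r) :=
    Real.rpow_le_rpow_of_nonpos (by positivity) h1 (by linarith)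
  rw [Real.mul_rpow (by positivity) (by positivity)] at h2
  calc _ = (1 + N) ^ r * ((1 + N) ^ (-r) * (1 + ‖x + y‖) ^ (-r)) := by
        rw [← mul_assoc, ← Real.rpow_add (by positivity)]; simp
    _ ≤ _ := by gcongr

lemma dtfa_summable {n : ℕ} {r : ℝ} (hr : (n : ℝ) < r) :
    Summable (fun m : Fin n → ℤ => (1 + ‖m‖) ^ (-r)) := by
  have hr0 : 0 ≤ r := (Nat.cast_nonneg n).trans hr.le
  have hi : Integrable (fun x : Fin n → ℝ => (1 + ‖x‖) ^ (-r)) :=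
    integrable_one_add_norm (by simpa using hr)
  have h1 : ∫⁻ x : Fin n → ℝ, ENNReal.ofReal ((1 + ‖x‖) ^ (-r)) ≠ ∞ :=
    hi.lintegral_lt_top.ne
  rw [dtfa_lintegral] at h1
  have h2 : ∀ m : Fin n → ℤ, ENNReal.ofReal ((1 + ‖m‖) ^ (-r)) ≤ ENNReal.ofReal ((1 + 1) ^ r) *
      ∫⁻ x in dtfaQ n, ENNReal.ofReal ((1 + ‖x + dtfaCast m‖) ^ (-r)) := by
    intro m
    rw [← lintegral_const_mul' _ _ ENNReal.ofReal_ne_top]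
    calc _ = ∫⁻ x in dtfaQ n, ENNReal.ofReal ((1 + ‖m‖) ^ (-r)) := by
          rw [setLIntegral_const, dtfaQ_vol, mul_one]
      _ ≤ _ := by
          refine setLIntegral_mono' (dtfaQ_meas n) fun x hx => ?_
          rw [← ENNReal.ofReal_mul (by positivity)]
          apply ENNReal.ofReal_le_ofReal
          have := dtfa_rpow_shift hr0 (x := -x) (y := x + dtfaCast m) (N := 1)
            (by simpa using dtfaQ_norm hx)
          simpa [dtfaCast_norm] using this
  have h3 : ∑' m : Fin n → ℤ, ENNReal.ofReal ((1 + ‖m‖) ^ (-r)) ≠ ∞ := by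
    refine ne_top_of_le_ne_top ?_ (ENNReal.tsum_le_tsum h2)
    rw [ENNReal.tsum_mul_left]
    exact ENNReal.mul_ne_top ENNReal.ofReal_ne_top h1
  have := ENNReal.summable_toReal h3
  refine this.congr fun m => ?_
  exact (ENNReal.toReal_ofReal (by positivity))

noncomputable def dtfaE {n : ℕ} (m : Fin n → ℤ) (x : Fin n → ℝ) : ℂ :=
  Complex.exp (2 * Real.pi * Complex.I * ((∑ k, (m k : ℝ) * x k : ℝ) : ℂ))

lemma dtfaE_norm {n : ℕ} (m : Fin n → ℤ) (x : Fin n → ℝ) : ‖dtfaE m x‖ = 1 := by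
  rw [dtfaE, show (2 * Real.pi * Complex.I * ((∑ k, (m k : ℝ) * x k : ℝ) : ℂ)) =
    ((2 * Real.pi * (∑ k, (m k : ℝ) * x k) : ℝ) : ℂ) * Complex.I by push_cast; ring]
  exact Complex.norm_exp_ofReal_mul_I _

lemma dtfaE_cont {n : ℕ} (m : Fin n → ℤ) : Continuous (dtfaE m) := by
  unfold dtfaE; fun_prop

lemma dtfaE_mFourier {n : ℕ} (m : Fin n → ℤ) (x : Fin n → ℝ) :
    UnitAddTorus.mFourier m (fun k => (x k : UnitAddCircle)) = dtfaE m x := by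
  simp only [UnitAddTorus.mFourier, ContinuousMap.coe_mk, fourier_coe_apply, dtfaE]
  rw [← Complex.exp_sum]
  congr 1
  push_cast
  rw [Finset.mul_sum]
  refine Finset.sum_congr rfl fun k _ => ?_
  ring

lemma dtfaE_period {n : ℕ} (m l : Fin n → ℤ) (x : Fin n → ℝ) :
    dtfaE m (x + dtfaCast l) = dtfaE m x := by
  rw [← dtfaE_mFourier, ← dtfaE_mFourier]
  congr 1
  ext k
  have : ((l k : ℝ) : UnitAddCircle) = 0 := by
    rw [AddCircle.coe_eq_zero_iff]
    exact ⟨l k, by simp⟩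
  simp only [dtfaCast, Pi.add_apply, AddCircle.coe_add, this, add_zero]

lemma dtfa_quot (n : ℕ) : IsOpenQuotientMap
    (fun (x : Fin n → ℝ) => (fun k => (x k : UnitAddCircle) : UnitAddTorus (Fin n))) :=
  IsOpenQuotientMap.piMap (fun _ => QuotientAddGroup.isOpenQuotientMap_mk)

lemma dtfa_quot_eq {n : ℕ} (x y : Fin n → ℝ)
    (h : (fun k => (x k : UnitAddCircle)) = (fun k => (y k : UnitAddCircle))) :
    ∃ m : Fin n → ℤ, y = x + dtfaCast m := by
  have h' : ∀ k, ∃ m : ℤ, y k = x k + m := by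
    intro k
    have := congr_fun h k
    have h0 : ((y k - x k : ℝ) : UnitAddCircle) = 0 := by
      rw [AddCircle.coe_sub, sub_eq_zero]; exact this.symm
    rw [AddCircle.coe_eq_zero_iff] at h0
    obtain ⟨m, hm⟩ := h0
    refine ⟨m, ?_⟩
    simp at hm
    linarith
  choose m hm using h'
  exact ⟨m, funext hm⟩

lemma dtfa_poisson {n : ℕ} (g : (Fin n → ℝ) → ℂ) (hg : Continuous g) (A r : ℝ) (hA : 0 ≤ A)
    (hr : (n : ℝ) < r) (hb : ∀ x, ‖g x‖ ≤ A * (1 + ‖x‖) ^ (-r))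
    (c : (Fin n → ℤ) → ℂ) (hc : ∀ m, c m = ∫ x, dtfaE (-m) x * g x) (hcs : Summable c) :
    (∀ x, Summable fun m : Fin n → ℤ => g (x + dtfaCast m)) ∧
    (Continuous fun x => ∑' m : Fin n → ℤ, g (x + dtfaCast m)) ∧
    ∀ x, ∑' m : Fin n → ℤ, g (x + dtfaCast m) = ∑' m, c m * dtfaE m x := by
  have hr0 : 0 ≤ r := (Nat.cast_nonneg n).trans hr.le
  have hsumm := dtfa_summable hr
  have hloc : ∀ (N : ℝ) (m : Fin n → ℤ) (x : Fin n → ℝ), ‖x‖ ≤ N → ‖g (x + dtfaCast m)‖ ≤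
      A * (1 + N) ^ r * (1 + ‖m‖) ^ (-r) := by
    intro N m x hx
    refine (hb _).trans ?_
    rw [mul_assoc]
    refine mul_le_mul_of_nonneg_left ?_ hA
    simpa [dtfaCast_norm] using dtfa_rpow_shift hr0 (y := dtfaCast m) hx
  have hs1 : ∀ x, Summable fun m : Fin n → ℤ => g (x + dtfaCast m) := fun x =>
    Summable.of_norm_bounded (hsumm.mul_left _) (fun m => hloc ‖x‖ m x le_rfl)
  have hcont : Continuous fun x => ∑' m : Fin n → ℤ, g (x + dtfaCast m) := by
    rw [continuous_iff_continuousAt]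
    intro x
    have : ContinuousOn (fun x => ∑' m : Fin n → ℤ, g (x + dtfaCast m))
        (Metric.closedBall 0 (‖x‖ + 1)) := by
      refine continuousOn_tsum (fun m => by fun_prop) (hsumm.mul_left (A * (1 + (‖x‖ + 1)) ^ r)) ?_
      intro m y hy
      exact hloc _ m y (by simpa using hy)
    refine this.continuousAt (Metric.closedBall_mem_nhds_of_mem ?_)
    simp
  refine ⟨hs1, hcont, ?_⟩
  have hq := dtfa_quot n
  have hper : ∀ x (l : Fin n → ℤ), ∑' m : Fin n → ℤ, g (x + dtfaCast l + dtfaCast m) =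
      ∑' m : Fin n → ℤ, g (x + dtfaCast m) := by
    intro x l
    rw [← (Equiv.addLeft l).tsum_eq (fun m : Fin n → ℤ => g (x + dtfaCast m))]
    refine tsum_congr fun m => ?_
    congr 1
    ext k
    simp [dtfaCast, add_assoc]
  let F0 : C(Fin n → ℝ, ℂ) := ⟨_, hcont⟩
  let π0 : C(Fin n → ℝ, UnitAddTorus (Fin n)) := ⟨_, hq.continuous⟩
  have hq' : Topology.IsQuotientMap π0 := hq.isQuotientMap
  have hfac : Function.FactorsThrough F0 π0 := by
    intro x y hxy
    obtain ⟨m, rfl⟩ := dtfa_quot_eq x y hxy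
    exact (hper x m).symm
  let F : C(UnitAddTorus (Fin n), ℂ) := hq'.lift F0 hfac
  have hF : ∀ x : Fin n → ℝ, F (fun k => (x k : UnitAddCircle)) =
      ∑' m : Fin n → ℤ, g (x + dtfaCast m) := by
    intro x
    exact congr_arg (fun f : C(Fin n → ℝ, ℂ) => f x) (hq'.lift_comp F0 hfac)
  have hgi : Integrable g := by
    refine Integrable.mono' ((integrable_one_add_norm (μ := volume) (E := Fin n → ℝ) (r := r)
      (by simpa using hr)).const_mul A) hg.aestronglyMeasurable (Filter.Eventually.of_forall hb)
  have hcoef : ∀ m, UnitAddTorus.mFourierCoeff F m = c m := by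
    intro m
    rw [UnitAddTorus.mFourierCoeff_eq_integral F m (fun _ => -1)]
    simp only [hF, dtfaE_mFourier, smul_eq_mul, ← tsum_mul_left]
    change ∫ x in dtfaQ n, _ = _
    have hint : Integrable (fun x => dtfaE (-m) x * g x) := by
      refine hgi.norm.mono' ((dtfaE_cont _).mul hg).aestronglyMeasurable
        (Filter.Eventually.of_forall fun x => ?_)
      simp [dtfaE_norm]
    have h1 := dtfa_hasSum _ hint
    rw [hc, ← h1.tsum_eq]
    simp only [dtfaE_period]
    have : IsFiniteMeasure (volume.restrict (dtfaQ n)) := ⟨by simp [dtfaQ_vol]⟩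
    have hbd : ∀ l : Fin n → ℤ, ∀ᵐ x ∂(volume.restrict (dtfaQ n)),
        ‖dtfaE (-m) x * g (x + dtfaCast l)‖ ≤ A * (1 + 1) ^ r * (1 + ‖l‖) ^ (-r) := by
      intro l
      filter_upwards [ae_restrict_mem (dtfaQ_meas n)] with x hx
      rw [norm_mul, dtfaE_norm, one_mul]
      exact hloc 1 l x (dtfaQ_norm hx)
    refine (hasSum_integral_of_summable_integral_norm ?_ ?_).tsum_eq.symm
    · intro l
      refine Integrable.mono' (integrable_const (A * (1 + 1) ^ r * (1 + ‖l‖) ^ (-r))) ?_ (hbd l)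
      exact ((dtfaE_cont _).mul (by fun_prop)).aestronglyMeasurable
    · refine Summable.of_nonneg_of_le (fun l => integral_nonneg fun x => norm_nonneg _) (fun l => ?_)
        (hsumm.mul_left (A * (1 + 1) ^ r))
      refine (integral_mono_of_nonneg (Filter.Eventually.of_forall fun x => norm_nonneg _)
        (integrable_const _) (hbd l)).trans ?_
      simp [Measure.real, dtfaQ_vol]
  intro x
  have hs : Summable (UnitAddTorus.mFourierCoeff F) := by
    rw [funext hcoef]; exact hcs
  have := UnitAddTorus.hasSum_mFourier_series_apply_of_summable hs (fun k => (x k : UnitAddCircle))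
  simp only [hF, hcoef, dtfaE_mFourier, smul_eq_mul] at this
  exact this.tsum_eq.symm


section DtfaTorus

noncomputable local instance dtfaMS : MeasureSpace UnitAddCircle := ⟨AddCircle.haarAddCircle⟩

local instance dtfaHaar : Measure.IsAddHaarMeasure (volume : Measure UnitAddCircle) :=
  inferInstanceAs (Measure.IsAddHaarMeasure AddCircle.haarAddCircle)

local instance dtfaProb : IsProbabilityMeasure (volume : Measure UnitAddCircle) :=
  inferInstanceAs (IsProbabilityMeasure AddCircle.haarAddCircle)

lemma dtfa_parseval {n : ℕ} (c : (Fin n → ℤ) → ℂ) (hc : Summable c) :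
    (Continuous fun x => ∑' m, c m * dtfaE m x) ∧
    ∫ x in {x : Fin n → ℝ | ∀ i, x i ∈ Set.Ioc (-(1/2) : ℝ) (-(1/2) + 1)},
      ‖∑' m, c m * dtfaE m x‖ ^ 2 = ∑' m, ‖c m‖ ^ 2 := by
  have hs : Summable (fun m => c m • (UnitAddTorus.mFourier m : C(UnitAddTorus (Fin n), ℂ))) := by
    refine Summable.of_norm ?_
    simpa only [norm_smul, UnitAddTorus.mFourier_norm, mul_one] using hc.norm
  obtain ⟨h, hh⟩ := hs
  have hev : ∀ x : Fin n → ℝ, h (fun k => (x k : UnitAddCircle)) = ∑' m, c m * dtfaE m x := by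
    intro x
    have := (ContinuousMap.evalCLM ℂ
      (fun k => (x k : UnitAddCircle) : UnitAddTorus (Fin n))).hasSum hh
    simp only [ContinuousLinearMap.map_smul, ContinuousMap.evalCLM_apply, dtfaE_mFourier,
      smul_eq_mul] at this
    exact this.tsum_eq.symm
  constructor
  · have : (fun x => ∑' m, c m * dtfaE m x) =
        fun x : Fin n → ℝ => h (fun k => (x k : UnitAddCircle)) := funext fun x => (hev x).symm
    rw [this]
    exact h.continuous.comp (dtfa_quot n).continuous
  have hL := (ContinuousMap.toLp (E := ℂ) 2
    (volume : Measure (UnitAddTorus (Fin n))) ℂ).hasSum hh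
  simp only [ContinuousLinearMap.map_smul] at hL
  set f := ContinuousMap.toLp (E := ℂ) 2 (volume : Measure (UnitAddTorus (Fin n))) ℂ h with hf
  have hcoef : ∀ m, UnitAddTorus.mFourierCoeff f m = c m := by
    intro m
    rw [← UnitAddTorus.mFourierBasis_repr, HilbertBasis.repr_apply_apply]
    have h1 := (innerSL ℂ (UnitAddTorus.mFourierBasis (d := Fin n) m)).hasSum hL
    have h2 := hasSum_ite_eq m (c m)
    refine h1.unique ?_
    convert! h2 using 2 with l
    have := orthonormal_iff_ite.mp (UnitAddTorus.orthonormal_mFourier (d := Fin n)) m l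
    simp only [UnitAddTorus.coe_mFourierBasis, innerSL_apply_apply, inner_smul_right]
    rw [this]
    by_cases hml : m = l
    · simp [hml]
    · simp [hml, Ne.symm hml]
  have h3 := UnitAddTorus.hasSum_sq_mFourierCoeff f
  simp only [hcoef] at h3
  rw [h3.tsum_eq]
  have h4 : ∫ t, ‖f t‖ ^ 2 = ∫ t, ‖h t‖ ^ 2 := by
    apply integral_congr_ae
    filter_upwards [ContinuousMap.coeFn_toLp (𝕜 := ℂ) (p := 2)
      (volume : Measure (UnitAddTorus (Fin n))) h] with t ht
    rw [ht]
  rw [h4, UnitAddTorus.integral_preimage _ (fun _ => -(1/2))]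
  simp only [hev]

end DtfaTorus

open scoped Pointwise in
lemma dtfa_parseval' {n : ℕ} (P : ℝ) (hP : 0 < P) (c : (Fin n → ℤ) → ℂ) (hc : Summable c) :
    ∫ x in {x : Fin n → ℝ | ∀ k, |x k| ≤ P / 2},
      ‖∑' m, c m * dtfaE m (P⁻¹ • x)‖ ^ 2 = P ^ n * ∑' m, ‖c m‖ ^ 2 := by
  have h1 := Measure.setIntegral_comp_smul_of_pos volume
    (fun x : Fin n → ℝ => ‖∑' m, c m * dtfaE m x‖ ^ 2)
    {x : Fin n → ℝ | ∀ k, |x k| ≤ P / 2} (inv_pos.mpr hP)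
  rw [h1, ← (dtfa_parseval c hc).2]
  simp only [Module.finrank_fin_fun, inv_pow, inv_inv, smul_eq_mul]
  congr 1
  apply setIntegral_congr_set
  have h2 : (P⁻¹ • {x : Fin n → ℝ | ∀ k, |x k| ≤ P / 2}) =
      Set.Icc (fun _ => -(1/2)) (fun _ => -(1/2) + 1) := by
    ext x
    rw [Set.mem_smul_set_iff_inv_smul_mem₀ (inv_pos.mpr hP).ne']
    simp only [inv_inv, Set.mem_ofPred_eq, Pi.smul_apply, smul_eq_mul, abs_mul, abs_of_pos hP,
      Set.mem_Icc, Pi.le_def, ← forall_and]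
    refine forall_congr' fun k => ?_
    have : P * |x k| ≤ P / 2 ↔ |x k| ≤ 1 / 2 := by
      rw [← mul_le_mul_iff_right₀ hP (b := |x k|)]
      ring_nf
    rw [this, abs_le]
    norm_num
  rw [h2]
  have h3 := Measure.univ_pi_Ioc_ae_eq_Icc (μ := fun _ : Fin n => (volume : Measure ℝ))
    (f := fun _ => -(1/2)) (g := fun _ => -(1/2) + 1)
  have h4 : (Set.univ.pi fun _ : Fin n => Set.Ioc (-(1/2) : ℝ) (-(1/2) + 1)) =
      {x : Fin n → ℝ | ∀ i, x i ∈ Set.Ioc (-(1/2) : ℝ) (-(1/2) + 1)} := by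
    ext x; simp
  rw [h4] at h3
  exact h3.symm

noncomputable def dtfaLam {n : ℕ} (β ν : Fin n → ℝ) (x : Fin n → ℝ) : ℝ :=
  ∑ s, β s * |x s| ^ ν s

lemma dtfaLam_cont {n : ℕ} {β ν : Fin n → ℝ} (hν : ∀ s, ν s ∈ Set.Ioo (0 : ℝ) 1) :
    Continuous (dtfaLam β ν) := by
  unfold dtfaLam
  refine continuous_finsetSum _ fun s _ => continuous_const.mul ?_
  exact Continuous.rpow_const (by fun_prop) (fun x => Or.inr (hν s).1.le)

lemma dtfa_rpow_sub {a b v : ℝ} (hv : v ∈ Set.Ioo (0 : ℝ) 1) (h : |a - b| ≤ 1) :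
    |a| ^ v ≤ |b| ^ v + 1 := by
  calc |a| ^ v ≤ (|b| + |a - b|) ^ v := by
        refine Real.rpow_le_rpow (abs_nonneg _) ?_ hv.1.le
        have := abs_add_le b (a - b)
        simpa using this
    _ ≤ |b| ^ v + |a - b| ^ v :=
        Real.rpow_add_le_add_rpow (abs_nonneg _) (abs_nonneg _) hv.1.le hv.2.le
    _ ≤ _ := by
        gcongr
        exact Real.rpow_le_one (abs_nonneg _) h hv.1.le

lemma dtfaLam_sub {n : ℕ} {β ν : Fin n → ℝ} (hν : ∀ s, ν s ∈ Set.Ioo (0 : ℝ) 1)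
    (hβ : ∀ s, 0 < β s) {x y : Fin n → ℝ} (h : ∀ s, |x s - y s| ≤ 1) :
    dtfaLam β ν x ≤ dtfaLam β ν y + ∑ s, β s := by
  unfold dtfaLam
  rw [← Finset.sum_add_distrib]
  refine Finset.sum_le_sum fun s _ => ?_
  have := mul_le_mul_of_nonneg_left (dtfa_rpow_sub (hν s) (h s)) (hβ s).le
  linarith

lemma dtfaLam_vol_fin {n : ℕ} {β ν : Fin n → ℝ} (hν : ∀ s, ν s ∈ Set.Ioo (0 : ℝ) 1)
    (hβ : ∀ s, 0 < β s) : volume {x : Fin n → ℝ | dtfaLam β ν x ≤ 1} ≠ ∞ := by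
  refine ne_top_of_le_ne_top ?_ (measure_mono (t := Set.Icc (fun s => -((1 / β s) ^ (ν s)⁻¹))
    (fun s => (1 / β s) ^ (ν s)⁻¹)) ?_)
  · exact (isCompact_Icc.measure_lt_top).ne
  · intro x hx
    have key : ∀ s, |x s| ≤ (1 / β s) ^ (ν s)⁻¹ := by
      intro s
      have h1 : β s * |x s| ^ ν s ≤ 1 := by
        refine le_trans ?_ hx
        exact Finset.single_le_sum (f := fun s => β s * |x s| ^ ν s)
          (fun i _ => mul_nonneg (hβ i).le (Real.rpow_nonneg (abs_nonneg _) _)) (Finset.mem_univ s)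
      rw [Real.le_rpow_inv_iff_of_pos (abs_nonneg _) (by have := hβ s; positivity) (hν s).1,
        le_div_iff₀ (hβ s)]
      linarith
    exact ⟨fun s => (abs_le.mp (key s)).1, fun s => (abs_le.mp (key s)).2⟩

lemma dtfaLam_vol {n : ℕ} {β ν : Fin n → ℝ} (hν : ∀ s, ν s ∈ Set.Ioo (0 : ℝ) 1)
    {t : ℝ} (ht : 0 < t) :
    volume {x : Fin n → ℝ | dtfaLam β ν x ≤ t} =
      ENNReal.ofReal (t ^ (∑ s, 1 / ν s)) * volume {x : Fin n → ℝ | dtfaLam β ν x ≤ 1} := by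
  classical
  let f : (Fin n → ℝ) →ₗ[ℝ] (Fin n → ℝ) := Matrix.toLin' (Matrix.diagonal fun s => t ^ (-(1 / ν s)))
  have hdet : LinearMap.det f = t ^ (-∑ s, 1 / ν s) := by
    simp only [f, LinearMap.det_toLin', Matrix.det_diagonal]
    rw [← Real.rpow_sum_of_pos ht, Finset.sum_neg_distrib]
  have hpos : 0 < t ^ (-∑ s, 1 / ν s) := Real.rpow_pos_of_pos ht _
  have h := Measure.addHaar_preimage_linearMap volume (f := f) (by rw [hdet]; exact hpos.ne')
    {x : Fin n → ℝ | dtfaLam β ν x ≤ 1}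
  rw [hdet, abs_of_pos (inv_pos.mpr hpos), Real.rpow_neg ht.le, inv_inv] at h
  rw [← h]
  congr 1
  ext x
  have hx : dtfaLam β ν (f x) = t⁻¹ * dtfaLam β ν x := by
    unfold dtfaLam
    rw [Finset.mul_sum]
    refine Finset.sum_congr rfl fun s _ => ?_
    have h1 : f x s = t ^ (-(1 / ν s)) * x s := by
      simp [f, Matrix.toLin'_apply, Matrix.mulVec_diagonal]
    rw [h1, abs_mul, Real.mul_rpow (abs_nonneg _) (abs_nonneg _),
      abs_of_pos (Real.rpow_pos_of_pos ht _), ← Real.rpow_mul ht.le]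
    have : -(1 / ν s) * ν s = -1 := by
      have := (hν s).1.ne'
      field_simp
    rw [this, Real.rpow_neg_one]
    ring
  simp only [Set.mem_preimage, Set.mem_ofPred_eq, hx]
  rw [inv_mul_le_iff₀ ht, mul_one]

lemma dtfa_rpow_diff {a b D : ℝ} (hb : 0 < b) (hab : b ≤ a) (hD : 1 ≤ D) :
    a ^ D - b ^ D ≤ D * a ^ (D - 1) * (a - b) := by
  have ha : 0 < a := hb.trans_le hab
  have h1 := one_add_mul_self_le_rpow_one_add (s := b / a - 1) (p := D)
    (by have : 0 < b / a := by positivity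
        linarith) hD
  have h2 : (1 + (b / a - 1)) ^ D = b ^ D / a ^ D := by
    rw [← Real.div_rpow hb.le ha.le]; congr 1; ring
  rw [h2, le_div_iff₀ (by positivity)] at h1
  have h3 : a ^ D = a ^ (D - 1) * a := by
    rw [← Real.rpow_add_one ha.ne']; congr 1; ring
  have h4 : (1 + D * (b / a - 1)) * a ^ D = a ^ D - D * a ^ (D - 1) * (a - b) := by
    rw [h3]; field_simp; ring
  linarith

lemma dtfa_count {n : ℕ} {β ν : Fin n → ℝ} (hν : ∀ s, ν s ∈ Set.Ioo (0 : ℝ) 1)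
    (hβ : ∀ s, 0 < β s) (hD : 1 ≤ ∑ s, 1 / ν s) {T : ℝ} (hT : ∑ s, β s + 1 ≤ T) :
    ∑' m : Fin n → ℤ, ({m : Fin n → ℤ | T < dtfaLam β ν (dtfaCast m) ∧
      dtfaLam β ν (dtfaCast m) ≤ T + 1}.indicator (fun _ => (1 : ℝ≥0∞)) m) ≤
    ENNReal.ofReal ((volume {x : Fin n → ℝ | dtfaLam β ν x ≤ 1}).toReal * (∑ s, 1 / ν s) *
      (1 + 2 * ∑ s, β s) * (T + 1 + ∑ s, β s) ^ (∑ s, 1 / ν s - 1)) := by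
  set B := ∑ s, β s with hB
  have hB0 : 0 ≤ B := Finset.sum_nonneg fun s _ => (hβ s).le
  set D := ∑ s, 1 / ν s
  set V := volume {x : Fin n → ℝ | dtfaLam β ν x ≤ 1} with hV
  have hVf : V ≠ ∞ := dtfaLam_vol_fin hν hβ
  let S : Set (Fin n → ℝ) := {x | dtfaLam β ν x ≤ T + 1 + B} \ {x | dtfaLam β ν x ≤ T - B}
  have hm : ∀ t, MeasurableSet {x : Fin n → ℝ | dtfaLam β ν x ≤ t} := fun t =>
    measurableSet_le (dtfaLam_cont hν).measurable measurable_const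
  have hSm : MeasurableSet S := (hm _).diff (hm _)
  have h1 : volume S ≤ ENNReal.ofReal (V.toReal * D *
      (1 + 2 * B) * (T + 1 + B) ^ (D - 1)) := by
    have hle : volume S = _ := measure_sdiff (μ := volume)
      (s₁ := {x : Fin n → ℝ | dtfaLam β ν x ≤ T + 1 + B})
      (s₂ := {x : Fin n → ℝ | dtfaLam β ν x ≤ T - B})
      (fun x hx => le_trans (b := T - B) hx (by linarith))
      (hm _).nullMeasurableSet (by
        rw [dtfaLam_vol hν (by linarith)]
        exact ENNReal.mul_ne_top ENNReal.ofReal_ne_top hVf)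
    have hv : ∀ t, 0 < t → volume {x : Fin n → ℝ | dtfaLam β ν x ≤ t} =
        ENNReal.ofReal (t ^ D * V.toReal) := by
      intro t ht
      rw [dtfaLam_vol hν ht, ENNReal.ofReal_mul (by positivity), ENNReal.ofReal_toReal hVf]
    rw [hle, hv _ (by linarith), hv _ (by linarith), ← ENNReal.ofReal_sub _ (by
        apply mul_nonneg
        · apply Real.rpow_nonneg; linarith
        · exact ENNReal.toReal_nonneg)]
    apply ENNReal.ofReal_le_ofReal
    have := dtfa_rpow_diff (a := T + 1 + B) (b := T - B) (D := D) (by linarith) (by linarith) hD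
    have h5 := mul_le_mul_of_nonneg_left this (ENNReal.toReal_nonneg (a := V))
    calc _ = V.toReal * ((T + 1 + B) ^ D - (T - B) ^ D) := by ring
      _ ≤ _ := h5
      _ = _ := by ring
  refine le_trans ?_ h1
  rw [← lintegral_indicator_one hSm, dtfa_lintegral]
  refine ENNReal.tsum_le_tsum fun m => ?_
  by_cases hmem : m ∈ {m : Fin n → ℤ | T < dtfaLam β ν (dtfaCast m) ∧
      dtfaLam β ν (dtfaCast m) ≤ T + 1}
  · rw [Set.indicator_of_mem hmem]
    calc (1 : ℝ≥0∞) = ∫⁻ x in dtfaQ n, 1 := by rw [setLIntegral_const, dtfaQ_vol, mul_one]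
      _ ≤ _ := by
        refine setLIntegral_mono' (dtfaQ_meas n) fun x hx => ?_
        have hxs : ∀ s, |x s| ≤ 1 := fun s => by
          have := (norm_le_pi_norm x s).trans (dtfaQ_norm hx)
          simpa using this
        have h2 := dtfaLam_sub hν hβ (x := x + dtfaCast m) (y := dtfaCast m)
          (fun s => by simpa using hxs s)
        have h3 := dtfaLam_sub hν hβ (y := x + dtfaCast m) (x := dtfaCast m)
          (fun s => by simpa using hxs s)
        have hxS : x + dtfaCast m ∈ S := by
          refine ⟨?_, ?_⟩
          · have := hmem.2
            simp only [Set.mem_ofPred_eq]; linarith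
          · have := hmem.1
            simp only [Set.mem_ofPred_eq, not_le]; linarith
        rw [Set.indicator_of_mem hxS]
        simp
  · rw [Set.indicator_of_notMem hmem]
    exact zero_le

lemma dtfa_expsum (a d : ℝ) (ha : 1 ≤ a) :
    Summable (fun k : ℕ => Real.exp (-k) * (k + a) ^ d) := by
  obtain ⟨N, hN⟩ := exists_nat_ge d
  have h0 := (summable_nat_add_iff 1).mpr (Real.summable_pow_mul_exp_neg_nat_mul N zero_lt_one)
  refine Summable.of_nonneg_of_le (fun k => by positivity) (fun k => ?_)
    (h0.mul_left (Real.exp 1 * a ^ N))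
  have h1 : ((k : ℝ) + a) ^ d ≤ (a * (k + 1)) ^ N := by
    rw [← Real.rpow_natCast]
    have hk : (0 : ℝ) ≤ k := Nat.cast_nonneg k
    calc ((k : ℝ) + a) ^ d ≤ ((k : ℝ) + a) ^ (N : ℝ) :=
          Real.rpow_le_rpow_of_exponent_le (by linarith) hN
      _ ≤ _ := Real.rpow_le_rpow (by linarith) (by nlinarith) (by positivity)
  calc _ ≤ Real.exp (-k) * (a * (k + 1)) ^ N := by gcongr
    _ = _ := by
      have : Real.exp (-(k : ℝ)) = Real.exp 1 * Real.exp (-1 * ((k + 1 : ℕ) : ℝ)) := by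
        rw [← Real.exp_add]; push_cast; congr 1; ring
      rw [this, mul_pow]; push_cast; ring

lemma dtfa_tail {n : ℕ} {β ν : Fin n → ℝ} (hν : ∀ s, ν s ∈ Set.Ioo (0 : ℝ) 1)
    (hβ : ∀ s, 0 < β s) (hD : 1 ≤ ∑ s, 1 / ν s) :
    ∃ K ≥ (1 : ℝ), ∃ T0 ≥ (1 : ℝ), ∀ T ≥ T0,
      ∑' m : Fin n → ℤ, ({m : Fin n → ℤ | T < dtfaLam β ν (dtfaCast m)}.indicator
        (fun m => ENNReal.ofReal (Real.exp (-dtfaLam β ν (dtfaCast m)))) m) ≤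
      ENNReal.ofReal (K * Real.exp (-T) * T ^ (∑ s, 1 / ν s - 1)) := by
  set B := ∑ s, β s with hB
  have hB0 : 0 ≤ B := Finset.sum_nonneg fun s _ => (hβ s).le
  set D := ∑ s, 1 / ν s
  set V := volume {x : Fin n → ℝ | dtfaLam β ν x ≤ 1} with hV
  have hsm := dtfa_expsum (2 + B) (D - 1) (by linarith)
  set W := ∑' k : ℕ, Real.exp (-k) * (k + (2 + B)) ^ (D - 1) with hW
  have hW0 : 0 ≤ W := tsum_nonneg fun k => by positivity
  have hM0 : 0 ≤ V.toReal * D * (1 + 2 * B) := by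
    have := ENNReal.toReal_nonneg (a := V)
    positivity
  set M := V.toReal * D * (1 + 2 * B) with hM
  refine ⟨M * W + 1, by nlinarith [mul_nonneg hM0 hW0], B + 1, by linarith, fun T hT => ?_⟩
  have hT1 : 1 ≤ T := by linarith
  have step1 : ∀ m : Fin n → ℤ, ({m : Fin n → ℤ | T < dtfaLam β ν (dtfaCast m)}.indicator
        (fun m => ENNReal.ofReal (Real.exp (-dtfaLam β ν (dtfaCast m)))) m) ≤
      ∑' k : ℕ, ENNReal.ofReal (Real.exp (-(T + k))) *
        ({m : Fin n → ℤ | T + k < dtfaLam β ν (dtfaCast m) ∧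
      dtfaLam β ν (dtfaCast m) ≤ T + k + 1}.indicator (fun _ => (1 : ℝ≥0∞)) m) := by
    intro m
    by_cases hm : m ∈ {m : Fin n → ℤ | T < dtfaLam β ν (dtfaCast m)}
    · have hm' : T < dtfaLam β ν (dtfaCast m) := hm
      rw [Set.indicator_of_mem hm]
      set l := dtfaLam β ν (dtfaCast m) with hl
      have hc : 0 < ⌈l - T⌉₊ := Nat.ceil_pos.mpr (by linarith)
      obtain ⟨k, hk⟩ : ∃ k, ⌈l - T⌉₊ = k + 1 := ⟨⌈l - T⌉₊ - 1, by omega⟩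
      rw [Nat.ceil_eq_iff (by omega)] at hk
      have hk1 := hk.1
      have hk2 := hk.2
      push_cast at hk2
      simp at hk1
      refine le_trans ?_ (ENNReal.le_tsum k)
      rw [Set.indicator_of_mem (by
        constructor
        · rw [← hl]; linarith
        · rw [← hl]; linarith), mul_one]
      apply ENNReal.ofReal_le_ofReal
      apply Real.exp_le_exp.mpr
      linarith
    · rw [Set.indicator_of_notMem hm]; exact zero_le
  refine (ENNReal.tsum_le_tsum step1).trans ?_
  rw [ENNReal.tsum_comm]
  have step2 : ∀ k : ℕ, (∑' m : Fin n → ℤ, ENNReal.ofReal (Real.exp (-(T + k))) *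
        ({m : Fin n → ℤ | T + k < dtfaLam β ν (dtfaCast m) ∧
      dtfaLam β ν (dtfaCast m) ≤ T + k + 1}.indicator (fun _ => (1 : ℝ≥0∞)) m)) ≤
      ENNReal.ofReal (M * Real.exp (-T) * T ^ (D - 1) *
        (Real.exp (-k) * (k + (2 + B)) ^ (D - 1))) := by
    intro k
    have hk : (0 : ℝ) ≤ k := Nat.cast_nonneg k
    rw [ENNReal.tsum_mul_left]
    refine (mul_le_mul_right (dtfa_count hν hβ hD (T := T + k) (by linarith)) _).trans ?_
    rw [← ENNReal.ofReal_mul (by positivity)]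
    apply ENNReal.ofReal_le_ofReal
    rw [← hB, ← hV, ← hM]
    have h1 : (T + k + 1 + B) ^ (D - 1) ≤ T ^ (D - 1) * (k + (2 + B)) ^ (D - 1) := by
      rw [← Real.mul_rpow (by linarith) (by linarith)]
      exact Real.rpow_le_rpow (by linarith) (by nlinarith) (by linarith)
    calc _ ≤ Real.exp (-(T + k)) * (M * (T ^ (D - 1) * (k + (2 + B)) ^ (D - 1))) := by gcongr
      _ = _ := by
        rw [neg_add, Real.exp_add]; ring
  refine (ENNReal.tsum_le_tsum step2).trans ?_
  rw [← ENNReal.ofReal_tsum_of_nonneg (fun k => by positivity) (hsm.mul_left _), tsum_mul_left,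
    ← hW]
  apply ENNReal.ofReal_le_ofReal
  have : 0 ≤ Real.exp (-T) * T ^ (D - 1) := by positivity
  nlinarith

lemma dtfa_interp {α : Type*} [MeasurableSpace α] {μ : Measure α} {f : α → ℂ}
    {q q' : ℝ≥0∞} (hq : 2 ≤ q) (hqq' : 1 / q + 1 / q' = 1) {K T d : ℝ} (hK : 1 ≤ K) (hT : 1 ≤ T)
    (hM : ∀ x, ‖f x‖ ≤ K * Real.exp (-T) * T ^ d)
    (hN : ∫⁻ x, ‖f x‖ₑ ^ 2 ∂μ ≤ ENNReal.ofReal (Real.exp (-T) * (K * Real.exp (-T) * T ^ d))) :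
    eLpNorm f q μ ≤ ENNReal.ofReal (K * Real.exp (-T) * T ^ (d / q'.toReal)) := by
  have hT0 : 0 < T := by linarith
  have hK0 : 0 < K := by linarith
  by_cases hqt : q = ∞
  · subst hqt
    have : q' = 1 := by
      simpa using hqq'
    subst this
    simp only [ENNReal.toReal_one, div_one, eLpNorm_exponent_top]
    exact eLpNormEssSup_le_of_ae_bound (Filter.Eventually.of_forall hM)
  have hq0 : q ≠ 0 := by
    rintro rfl
    simp at hq
  have hqr : 2 ≤ q.toReal := by
    have := ENNReal.toReal_mono hqt hq
    simpa using this
  have hconj : 1 / q'.toReal = 1 - 1 / q.toReal := by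
    have h1 := congr_arg ENNReal.toReal hqq'
    have hle : 1 / q' ≤ 1 := (le_add_self (a := 1 / q')).trans hqq'.le
    rw [ENNReal.toReal_add (by simpa using hq0) (ne_top_of_le_ne_top ENNReal.one_ne_top hle)] at h1
    simp at h1
    simp only [one_div]
    linarith
  set M := K * Real.exp (-T) * T ^ d with hMd
  set s := q.toReal with hs
  have hM0 : 0 < M := by positivity
  rw [eLpNorm_eq_lintegral_rpow_enorm_toReal hq0 hqt]
  have h1 : ∀ x, ‖f x‖ₑ ^ s ≤ ENNReal.ofReal (M ^ (s - 2)) * ‖f x‖ₑ ^ 2 := by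
    intro x
    have e1 : ‖f x‖ₑ = ENNReal.ofReal ‖f x‖ := (ofReal_norm (f x)).symm
    rw [e1, ENNReal.ofReal_rpow_of_nonneg (norm_nonneg _) (by linarith),
      ← ENNReal.ofReal_pow (norm_nonneg _), ← ENNReal.ofReal_mul (by positivity)]
    apply ENNReal.ofReal_le_ofReal
    have : ‖f x‖ ^ s = ‖f x‖ ^ (s - 2) * ‖f x‖ ^ 2 := by
      rw [← Real.rpow_natCast, ← Real.rpow_add_of_nonneg (norm_nonneg _) (by linarith) (by simp)]
      congr 1; push_cast; ring
    rw [this]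
    gcongr
    exact hM x
  have h2 : ∫⁻ x, ‖f x‖ₑ ^ s ∂μ ≤ ENNReal.ofReal (M ^ (s - 2) * (Real.exp (-T) * M)) := by
    refine (lintegral_mono h1).trans ?_
    rw [lintegral_const_mul' _ _ ENNReal.ofReal_ne_top, ENNReal.ofReal_mul (by positivity)]
    gcongr
  refine (ENNReal.rpow_le_rpow h2 (by positivity)).trans ?_
  rw [ENNReal.ofReal_rpow_of_nonneg (by positivity) (by positivity)]
  apply ENNReal.ofReal_le_ofReal
  rw [one_div, Real.rpow_inv_le_iff_of_pos (by positivity) (by positivity) (by linarith)]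
  have e2 : M ^ (s - 2) * (Real.exp (-T) * M) = Real.exp (-T) * M ^ (s - 1) := by
    have : M ^ (s - 1) = M ^ (s - 2) * M := by
      rw [← Real.rpow_add_one hM0.ne']; congr 1; ring
    rw [this]; ring
  rw [e2, hMd, Real.mul_rpow (by positivity) (by positivity),
    Real.mul_rpow (by positivity) (by positivity), Real.mul_rpow (by positivity) (by positivity),
    Real.mul_rpow (by positivity) (by positivity), ← Real.rpow_mul hT0.le, ← Real.rpow_mul hT0.le]
  have e3 : d / q'.toReal * s = d * (s - 1) := by
    rw [div_eq_mul_one_div, hconj]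
    have : s ≠ 0 := by linarith
    field_simp
  rw [e3]
  have e4 : Real.exp (-T) ^ s = Real.exp (-T) * Real.exp (-T) ^ (s - 1) := by
    rw [mul_comm, ← Real.rpow_add_one (Real.exp_pos _).ne']; congr 1; ring
  rw [e4]
  have e5 : K ^ (s - 1) ≤ K ^ s := Real.rpow_le_rpow_of_exponent_le hK (by linarith)
  calc _ = K ^ (s - 1) * (Real.exp (-T) * Real.exp (-T) ^ (s - 1) * T ^ (d * (s - 1))) := by ring
    _ ≤ K ^ s * (Real.exp (-T) * Real.exp (-T) ^ (s - 1) * T ^ (d * (s - 1))) := by gcongr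
    _ = _ := by ring

lemma dtfa_sup_le {n : ℕ} (x : Fin n → ℝ) : ‖x‖ ≤ Real.sqrt (∑ k, x k ^ 2) := by
  rw [pi_norm_le_iff_of_nonneg (Real.sqrt_nonneg _)]
  intro i
  rw [Real.norm_eq_abs]
  apply Real.abs_le_sqrt
  exact Finset.single_le_sum (f := fun k => x k ^ 2) (fun k _ => sq_nonneg _) (Finset.mem_univ i)

theorem density_truncated_fourier_approximation
    (n : ℕ) (hn : 1 ≤ n) (P : ℕ) (hP : 1 ≤ P)
    (p : (Fin n → ℝ) → ℝ) (hpc : Continuous p)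
    (hp0 : ∀ x, 0 ≤ p x) (hp1 : ∫ x : Fin n → ℝ, p x = 1)
    (Φ : (Fin n → ℝ) → ℂ)
    (hΦ : ∀ v : Fin n → ℝ, Φ v =
      ∫ x : Fin n → ℝ, Complex.exp (Complex.I * (∑ k, v k * x k : ℝ)) * (p x : ℂ))
    (A δ : ℝ) (hA : 0 < A) (hδ : 0 < δ)
    (hpb : ∀ x : Fin n → ℝ,
      p x ≤ A * (1 + Real.sqrt (∑ k, x k ^ 2)) ^ (-(n : ℝ) - δ))
    (hΦb : ∀ v : Fin n → ℝ,
      ‖Φ v‖ ≤ A * (1 + Real.sqrt (∑ k, v k ^ 2)) ^ (-(n : ℝ) - δ))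
    (ε : ℝ) (hε : 0 < ε)
    (hsum : ∀ x : Fin n → ℝ, (∀ k, |x k| ≤ (P : ℝ) / 2) →
      (∑' m : {m : Fin n → ℤ // m ≠ 0},
        p (fun k => x k + (P : ℝ) * ((m : Fin n → ℤ) k : ℝ))) ≤ ε)
    (ν β : Fin n → ℝ) (hν : ∀ s, ν s ∈ Set.Ioo (0 : ℝ) 1) (hβ : ∀ s, 0 < β s)
    (hΦm : ∀ m : Fin n → ℤ,
      ‖Φ (fun k => -2 * Real.pi * (m k : ℝ) / (P : ℝ))‖
        ≤ Real.exp (-∑ s, β s * |(m s : ℝ)| ^ ν s))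
    (q q' : ℝ≥0∞) (hq : 2 ≤ q) (hqq' : 1 / q + 1 / q' = 1) :
    ∃ C > (0 : ℝ), ∃ R₀ > (1 : ℝ), ∀ R ≥ R₀,
      eLpNorm
        (fun x : Fin n → ℝ =>
          (p x : ℂ) -
            (((P : ℝ) ^ n)⁻¹ : ℝ) *
              ∑' m : {m : Fin n → ℤ // ∑ s, β s * |(m s : ℝ)| ^ ν s ≤ Real.log R},
                Φ (fun k => -2 * Real.pi * ((m : Fin n → ℤ) k : ℝ) / (P : ℝ)) *
                  Complex.exp (2 * Real.pi * Complex.I *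
                    ((∑ k, ((m : Fin n → ℤ) k : ℝ) * x k) / (P : ℝ) : ℝ)))
        q (volume.restrict {x : Fin n → ℝ | ∀ k, |x k| ≤ (P : ℝ) / 2})
      ≤ ENNReal.ofReal
          (ε * (P : ℝ) ^ ((n : ℝ) / q.toReal)
            + C * R⁻¹ * Real.log R ^ ((∑ s, 1 / ν s - 1) / q'.toReal)) := by
  classical
  have hP0 : (0 : ℝ) < P := by exact_mod_cast hP
  have hP1 : (1 : ℝ) ≤ P := by exact_mod_cast hP
  set r : ℝ := n + δ with hr
  have hrn : (n : ℝ) < r := by linarith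
  have hr0 : 0 < r := (Nat.cast_nonneg n).trans_lt hrn
  have hD : 1 ≤ ∑ s, 1 / ν s := by
    have h1 : ∀ s, 1 ≤ 1 / ν s := fun s => by
      rw [le_div_iff₀ (hν s).1]; linarith [(hν s).2]
    have h2 : ∑ s : Fin n, (1 : ℝ) ≤ ∑ s, 1 / ν s := Finset.sum_le_sum fun s _ => h1 s
    have h3 : (1 : ℝ) ≤ n := by exact_mod_cast hn
    simp at h2
    simpa using h3.trans h2
  -- general bound
  have hdec : ∀ (y : Fin n → ℝ), A * (1 + Real.sqrt (∑ k, y k ^ 2)) ^ (-(n : ℝ) - δ) ≤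
      A * (1 + ‖y‖) ^ (-r) := by
    intro y
    have e : -(n : ℝ) - δ = -r := by rw [hr]; ring
    rw [e]
    refine mul_le_mul_of_nonneg_left ?_ hA.le
    exact Real.rpow_le_rpow_of_nonpos (by positivity) (by linarith [dtfa_sup_le y]) (by linarith)
  let g : (Fin n → ℝ) → ℂ := fun y => (p ((P : ℝ) • y) : ℂ)
  have hgc : Continuous g := by
    simp only [g]; fun_prop
  have hgb : ∀ y, ‖g y‖ ≤ A * (1 + ‖y‖) ^ (-r) := by
    intro y
    simp only [g, Complex.norm_real, Real.norm_eq_abs, abs_of_nonneg (hp0 _)]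
    refine (hpb _).trans ((hdec _).trans ?_)
    refine mul_le_mul_of_nonneg_left ?_ hA.le
    refine Real.rpow_le_rpow_of_nonpos (by positivity) ?_ (by linarith)
    rw [norm_smul, Real.norm_eq_abs, abs_of_pos hP0]
    nlinarith [norm_nonneg y]
  let c : (Fin n → ℤ) → ℂ := fun m => (((P : ℝ) ^ n)⁻¹ : ℝ) *
    Φ (fun k => -2 * Real.pi * (m k : ℝ) / (P : ℝ))
  have hPn : ((P : ℝ) ^ n)⁻¹ ≤ 1 := inv_le_one_of_one_le₀ (one_le_pow₀ hP1)
  have hcΦ : ∀ m, ‖c m‖ ≤ ((P : ℝ) ^ n)⁻¹ * ‖Φ (fun k => -2 * Real.pi * (m k : ℝ) / (P : ℝ))‖ := by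
    intro m
    simp only [c, norm_mul, Complex.norm_real, Real.norm_eq_abs]
    rw [abs_of_nonneg (by positivity)]
  have hcint : ∀ m, c m = ∫ x, dtfaE (-m) x * g x := by
    intro m
    have h1 := Measure.integral_comp_smul (volume : Measure (Fin n → ℝ))
      (fun x : Fin n → ℝ => dtfaE (-m) ((P : ℝ)⁻¹ • x) * (p x : ℂ)) (P : ℝ)
    simp only [smul_smul, inv_mul_cancel₀ hP0.ne', one_smul] at h1
    simp only [g, c]
    rw [h1, hΦ, Module.finrank_fin_fun, abs_of_nonneg (by positivity), Complex.real_smul]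
    congr 1
    refine integral_congr_ae (Filter.Eventually.of_forall fun x => ?_)
    simp only [dtfaE]
    congr 2
    push_cast
    rw [Finset.mul_sum, Finset.mul_sum]
    refine Finset.sum_congr rfl fun k _ => ?_
    simp only [Pi.neg_apply, Pi.smul_apply, smul_eq_mul]
    push_cast
    have : (P : ℂ) ≠ 0 := by exact_mod_cast hP0.ne'
    field_simp
  have hcs : Summable c := by
    refine Summable.of_norm_bounded ((dtfa_summable hrn).mul_left (A * (P : ℝ) ^ r)) fun m => ?_
    refine (hcΦ m).trans ((mul_le_of_le_one_left (norm_nonneg _) hPn).trans ?_)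
    refine (hΦb _).trans ((hdec _).trans ?_)
    rw [mul_assoc]
    refine mul_le_mul_of_nonneg_left ?_ hA.le
    have e1 : (fun k => -2 * Real.pi * (m k : ℝ) / (P : ℝ)) =
        (-2 * Real.pi / P : ℝ) • dtfaCast m := by
      ext k; simp [dtfaCast]; ring
    rw [e1, norm_smul, dtfaCast_norm]
    have e2 : (P : ℝ)⁻¹ * (1 + ‖m‖) ≤ 1 + ‖(-2 * Real.pi / P : ℝ)‖ * ‖m‖ := by
      have e3 : ‖(-2 * Real.pi / P : ℝ)‖ = 2 * Real.pi * (P : ℝ)⁻¹ := by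
        rw [norm_div, norm_mul, norm_neg, Real.norm_eq_abs, Real.norm_eq_abs, Real.norm_eq_abs,
          abs_of_pos hP0, abs_of_pos Real.pi_pos]
        simp; ring
      rw [e3]
      have h4 : (P : ℝ)⁻¹ ≤ 1 := inv_le_one_of_one_le₀ hP1
      have h5 : 0 ≤ (P : ℝ)⁻¹ * ‖m‖ := by positivity
      nlinarith [Real.pi_gt_three]
    have e4 := Real.rpow_le_rpow_of_nonpos (z := -r) (by positivity) e2 (by linarith)
    refine e4.trans (le_of_eq ?_)
    rw [Real.mul_rpow (by positivity) (by positivity), Real.inv_rpow hP0.le, Real.rpow_neg hP0.le,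
      inv_inv]
  obtain ⟨hsg, hFc, hpois⟩ := dtfa_poisson g hgc A r hA.le hrn hgb c hcint hcs
  obtain ⟨K, hK, T0, hT0, htail⟩ := dtfa_tail hν hβ hD
  refine ⟨K, by linarith, Real.exp T0, by
    have := Real.add_one_le_exp T0
    linarith, fun R hR => ?_⟩
  have hR0 : 0 < R := (Real.exp_pos _).trans_le hR
  set T := Real.log R with hT
  have hTT : T0 ≤ T := (Real.le_log_iff_exp_le hR0).mpr hR
  have hT1 : 1 ≤ T := hT0.trans hTT
  have hRT : R⁻¹ = Real.exp (-T) := by rw [Real.exp_neg, hT, Real.exp_log hR0]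
  set d := ∑ s, 1 / ν s - 1 with hd
  set U : Set (Fin n → ℤ) := {m | T < dtfaLam β ν (dtfaCast m)} with hU
  let cT : (Fin n → ℤ) → ℂ := U.indicator c
  have hcTs : Summable cT := hcs.indicator U
  let M : ℝ := K * Real.exp (-T) * T ^ d
  have hM0 : 0 ≤ M := by positivity
  let w : (Fin n → ℤ) → ℝ := U.indicator (fun m => Real.exp (-dtfaLam β ν (dtfaCast m)))
  have hw0 : ∀ m, 0 ≤ w m := fun m => Set.indicator_nonneg (fun _ _ => (Real.exp_pos _).le) m
  have hwE : ∑' m, ENNReal.ofReal (w m) ≤ ENNReal.ofReal M := by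
    refine le_trans (le_of_eq ?_) (htail T hTT)
    refine tsum_congr fun m => ?_
    change ENNReal.ofReal (w m) =
      U.indicator (fun m => ENNReal.ofReal (Real.exp (-dtfaLam β ν (dtfaCast m)))) m
    by_cases hm : m ∈ U
    · simp only [w, Set.indicator_of_mem hm]
    · simp only [w, Set.indicator_of_notMem hm, ENNReal.ofReal_zero]
  have hws : Summable w := by
    have := ENNReal.summable_toReal (ne_top_of_le_ne_top ENNReal.ofReal_ne_top hwE)
    exact this.congr fun m => (ENNReal.toReal_ofReal (hw0 m))
  have hwM : ∑' m, w m ≤ M := by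
    rw [← ENNReal.ofReal_tsum_of_nonneg hw0 hws] at hwE
    exact (ENNReal.ofReal_le_ofReal_iff hM0).mp hwE
  have hcw' : ∀ m, ‖cT m‖ ≤ ((P : ℝ) ^ n)⁻¹ * w m := by
    intro m
    by_cases hm : m ∈ U
    · simp only [cT, w, Set.indicator_of_mem hm]
      refine (hcΦ m).trans ?_
      gcongr
      exact hΦm m
    · simp [cT, w, Set.indicator_of_notMem hm]
  have hcw : ∀ m, ‖cT m‖ ≤ w m := fun m =>
    (hcw' m).trans (mul_le_of_le_one_left (hw0 m) hPn)
  have hww : ∀ m, w m ^ 2 ≤ Real.exp (-T) * w m := by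
    intro m
    by_cases hm : m ∈ U
    · have hm' : T < dtfaLam β ν (dtfaCast m) := hm
      simp only [w, Set.indicator_of_mem hm]
      rw [sq]
      gcongr
    · simp [w, Set.indicator_of_notMem hm]
  let G : (Fin n → ℝ) → ℂ := fun x => ∑' m, cT m * dtfaE m ((P : ℝ)⁻¹ • x)
  let Er : (Fin n → ℝ) → ℂ := fun x => (∑' m : Fin n → ℤ, g ((P : ℝ)⁻¹ • x + dtfaCast m)) - (p x : ℂ)
  have hGc : Continuous G :=
    (dtfa_parseval cT hcTs).1.comp (continuous_const_smul ((P : ℝ)⁻¹))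
  have hErc : Continuous Er :=
    (hFc.comp (continuous_const_smul ((P : ℝ)⁻¹))).sub (Complex.continuous_ofReal.comp hpc)
  have hGM : ∀ x, ‖G x‖ ≤ M := by
    intro x
    refine le_trans ?_ hwM
    refine tsum_of_norm_bounded hws.hasSum fun m => ?_
    rw [norm_mul, dtfaE_norm, mul_one]
    exact hcw m
  set Q : Set (Fin n → ℝ) := {x : Fin n → ℝ | ∀ k, |x k| ≤ (P : ℝ) / 2} with hQ
  have hQI : Q = Set.Icc (fun _ => -((P : ℝ) / 2)) (fun _ => (P : ℝ) / 2) := by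
    ext x
    simp only [hQ, Set.mem_ofPred_eq, Set.mem_Icc, Pi.le_def, ← forall_and, abs_le]
  have hQm : MeasurableSet Q := by rw [hQI]; exact measurableSet_Icc
  have hQc : IsCompact Q := by rw [hQI]; exact isCompact_Icc
  have hQv : volume Q = ENNReal.ofReal ((P : ℝ) ^ n) := by
    rw [hQI, Real.volume_Icc_pi]
    simp only [sub_neg_eq_add, add_halves, Finset.prod_const, Finset.card_univ, Fintype.card_fin]
    rw [ENNReal.ofReal_pow hP0.le]
  have hGL2 : ∫⁻ x in Q, ‖G x‖ₑ ^ 2 ≤ ENNReal.ofReal (Real.exp (-T) * M) := by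
    have hint : IntegrableOn (fun x => ‖G x‖ ^ 2) Q :=
      (hGc.norm.pow 2).continuousOn.integrableOn_compact hQc
    have e1 : ∫⁻ x in Q, ‖G x‖ₑ ^ 2 = ENNReal.ofReal (∫ x in Q, ‖G x‖ ^ 2) := by
      rw [ofReal_integral_eq_lintegral_ofReal hint
        (Filter.Eventually.of_forall fun x => by positivity)]
      refine lintegral_congr fun x => ?_
      rw [ENNReal.ofReal_pow (norm_nonneg _), ofReal_norm]
    rw [e1, dtfa_parseval' (P : ℝ) hP0 cT hcTs]
    apply ENNReal.ofReal_le_ofReal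
    have hb2 : ∀ m, ‖cT m‖ ^ 2 ≤ ((P : ℝ) ^ n)⁻¹ * (Real.exp (-T) * w m) := by
      intro m
      calc ‖cT m‖ ^ 2 ≤ (((P : ℝ) ^ n)⁻¹ * w m) * w m := by
            rw [sq]
            exact mul_le_mul (hcw' m) (hcw m) (norm_nonneg _)
              (mul_nonneg (by positivity) (hw0 m))
        _ = ((P : ℝ) ^ n)⁻¹ * w m ^ 2 := by ring
        _ ≤ _ := mul_le_mul_of_nonneg_left (hww m) (by positivity)
    have hsb := (hws.mul_left (Real.exp (-T))).mul_left ((P : ℝ) ^ n)⁻¹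
    have h2 : ∑' m, ‖cT m‖ ^ 2 ≤ ((P : ℝ) ^ n)⁻¹ * (Real.exp (-T) * ∑' m, w m) := by
      rw [← tsum_mul_left, ← tsum_mul_left]
      exact Summable.tsum_le_tsum hb2
        (Summable.of_nonneg_of_le (fun m => by positivity) hb2 hsb) hsb
    calc (P : ℝ) ^ n * ∑' m, ‖cT m‖ ^ 2
        ≤ (P : ℝ) ^ n * (((P : ℝ) ^ n)⁻¹ * (Real.exp (-T) * ∑' m, w m)) := by gcongr
      _ = Real.exp (-T) * ∑' m, w m := by
          rw [← mul_assoc, mul_inv_cancel₀ (by positivity), one_mul]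
      _ ≤ _ := by gcongr
  have hgp : ∀ (x : Fin n → ℝ) (m : Fin n → ℤ), g ((P : ℝ)⁻¹ • x + dtfaCast m) =
      (p (fun k => x k + (P : ℝ) * (m k : ℝ)) : ℂ) := by
    intro x m
    simp only [g]
    congr 2
    ext k
    simp only [dtfaCast, Pi.smul_apply, Pi.add_apply, smul_eq_mul]
    field_simp
  have hErb : ∀ x ∈ Q, ‖Er x‖ ≤ ε := by
    intro x hx
    have hsx := hsg ((P : ℝ)⁻¹ • x)
    simp only [hgp] at hsx
    have hsr : Summable fun m : Fin n → ℤ => p (fun k => x k + (P : ℝ) * (m k : ℝ)) := by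
      exact_mod_cast hsx
    have h1 := hsr.tsum_subtype_add_tsum_subtype_compl ({0} : Set (Fin n → ℤ))
    rw [tsum_singleton (0 : Fin n → ℤ)
      (fun m : Fin n → ℤ => p (fun k => x k + (P : ℝ) * (m k : ℝ)))] at h1
    have h2 : ∑' m : (({0}ᶜ : Set (Fin n → ℤ))),
        p (fun k => x k + (P : ℝ) * ((m : Fin n → ℤ) k : ℝ)) ≤ ε := hsum x hx
    have h3 : 0 ≤ ∑' m : (({0}ᶜ : Set (Fin n → ℤ))),
        p (fun k => x k + (P : ℝ) * ((m : Fin n → ℤ) k : ℝ)) := tsum_nonneg fun m => hp0 _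
    have h4 : Er x = ((∑' m : (({0}ᶜ : Set (Fin n → ℤ))),
        p (fun k => x k + (P : ℝ) * ((m : Fin n → ℤ) k : ℝ)) : ℝ) : ℂ) := by
      simp only [Er, hgp]
      rw [← Complex.ofReal_tsum, ← h1]
      push_cast
      simp
    rw [h4, Complex.norm_real, Real.norm_eq_abs, abs_of_nonneg h3]
    exact h2
  have hfun : (fun x : Fin n → ℝ =>
          (p x : ℂ) -
            (((P : ℝ) ^ n)⁻¹ : ℝ) *
              ∑' m : {m : Fin n → ℤ // ∑ s, β s * |(m s : ℝ)| ^ ν s ≤ T},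
                Φ (fun k => -2 * Real.pi * ((m : Fin n → ℤ) k : ℝ) / (P : ℝ)) *
                  Complex.exp (2 * Real.pi * Complex.I *
                    ((∑ k, ((m : Fin n → ℤ) k : ℝ) * x k) / (P : ℝ) : ℝ))) = G - Er := by
    funext x
    have hsE : Summable fun m => c m * dtfaE m ((P : ℝ)⁻¹ • x) := by
      refine Summable.of_norm ?_
      simp only [norm_mul, dtfaE_norm, mul_one]
      exact hcs.norm
    have h1 := hsE.tsum_subtype_add_tsum_subtype_compl U
    have h2 : ∑' m : U, c m * dtfaE m ((P : ℝ)⁻¹ • x) = G x := by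
      rw [tsum_subtype U (fun m => c m * dtfaE m ((P : ℝ)⁻¹ • x))]
      refine tsum_congr fun m => ?_
      by_cases hm : m ∈ U
      · simp only [cT, Set.indicator_of_mem hm]
      · simp only [cT, Set.indicator_of_notMem hm, zero_mul]
    have hUc : ∀ m : Fin n → ℤ, ∑ s, β s * |(m s : ℝ)| ^ ν s ≤ T ↔ m ∈ Uᶜ := by
      intro m
      simp only [hU, Set.mem_compl_iff, Set.mem_ofPred_eq, not_lt]
      rfl
    have h3 : (((P : ℝ) ^ n)⁻¹ : ℝ) *
              ∑' m : {m : Fin n → ℤ // ∑ s, β s * |(m s : ℝ)| ^ ν s ≤ T},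
                Φ (fun k => -2 * Real.pi * ((m : Fin n → ℤ) k : ℝ) / (P : ℝ)) *
                  Complex.exp (2 * Real.pi * Complex.I *
                    ((∑ k, ((m : Fin n → ℤ) k : ℝ) * x k) / (P : ℝ) : ℝ)) =
        ∑' m : (Uᶜ : Set (Fin n → ℤ)), c m * dtfaE m ((P : ℝ)⁻¹ • x) := by
      rw [← tsum_mul_left, ← (Equiv.subtypeEquivRight hUc).tsum_eq]
      refine tsum_congr fun m => ?_
      simp only [Equiv.subtypeEquivRight_apply_coe, c, dtfaE]
      have e : (∑ k, ((m : Fin n → ℤ) k : ℝ) * x k) / (P : ℝ) =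
          ∑ k, ((m : Fin n → ℤ) k : ℝ) * ((P : ℝ)⁻¹ • x) k := by
        rw [Finset.sum_div]
        refine Finset.sum_congr rfl fun k _ => ?_
        simp only [Pi.smul_apply, smul_eq_mul]
        ring
      rw [e]
      ring
    rw [h3]
    simp only [Pi.sub_apply, Er]
    rw [hpois, ← h1, h2]
    ring
  rw [hfun]
  have hq1 : 1 ≤ q := le_trans (by norm_num) hq
  refine (eLpNorm_sub_le hGc.aestronglyMeasurable hErc.aestronglyMeasurable hq1).trans ?_
  have hb1 : eLpNorm G q (volume.restrict Q) ≤
      ENNReal.ofReal (K * Real.exp (-T) * T ^ (d / q'.toReal)) :=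
    dtfa_interp hq hqq' hK hT1 hGM hGL2
  have hb2 : eLpNorm Er q (volume.restrict Q) ≤
      ENNReal.ofReal (ε * (P : ℝ) ^ ((n : ℝ) / q.toReal)) := by
    refine (eLpNorm_le_of_ae_bound (C := ε) ?_).trans ?_
    · filter_upwards [ae_restrict_mem hQm] with x hx
      exact hErb x hx
    · rw [Measure.restrict_apply_univ, hQv, ENNReal.ofReal_rpow_of_nonneg (by positivity)
        (by positivity), ← ENNReal.ofReal_mul (by positivity), mul_comm, ← Real.rpow_natCast,
        ← Real.rpow_mul hP0.le, div_eq_mul_inv]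
  rw [hRT, add_comm (ε * _), ENNReal.ofReal_add (by positivity) (by positivity)]
  exact add_le_add hb1 hb2
end

section
/- Let n ≥ 2 and let ε = (ε₁, …, εₙ) ∈ ℝⁿ satisfy ε_m > 0 for 2 ≤ m ≤ n and ε₁ < −1 − Σ_{m=2}^n ε_m. Then the function y ↦ max( e^{y₁} − Σ_{j=2}^n e^{y_j} − 1, 0 ) · e^{⟨y,ε⟩} is Lebesgue integrable on ℝⁿ. -/
open MeasureTheory

lemma integrable_exp_neg_abs_aux (c : ℝ) (hc : 0 < c) :
    Integrable (fun x : ℝ => Real.exp (-c * |x|)) := by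
  rw [← integrableOn_univ, ← Set.Iic_union_Ioi (a := (0 : ℝ))]
  apply IntegrableOn.union
  · refine (integrableOn_exp_mul_Iic hc 0).congr_fun (fun x hx => ?_) measurableSet_Iic
    simp [abs_of_nonpos (Set.mem_Iic.mp hx)]
  · refine (integrableOn_exp_mul_Ioi (neg_lt_zero.mpr hc) 0).congr_fun (fun x hx => ?_)
      measurableSet_Ioi
    simp [abs_of_pos (Set.mem_Ioi.mp hx)]

theorem payoff_times_exp_integrable
    (n : ℕ) (hn : 2 ≤ n) (i₀ : Fin n) (hi₀ : (i₀ : ℕ) = 0)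
    (ε : Fin n → ℝ) (hε : ∀ m, m ≠ i₀ → 0 < ε m)
    (hε1 : ε i₀ < -1 - ∑ m ∈ Finset.Ioi i₀, ε m) :
    Integrable (fun y : Fin n → ℝ =>
      max (Real.exp (y i₀) - (∑ j ∈ Finset.Ioi i₀, Real.exp (y j)) - 1) 0 *
        Real.exp (∑ k, y k * ε k)) := by
  obtain ⟨c, hc0, hcn, hcε⟩ : ∃ c : ℝ, 0 < c ∧ c * n < -1 - ε i₀ - ∑ m ∈ Finset.Ioi i₀, ε m ∧
      ∀ m, m ≠ i₀ → c < ε m := by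
    have h1 : ∀ᶠ c : ℝ in nhdsWithin 0 (Set.Ioi 0), 0 < c := eventually_mem_nhdsWithin
    have h2 : ∀ᶠ c : ℝ in nhdsWithin 0 (Set.Ioi 0),
        c * n < -1 - ε i₀ - ∑ m ∈ Finset.Ioi i₀, ε m := by
      apply Filter.Eventually.filter_mono nhdsWithin_le_nhds
      have : ContinuousAt (fun c : ℝ => c * n) 0 := by fun_prop
      apply this.eventually_lt_const
      simp only [zero_mul]
      linarith
    have h3 : ∀ᶠ c : ℝ in nhdsWithin 0 (Set.Ioi 0), ∀ m, m ≠ i₀ → c < ε m := by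
      rw [Filter.eventually_all]
      intro m
      by_cases hm : m = i₀
      · simp [hm]
      · filter_upwards [nhdsWithin_le_nhds (eventually_lt_nhds (hε m hm))] with c hc _ using hc
    exact (h1.and (h2.and h3)).exists
  have hset : Finset.Ioi i₀ = Finset.univ.erase i₀ := by
    ext m
    simp only [Finset.mem_Ioi, Finset.mem_erase, Finset.mem_univ, and_true, Fin.lt_def, ne_eq,
      Fin.ext_iff]
    omega
  have hprod : Integrable (fun y : Fin n → ℝ => ∏ k, Real.exp (-c * |y k|)) :=
    Integrable.fintype_prod (f := fun _ x => Real.exp (-c * |x|))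
      (fun _ => integrable_exp_neg_abs_aux c hc0)
  refine hprod.mono' (Continuous.aestronglyMeasurable (by fun_prop)) (Filter.Eventually.of_forall ?_)
  intro y
  rw [Real.norm_of_nonneg (by positivity), ← Real.exp_sum]
  by_cases hpos : Real.exp (y i₀) - (∑ j ∈ Finset.Ioi i₀, Real.exp (y j)) - 1 ≤ 0
  · rw [max_eq_right hpos, zero_mul]
    positivity
  push Not at hpos
  have hS : 0 ≤ ∑ j ∈ Finset.Ioi i₀, Real.exp (y j) := Finset.sum_nonneg fun _ _ => by positivity
  have hy0 : 0 < y i₀ := by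
    rw [← Real.one_lt_exp_iff]
    linarith
  have hyj : ∀ j ∈ Finset.Ioi i₀, y j < y i₀ := by
    intro j hj
    rw [← Real.exp_lt_exp]
    have := Finset.single_le_sum (f := fun j => Real.exp (y j)) (fun _ _ => by positivity) hj
    linarith
  calc _ ≤ Real.exp (y i₀) * Real.exp (∑ k, y k * ε k) := by
        gcongr
        rw [max_eq_left hpos.le]
        linarith
    _ = Real.exp (y i₀ + ∑ k, y k * ε k) := (Real.exp_add _ _).symm
    _ ≤ _ := by
        apply Real.exp_le_exp.mpr
        rw [← Finset.add_sum_erase _ _ (Finset.mem_univ i₀),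
          ← Finset.add_sum_erase _ (fun k => -c * |y k|) (Finset.mem_univ i₀), ← hset,
          abs_of_pos hy0]
        have hcard : ((Finset.Ioi i₀).card : ℝ) = n - 1 := by
          rw [hset, Finset.card_erase_of_mem (Finset.mem_univ _), Finset.card_univ, Fintype.card_fin,
            Nat.cast_sub (by omega)]
          simp
        have key : ∑ k ∈ Finset.Ioi i₀, (y k * ε k) ≤
            ∑ k ∈ Finset.Ioi i₀, (-c * |y k| + (y i₀ * ε k + c * y i₀)) := by
          apply Finset.sum_le_sum
          intro k hk
          have h1 := hyj k hk
          have h2 := hcε k (Finset.mem_Ioi.mp hk).ne'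
          have h3 : |y k| ≤ (y i₀ - y k) + y i₀ := by
            rw [abs_le]; constructor <;> linarith
          nlinarith [mul_le_mul_of_nonneg_left h3 hc0.le,
            mul_pos (sub_pos.2 h1) (sub_pos.2 h2)]
        rw [Finset.sum_add_distrib, Finset.sum_add_distrib, ← Finset.mul_sum (f := ε),
          Finset.sum_const, nsmul_eq_mul, hcard] at key
        nlinarith [mul_lt_mul_of_pos_left hcn hy0]
end
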